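/- Let Γ be a non-elementary hyperbolic group, (X,d) ∈ D(Γ), d_ε a visual metric on ∂X, and μ a symmetric probability measure with an exponential moment whose support generates Γ, such that d_G ∈ D(Γ). Let ν be the harmonic measure and ρ a quasiconformal measure on (∂X,d_ε). If h = ℓv — where h is the asymptotic entropy, ℓ the rate of escape with respect to d, and v the logarithmic volume growth of (X,d) — then ρ and ν are equivalent measures. -/

import Mathlib

open Filter MeasureTheory Topology Metric Set
open scoped ENNReal

noncomputable section

namespace GHM

/-! ### Coarse geometry of distance functions -/

/-- The Gromov product `(x|y)_w` of `x` and `y` seen from `w`, for a distance function `d`. -/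
def gromov {X : Type*} (d : X → X → ℝ) (w x y : X) : ℝ :=
  (d x w + d y w - d x y) / 2

/-- `d` is `δ`-hyperbolic (four point condition on Gromov products). -/
def IsHyperbolicWith {X : Type*} (d : X → X → ℝ) (δ : ℝ) : Prop :=
  ∀ w x y z : X, min (gromov d w x y) (gromov d w x z) - δ ≤ gromov d w y z

/-- `d` is Gromov hyperbolic. -/
def IsHyperbolic {X : Type*} (d : X → X → ℝ) : Prop :=
  ∃ δ : ℝ, 0 ≤ δ ∧ IsHyperbolicWith d δ

/-- `d` is a genuine metric. -/
structure IsMetricFun {X : Type*} (d : X → X → ℝ) : Prop where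
  refl : ∀ x, d x x = 0
  pos : ∀ x y, x ≠ y → 0 < d x y
  symm : ∀ x y, d x y = d y x
  triangle : ∀ x y z, d x z ≤ d x y + d y z

/-- `f` is a `(Λ,c)`-quasi-isometric embedding from `(X,dX)` to `(Y,dY)`. -/
def QIEmbed {X Y : Type*} (dX : X → X → ℝ) (dY : Y → Y → ℝ)
    (f : X → Y) (Λ c : ℝ) : Prop :=
  ∀ x x' : X, dX x x' / Λ - c ≤ dY (f x) (f x') ∧ dY (f x) (f x') ≤ Λ * dX x x' + c

/-- `(X,dX)` and `(Y,dY)` are quasi-isometric. -/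
def QuasiIsometric {X Y : Type*} (dX : X → X → ℝ) (dY : Y → Y → ℝ) : Prop :=
  ∃ (f : X → Y) (Λ c C : ℝ), 1 ≤ Λ ∧ 0 ≤ c ∧ 0 ≤ C ∧
    QIEmbed dX dY f Λ c ∧ ∀ y : Y, ∃ x : X, dY (f x) y ≤ C

variable {G : Type*} [Group G]

/-- Word length of `g` with respect to the (symmetrized) finite set `S`. -/
def wordLength (S : Finset G) (g : G) : ℕ :=
  sInf {n : ℕ | ∃ l : List G, l.length = n ∧ (∀ a ∈ l, a ∈ S ∨ a⁻¹ ∈ S) ∧ l.prod = g}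

/-- The word metric associated with a finite generating set `S`. -/
def wordDist (S : Finset G) (x y : G) : ℝ := wordLength S (x⁻¹ * y)

/-- `S` generates the group. -/
def Generates (S : Finset G) : Prop := Subgroup.closure (S : Set G) = ⊤

/-- The standard metric on `ℤ`. -/
def intDist (m n : ℤ) : ℝ := |(m : ℝ) - (n : ℝ)|

/-- `G` is a non-elementary hyperbolic group: finitely generated, its word metrics are
Gromov hyperbolic, it is infinite, and it is not quasi-isometric to `ℤ`. -/
def NonElemHyperbolic (G : Type*) [Group G] : Prop :=
  Infinite G ∧ (∃ S : Finset G, Generates S) ∧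
    ∀ S : Finset G, Generates S →
      IsHyperbolic (wordDist S) ∧ ¬ QuasiIsometric (wordDist S) intDist

/-- `d` is invariant under left translations. -/
def LeftInvariant (d : G → G → ℝ) : Prop := ∀ g x y : G, d (g * x) (g * y) = d x y

/-- `d` belongs to the class `𝒟(Γ)`: it is a left-invariant Gromov hyperbolic metric on the
group, quasi-isometric to a word metric of a finite generating set. -/
def MemD (d : G → G → ℝ) : Prop :=
  IsMetricFun d ∧ LeftInvariant d ∧ IsHyperbolic d ∧
    ∃ S : Finset G, Generates S ∧ QuasiIsometric d (wordDist S)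

/-! ### Random walks -/

/-- `μ` is (the density of) a probability measure on the (countable) group. -/
def IsProbDensity (μ : G → ℝ) : Prop := (∀ g, 0 ≤ μ g) ∧ HasSum μ 1

/-- `μ` is symmetric. -/
def IsSymmetric (μ : G → ℝ) : Prop := ∀ g : G, μ g⁻¹ = μ g

/-- The support of `μ` generates `G`. -/
def GeneratesSupp (μ : G → ℝ) : Prop := Subgroup.closure {g : G | μ g ≠ 0} = ⊤

open scoped Classical in
/-- Convolution powers `μ^n` of `μ`. -/
def convPow (μ : G → ℝ) : ℕ → G → ℝ
  | 0 => fun g => if g = 1 then 1 else 0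
  | n + 1 => fun g => ∑' y : G, convPow μ n y * μ (y⁻¹ * g)

/-- The Green function `G(x,y) = ∑_n μ^n(x⁻¹y)`. -/
def greenFn (μ : G → ℝ) (x y : G) : ℝ := ∑' n : ℕ, convPow μ n (x⁻¹ * y)

/-- The random walk is transient, i.e. `G(e,e) = ∑_n μ^n(e) < ∞`. -/
def Transient (μ : G → ℝ) : Prop := Summable fun n : ℕ => convPow μ n (1 : G)

/-- Successive positions of a walk started at `x` with increments `l`. -/
def walkPositions (x : G) (l : List G) : List G := l.scanl (fun p a => p * a) x

/-- The increments `l` describe a trajectory from `x` which hits `y` for the first time at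
its final position. -/
def IsFirstHitPath (x y : G) (l : List G) : Prop :=
  (walkPositions x l).getLast? = some y ∧ y ∉ (walkPositions x l).dropLast

/-- `F(x,y)`: the probability that the `μ`-random walk started at `x` ever hits `y`. -/
def hitProb (μ : G → ℝ) (x y : G) : ℝ :=
  ∑' l : {l : List G // IsFirstHitPath x y l}, ((l : List G).map μ).prod

/-- The Green metric `d_G(x,y) = - log F(x,y)`. -/
def greenDist (μ : G → ℝ) (x y : G) : ℝ := - Real.log (hitProb μ x y)

/-- `μ` has a finite first moment with respect to `d`. -/
def FiniteFirstMoment (d : G → G → ℝ) (μ : G → ℝ) : Prop :=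
  Summable fun g : G => d 1 g * μ g

/-- `μ` has an exponential moment with respect to `d`. -/
def HasExpMoment (d : G → G → ℝ) (μ : G → ℝ) : Prop :=
  ∃ lam : ℝ, 0 < lam ∧ Summable fun g : G => Real.exp (lam * d 1 g) * μ g

/-- The entropy `H(μ^n) = -∑_γ μ^n(γ) log μ^n(γ)` of the `n`-th convolution power. -/
def entropyAt (μ : G → ℝ) (n : ℕ) : ℝ :=
  - ∑' g : G, convPow μ n g * Real.log (convPow μ n g)

/-- `h` is the asymptotic entropy of the walk. -/
def HasEntropy (μ : G → ℝ) (h : ℝ) : Prop :=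
  Tendsto (fun n : ℕ => entropyAt μ n / n) atTop (𝓝 h)

/-- `v` is the logarithmic volume growth of `(G,d)` (seen from the identity). -/
def HasGrowth (d : G → G → ℝ) (v : ℝ) : Prop :=
  Filter.limsup (fun R : ℝ => Real.log (Nat.card {g : G // d 1 g ≤ R}) / R) atTop = v

/-- The position `Z_n = ω_0 ω_1 ⋯ ω_{n-1}` of the random walk at time `n`, given the
sequence of increments `ω`. -/
def walkPos (n : ℕ) (ω : ℕ → G) : G := ((List.range n).map ω).prod

/-- `P` is the law on the space of increment sequences of an i.i.d. sequence of law `μ`: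
cylinders have product measure.  (This characterizes the path measure of the random walk.) -/
def IsWalkMeasure [MeasurableSpace G] (μ : G → ℝ) (P : Measure (ℕ → G)) : Prop :=
  IsProbabilityMeasure P ∧
    ∀ (n : ℕ) (g : Fin n → G),
      P {ω : ℕ → G | ∀ i : Fin n, ω (i : ℕ) = g i} = ∏ i : Fin n, ENNReal.ofReal (μ (g i))

/-! ### The Gromov boundary, visual metrics, harmonic and quasiconformal measures -/

/-- A sequence tends to infinity if Gromov products (at the base point `1`) go to `∞`. -/
def TendstoInfinity (d : G → G → ℝ) (u : ℕ → G) : Prop :=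
  Tendsto (fun p : ℕ × ℕ => gromov d 1 (u p.1) (u p.2)) atTop atTop

/-- A realization of the Gromov boundary of `(G,d)` as an abstract type `B`:
`conv u b` means that the sequence `u` converges at infinity to the boundary point `b`.
The group acts on its boundary by `smul`. -/
structure BoundaryData (G : Type*) [Group G] (d : G → G → ℝ) (B : Type*) where
  conv : (ℕ → G) → B → Prop
  smul : G → B → B
  conv_unique : ∀ u b b', conv u b → conv u b' → b = b'
  exists_conv : ∀ u, TendstoInfinity d u → ∃ b, conv u b
  conv_tendstoInfinity : ∀ u b, conv u b → TendstoInfinity d u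
  conv_iff : ∀ u v b, conv u b →
    (conv v b ↔ Tendsto (fun n => gromov d 1 (u n) (v n)) atTop atTop)
  conv_surj : ∀ b, ∃ u, conv u b
  smul_conv : ∀ (γ : G) (u) (b), conv u b → conv (fun n => γ * u n) (smul γ b)

/-- Asymptotic Gromov product of two sequences. -/
def seqGromov (d : G → G → ℝ) (u v : ℕ → G) : ℝ :=
  Filter.liminf (fun n => gromov d 1 (u n) (v n)) atTop

/-- The metric of `B` is a visual metric of parameter `ε` (with comparison constant `C`)
for the hyperbolic distance `d` on the group:  `dist(a,b) ≍ exp(-ε (a|b))`. -/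
def IsVisualMetric {B : Type*} [MetricSpace B] (d : G → G → ℝ)
    (bd : BoundaryData G d B) (ε C : ℝ) : Prop :=
  0 < ε ∧ 0 < C ∧
    ∀ u v b b', bd.conv u b → bd.conv v b' → b ≠ b' →
      dist b b' ≤ C * Real.exp (-ε * seqGromov d u v) ∧
      Real.exp (-ε * seqGromov d u v) ≤ C * dist b b'

/-- `ν` is the harmonic measure of the random walk of law `μ` on the boundary `B`:
it is the law of the almost sure limit `Z_∞` of the walk on the boundary. -/
def IsHarmonicMeasure {B : Type*} [MeasurableSpace G] [MeasurableSpace B]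
    (d : G → G → ℝ) (bd : BoundaryData G d B) (μ : G → ℝ)
    (P : Measure (ℕ → G)) (ν : Measure B) : Prop :=
  IsWalkMeasure μ P ∧
    ∃ Zinf : (ℕ → G) → B, Measurable Zinf ∧
      (∀ᵐ ω ∂P, bd.conv (fun n => walkPos n ω) (Zinf ω)) ∧ ν = P.map Zinf

/-- Busemann function `β_b(x,y)` of the boundary point `b`. -/
def busemann {B : Type*} (d : G → G → ℝ) (bd : BoundaryData G d B)
    (x y : G) (b : B) : ℝ :=
  sSup {t : ℝ | ∃ u, bd.conv u b ∧
    t = Filter.limsup (fun n => d x (u n) - d y (u n)) atTop}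

/-- The image measure `γ^*ρ`, `γ^*ρ(A) = ρ(γA)`. -/
def actPush {B : Type*} [MeasurableSpace B] {d : G → G → ℝ}
    (bd : BoundaryData G d B) (γ : G) (ρ : Measure B) : Measure B :=
  ρ.map (bd.smul γ⁻¹)

/-- `ρ` is a quasiconformal measure on the boundary for `(G,d)` of logarithmic growth
parameter `v`: `γ^*ρ` and `ρ` are mutually absolutely continuous, with density
`dγ^*ρ/dρ ≍ exp (v β_b(1,γ⁻¹))` (uniformly in `γ`). -/
def IsQuasiconformalMeasure {B : Type*} [MeasurableSpace B] {d : G → G → ℝ}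
    (bd : BoundaryData G d B) (ρ : Measure B) (v : ℝ) : Prop :=
  ∃ C : ℝ, 0 < C ∧ ∀ γ : G,
    actPush bd γ ρ ≪ ρ ∧ ρ ≪ actPush bd γ ρ ∧
      ∀ᵐ b ∂ρ,
        (actPush bd γ ρ).rnDeriv ρ b
            ≤ ENNReal.ofReal (C * Real.exp (v * busemann d bd 1 γ⁻¹ b)) ∧
        ENNReal.ofReal (C⁻¹ * Real.exp (v * busemann d bd 1 γ⁻¹ b))
            ≤ (actPush bd γ ρ).rnDeriv ρ b

/-- `ν` is Ahlfors regular of dimension `α`: `ν(B(b,r)) ≍ r^α`. -/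
def AhlforsRegularOfDim {B : Type*} [MetricSpace B] [MeasurableSpace B]
    (ν : Measure B) (α : ℝ) : Prop :=
  ∃ C : ℝ, 0 < C ∧ ∀ (b : B) (r : ℝ), 0 < r → r ≤ Metric.diam (Set.univ : Set B) →
    ENNReal.ofReal (C⁻¹ * r ^ α) ≤ ν (Metric.ball b r) ∧
      ν (Metric.ball b r) ≤ ENNReal.ofReal (C * r ^ α)

/-- The Hausdorff dimension of a measure: the infimum of the Hausdorff dimensions of sets of
full measure. -/
def measureDim {B : Type*} [EMetricSpace B] [MeasurableSpace B] (ν : Measure B) : ℝ≥0∞ :=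
  ⨅ (A : Set B) (_ : ν Aᶜ = 0), dimH A

/-! ### Word geodesics -/

/-- `p 0, …, p n` is a geodesic segment for the word metric of `S`. -/
def IsWordGeodesic (S : Finset G) (n : ℕ) (p : ℕ → G) : Prop :=
  ∀ i j : ℕ, i ≤ n → j ≤ n → wordDist S (p i) (p j) = |(i : ℝ) - (j : ℝ)|

/-- `v` lies within distance `r` of some word geodesic segment from `x` to `y`. -/
def NearWordGeodesic (S : Finset G) (x y v : G) (r : ℝ) : Prop :=
  ∃ (n : ℕ) (p : ℕ → G), IsWordGeodesic S n p ∧ p 0 = x ∧ p n = y ∧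
    ∃ i ≤ n, wordDist S v (p i) ≤ r

/-! ### Martin boundary -/

/-- The Martin kernel `K(x,y) = G(x,y)/G(e,y)`. -/
def martinKernel (μ : G → ℝ) (x y : G) : ℝ := greenFn μ x y / greenFn μ 1 y

/-- The embedding `y ↦ K(·,y)` of the group in `C(G)` (pointwise topology). -/
def martinMap (μ : G → ℝ) (y : G) : G → ℝ := fun x => martinKernel μ x y

/-- The Martin boundary: the boundary of the image of the group under the Martin embedding
in the space of functions with the topology of pointwise convergence. -/
def martinBoundary (μ : G → ℝ) : Set (G → ℝ) :=
  closure (Set.range (martinMap μ)) \ Set.range (martinMap μ)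

/-- `h` is a `μ`-harmonic function. -/
def IsHarmonicFn (μ : G → ℝ) (h : G → ℝ) : Prop :=
  ∀ x : G, h x = ∑' y : G, h y * μ (x⁻¹ * y)

/-- `h` is a minimal positive harmonic function. -/
def IsMinimalHarmonic (μ : G → ℝ) (h : G → ℝ) : Prop :=
  IsHarmonicFn μ h ∧ (∀ x, 0 < h x) ∧
    ∀ u : G → ℝ, IsHarmonicFn μ u → (∀ x, 0 ≤ u x) → (∀ x, u x ≤ h x) →
      ∃ c : ℝ, u = fun x => c * h x

/-! ### Metric space versions (geodesic and quasiruled spaces) -/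

/-- A geodesic metric space. -/
def IsGeodesicSpace (X : Type*) [MetricSpace X] : Prop :=
  ∀ x y : X, ∃ f : ℝ → X, f 0 = x ∧ f (dist x y) = y ∧
    ∀ s ∈ Set.Icc (0:ℝ) (dist x y), ∀ t ∈ Set.Icc (0:ℝ) (dist x y),
      dist (f s) (f t) = |s - t|

/-- `f : [a,b] → Y` is a `(Λ,c)`-quasigeodesic segment. -/
def IsQuasigeodesicOn {Y : Type*} [MetricSpace Y] (f : ℝ → Y) (a b Λ c : ℝ) : Prop :=
  ∀ s ∈ Set.Icc a b, ∀ t ∈ Set.Icc a b,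
    |s - t| / Λ - c ≤ dist (f s) (f t) ∧ dist (f s) (f t) ≤ Λ * |s - t| + c

/-- `f : [a,b] → Y` is a `τ`-quasiruler: Gromov products of triples along it are `≤ τ`. -/
def IsQuasirulerOn {Y : Type*} [MetricSpace Y] (f : ℝ → Y) (a b τ : ℝ) : Prop :=
  ∀ s t u : ℝ, s ∈ Set.Icc a b → t ∈ Set.Icc a b → u ∈ Set.Icc a b → s ≤ t → t ≤ u →
    dist (f s) (f t) + dist (f t) (f u) ≤ dist (f s) (f u) + 2 * τ

/-- A quasiruled metric space: for some constants `(Λ,c,τ)` every pair of points is joined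
by a `(Λ,c)`-quasigeodesic, and every `(Λ,c)`-quasigeodesic is a `τ`-quasiruler. -/
def Quasiruled (Y : Type*) [MetricSpace Y] : Prop :=
  ∃ Λ c τ : ℝ, 1 ≤ Λ ∧ 0 ≤ c ∧ 0 ≤ τ ∧
    (∀ x y : Y, ∃ (a b : ℝ) (f : ℝ → Y), a ≤ b ∧ f a = x ∧ f b = y ∧
      IsQuasigeodesicOn f a b Λ c) ∧
    ∀ (f : ℝ → Y) (a b : ℝ), IsQuasigeodesicOn f a b Λ c → IsQuasirulerOn f a b τ

/-- A metric space is hyperbolic. -/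
def HypSpace (Y : Type*) [MetricSpace Y] : Prop :=
  IsHyperbolic (fun x y : Y => dist x y)

/-- `f` is a quasi-isometry between metric spaces. -/
def MetricQI {X Y : Type*} [MetricSpace X] [MetricSpace Y] (f : X → Y) : Prop :=
  ∃ Λ c C : ℝ, 1 ≤ Λ ∧ 0 ≤ c ∧ 0 ≤ C ∧
    QIEmbed (fun a b : X => dist a b) (fun a b : Y => dist a b) f Λ c ∧
    ∀ y : Y, ∃ x : X, dist (f x) y ≤ C


section
open Filter MeasureTheory Topology Metric Set
open scoped ENNReal

/-! ### Hyperbolic geometry -/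

theorem fourPt {X : Type*} {d : X → X → ℝ} {δ : ℝ} (hm : IsMetricFun d)
    (h : IsHyperbolicWith d δ) (u v w z : X) :
    d u w + d v z ≤ max (d u v + d w z) (d v w + d u z) + 2 * δ := by
  have h1 := h z v u w
  unfold gromov at h1
  have e1 := hm.symm v u
  rcases le_total ((d v z + d u z - d v u) / 2) ((d v z + d w z - d v w) / 2) with h2 | h2
  · rw [min_eq_left h2] at h1
    have := le_max_left (d u v + d w z) (d v w + d u z)
    linarith
  · rw [min_eq_right h2] at h1
    have := le_max_right (d u v + d w z) (d v w + d u z)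
    linarith

theorem IsMetricFun.nonneg {X : Type*} {d : X → X → ℝ} (hm : IsMetricFun d) (x y : X) :
    0 ≤ d x y := by
  by_cases h : x = y
  · rw [h, hm.refl]
  · exact (hm.pos x y h).le

theorem gromov_nonneg {X : Type*} {d : X → X → ℝ} (hm : IsMetricFun d) (w x y : X) :
    0 ≤ gromov d w x y := by
  have := hm.triangle x w y
  have e := hm.symm w y
  unfold gromov; linarith

theorem gromov_comm {X : Type*} {d : X → X → ℝ} (hm : IsMetricFun d) (w x y : X) :
    gromov d w x y = gromov d w y x := by
  have e := hm.symm x y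
  unfold gromov; linarith

theorem gromov_le_right {X : Type*} {d : X → X → ℝ} (hm : IsMetricFun d) (w x y : X) :
    gromov d w x y ≤ d w y := by
  have := hm.triangle x y w
  have e := hm.symm w y
  unfold gromov; linarith

theorem gromov_le_left {X : Type*} {d : X → X → ℝ} (hm : IsMetricFun d) (w x y : X) :
    gromov d w x y ≤ d w x := by
  rw [gromov_comm hm]; exact gromov_le_right hm w y x

theorem gromov_add {X : Type*} {d : X → X → ℝ} (hm : IsMetricFun d) (w x y : X) :
    gromov d w x y + gromov d x w y = d w x := by
  have e := hm.symm w x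
  have e1 := hm.symm w y
  have e2 := hm.symm x y
  unfold gromov; linarith

theorem log_chain {X : Type*} (q : X → X → ℝ) (δ m : ℝ) (hδ : 0 ≤ δ) (p : ℕ → X)
    (hq : ∀ u v w, min (q u v) (q v w) - 2 * δ ≤ q u w) :
    ∀ (k i j : ℕ), i ≤ j → j ≤ i + 2 ^ k → (∀ a, i ≤ a → a ≤ j → m ≤ q (p a) (p a)) →
      (∀ a, i ≤ a → a < j → m ≤ q (p a) (p (a + 1))) → m - 2 * δ * k ≤ q (p i) (p j) := by
  intro k
  induction k with
  | zero =>
    intro i j hij hj h0 h1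
    have : j = i ∨ j = i + 1 := by simp at hj; omega
    rcases this with rfl | rfl
    · simpa using h0 j le_rfl le_rfl
    · simpa using h1 i le_rfl (by omega)
  | succ k ih =>
    intro i j hij hj h0 h1
    have hp : 2 ^ (k + 1) = 2 ^ k + 2 ^ k := by ring
    push_cast
    by_cases hc : j ≤ i + 2 ^ k
    · have := ih i j hij hc h0 h1
      linarith
    · push Not at hc
      have a1 := ih i (i + 2 ^ k) (by omega) le_rfl (fun a h h' => h0 a h (by omega))
        (fun a h h' => h1 a h (by omega))
      have a2 := ih (i + 2 ^ k) j (by omega) (by omega) (fun a h h' => h0 a (by omega) h')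
        (fun a h h' => h1 a (by omega) h')
      have a3 := hq (p i) (p (i + 2 ^ k)) (p j)
      have a4 := le_min a1 a2
      linarith

theorem exists_D0 (δ L Q : ℝ) (hδ : 0 ≤ δ) (hL : 0 ≤ L) (hQ : 0 ≤ Q) :
    ∃ D0 : ℝ, 0 ≤ D0 ∧ ∀ D, D0 < D → ∃ k : ℕ, Q * (6 * D + 2 * δ + 1) ≤ 2 ^ k ∧
      L / 2 + δ + δ * k < D := by
  have hk : ∀ᶠ k : ℕ in atTop, Q * (6 * ((2 * δ + 2) * (k + 1)) + 2 * δ + 1) ≤ 2 ^ k := by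
    have h1 : Tendsto (fun k : ℕ => ((k : ℝ) ^ 1) / (2 : ℝ) ^ k) atTop (𝓝 0) :=
      tendsto_pow_const_div_const_pow_of_one_lt 1 (by norm_num)
    have h2 : Tendsto (fun k : ℕ => ((k : ℝ) ^ 0) / (2 : ℝ) ^ k) atTop (𝓝 0) :=
      tendsto_pow_const_div_const_pow_of_one_lt 0 (by norm_num)
    have h3 := (h1.const_mul (Q * (6 * (2 * δ + 2)))).add
      (h2.const_mul (Q * (6 * (2 * δ + 2) + 2 * δ + 1)))
    simp only [mul_zero, add_zero] at h3
    have h4 := h3.eventually (gt_mem_nhds (show (0:ℝ) < 1 by norm_num))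
    filter_upwards [h4] with k hk
    have hp : (0:ℝ) < 2 ^ k := by positivity
    rw [← mul_div_assoc, ← mul_div_assoc, ← add_div, div_lt_one hp] at hk
    simp only [pow_one, pow_zero] at hk
    nlinarith
  obtain ⟨k0, hk0⟩ := eventually_atTop.1 hk
  refine ⟨L + 2 * δ + (2 * δ + 2) * (k0 + 1), by positivity, fun D hD => ?_⟩
  have hpos : 0 < 2 * δ + 2 := by linarith
  have hk0' : (0:ℝ) ≤ (2 * δ + 2) * (k0 + 1) := by positivity
  have hD0 : 0 ≤ D := by linarith
  refine ⟨⌊D / (2 * δ + 2)⌋₊, ?_, ?_⟩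
  · have h1 := Nat.lt_floor_add_one (D / (2 * δ + 2))
    rw [div_lt_iff₀ hpos] at h1
    have h2 : k0 ≤ ⌊D / (2 * δ + 2)⌋₊ := by
      apply Nat.le_floor
      rw [le_div_iff₀ hpos]
      nlinarith
    refine le_trans ?_ (hk0 _ h2)
    apply mul_le_mul_of_nonneg_left _ hQ
    nlinarith
  · have h1 := Nat.floor_le (div_nonneg hD0 hpos.le)
    rw [le_div_iff₀ hpos] at h1
    have h3 : (0:ℝ) ≤ (⌊D / (2 * δ + 2)⌋₊ : ℝ) := by positivity
    nlinarith

/-- The (virtual) distance to the point at distance `t` from `x` on `[x,y]`. -/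
def vd {X : Type*} (d : X → X → ℝ) (x y : X) (t : ℝ) (u : X) : ℝ :=
  max (d x u - t) (d y u - (d x y - t))

theorem vd_four {X : Type*} {d : X → X → ℝ} {δ : ℝ} (hm : IsMetricFun d)
    (h : IsHyperbolicWith d δ) (x y : X) (t : ℝ) (u v w : X) :
    min (vd d x y t u + vd d x y t v - d u v) (vd d x y t v + vd d x y t w - d v w) - 2 * δ
      ≤ vd d x y t u + vd d x y t w - d u w := by
  have key : ∀ a : X, ∀ s : ℝ, (∀ b, d a b - s ≤ vd d x y t b) → vd d x y t v = d a v - s →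
      min (vd d x y t u + vd d x y t v - d u v) (vd d x y t v + vd d x y t w - d v w) - 2 * δ
      ≤ vd d x y t u + vd d x y t w - d u w := by
    intro a s h1 h2
    have h3 := fourPt hm h u v w a
    have h4 := h1 u
    have h5 := h1 w
    have e1 := hm.symm v a
    have e2 := hm.symm w a
    have e3 := hm.symm u a
    rcases max_choice (d u v + d w a) (d v w + d u a) with h6 | h6 <;> rw [h6] at h3
    · have := min_le_left (vd d x y t u + vd d x y t v - d u v)
        (vd d x y t v + vd d x y t w - d v w)
      linarith
    · have := min_le_right (vd d x y t u + vd d x y t v - d u v)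
        (vd d x y t v + vd d x y t w - d v w)
      linarith
  rcases max_choice (d x v - t) (d y v - (d x y - t)) with h6 | h6
  · exact key x t (fun b => le_max_left _ _) h6
  · exact key y (d x y - t) (fun b => le_max_right _ _) h6

theorem morse_step {X : Type*} {d : X → X → ℝ} {δ : ℝ} (hm : IsMetricFun d)
    (h : IsHyperbolicWith d δ) (hδ : 0 ≤ δ) (L Q : ℝ) (hL : 0 ≤ L)
    (hQ : 0 ≤ Q) (n : ℕ) (p : ℕ → X)
    (hstep : ∀ i < n, d (p i) (p (i + 1)) ≤ L)
    (hqi : ∀ i j, i ≤ j → j ≤ n → ((j : ℝ) - i) ≤ Q * (d (p i) (p j) + 1))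
    (D : ℝ) (hD : δ < D) (t : ℝ) (ht0 : 0 ≤ t) (ht1 : t ≤ d (p 0) (p n))
    (hmax : ∀ s, 0 ≤ s → s ≤ d (p 0) (p n) → ∃ i ≤ n, vd d (p 0) (p n) s (p i) ≤ D)
    (hmin : ∀ i ≤ n, D ≤ vd d (p 0) (p n) t (p i))
    (k : ℕ) (hk1 : Q * (6 * D + 2 * δ + 1) ≤ 2 ^ k) (hk2 : L / 2 + δ + δ * k < D) : False := by
  set x := p 0 with hx
  set y := p n with hy
  set ℓ := d x y with hℓ
  -- left index
  have hleft : ∃ i ≤ n, d y (p i) ≤ ℓ - t + 3 * D ∧ (d x (p i) ≤ t - D ∨ p i = x) := by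
    by_cases hc : 2 * D ≤ t
    · obtain ⟨i, hi, h1⟩ := hmax (t - 2 * D) (by linarith) (by linarith)
      have a1 := le_max_left (d x (p i) - (t - 2 * D)) (d y (p i) - (d x y - (t - 2 * D)))
      have a2 := le_max_right (d x (p i) - (t - 2 * D)) (d y (p i) - (d x y - (t - 2 * D)))
      unfold vd at h1
      exact ⟨i, hi, by linarith, Or.inl (by linarith)⟩
    · push Not at hc
      refine ⟨0, by omega, ?_, Or.inr rfl⟩
      have := hm.symm y x
      rw [← hx, this]; linarith
  have hright : ∃ j ≤ n, d x (p j) ≤ t + 3 * D ∧ (d y (p j) ≤ ℓ - t - D ∨ p j = y) := by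
    by_cases hc : t + 2 * D ≤ ℓ
    · obtain ⟨i, hi, h1⟩ := hmax (t + 2 * D) (by linarith) (by linarith)
      have a1 := le_max_left (d x (p i) - (t + 2 * D)) (d y (p i) - (d x y - (t + 2 * D)))
      have a2 := le_max_right (d x (p i) - (t + 2 * D)) (d y (p i) - (d x y - (t + 2 * D)))
      unfold vd at h1
      exact ⟨i, hi, by linarith, Or.inl (by linarith)⟩
    · push Not at hc
      refine ⟨n, le_rfl, ?_, Or.inr rfl⟩
      rw [← hy]; linarith
  obtain ⟨i, hi, hi1, hi2⟩ := hleft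
  obtain ⟨j, hj, hj1, hj2⟩ := hright
  have hxx := hm.refl x
  have hyy := hm.refl y
  have hyx := hm.symm y x
  have hfi : vd d x y t (p i) = d y (p i) - (ℓ - t) := by
    unfold vd
    apply max_eq_right
    have := hm.triangle x (p i) y
    have e := hm.symm (p i) y
    rcases hi2 with hi2 | hi2
    · linarith
    · rw [hi2]; linarith
  have hfj : vd d x y t (p j) = d x (p j) - t := by
    unfold vd
    apply max_eq_left
    have := hm.triangle x (p j) y
    have e := hm.symm (p j) y
    rcases hj2 with hj2 | hj2
    · linarith
    · rw [hj2]; linarith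
  have hDi := hmin i hi
  have hDj := hmin j hj
  have hgp : d y (p i) + d x (p j) ≤ ℓ + d (p i) (p j) + 2 * δ := by
    rcases hi2 with hi2 | hi2
    · rcases hj2 with hj2 | hj2
      · have h3 := fourPt hm h y x (p i) (p j)
        rcases max_choice (d y x + d (p i) (p j)) (d x (p i) + d y (p j)) with h6 | h6 <;>
          rw [h6] at h3
        · linarith
        · linarith
      · rw [hj2]
        have e := hm.symm (p i) y
        linarith
    · rw [hi2]; linarith
  have hdist : d (p i) (p j) ≤ 6 * D + 2 * δ := by
    have h3 := fourPt hm h (p i) x (p j) y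
    have e1 := hm.symm (p i) x
    have e2 := hm.symm (p j) y
    have e3 := hm.symm (p i) y
    have b1 : d x (p i) ≤ t := by
      rcases hi2 with hi2 | hi2
      · linarith
      · rw [hi2]; linarith
    have b2 : d y (p j) ≤ ℓ - t := by
      rcases hj2 with hj2 | hj2
      · linarith
      · rw [hj2]; linarith
    rcases max_choice (d (p i) x + d (p j) y) (d x (p j) + d (p i) y) with h6 | h6 <;>
      rw [h6] at h3 <;> linarith
  -- chain
  have chain := log_chain (fun u w => vd d x y t u + vd d x y t w - d u w) δ (2 * D - L) hδ p
    (fun u v w => vd_four hm h x y t u v w) k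
  have hc0 : ∀ a ≤ n, 2 * D - L ≤ vd d x y t (p a) + vd d x y t (p a) - d (p a) (p a) := by
    intro a ha
    have := hmin a ha
    rw [hm.refl]; linarith
  have hc1 : ∀ a < n, 2 * D - L ≤ vd d x y t (p a) + vd d x y t (p (a+1)) - d (p a) (p (a+1)) := by
    intro a ha
    have := hmin a ha.le
    have := hmin (a+1) ha
    have := hstep a ha
    linarith
  rcases le_total i j with hij | hij
  · have h1 := hqi i j hij hj
    have h2 : j ≤ i + 2 ^ k := by
      have : (j:ℝ) ≤ (i + 2 ^ k : ℕ) := by push_cast; nlinarith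
      exact_mod_cast this
    have h3 := chain i j hij h2 (fun a _ h' => hc0 a (h'.trans hj))
      (fun a _ h' => hc1 a (h'.trans_le hj))
    rw [hfi, hfj] at h3
    nlinarith
  · have h1 := hqi j i hij hi
    have e := hm.symm (p i) (p j)
    have h2 : i ≤ j + 2 ^ k := by
      have : (i:ℝ) ≤ (j + 2 ^ k : ℕ) := by push_cast; nlinarith
      exact_mod_cast this
    have h3 := chain j i hij h2 (fun a _ h' => hc0 a (h'.trans hi))
      (fun a _ h' => hc1 a (h'.trans_le hi))
    rw [hfi, hfj] at h3
    nlinarith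

theorem vd_inf_cont {X : Type*} (d : X → X → ℝ) (x y : X) (p : ℕ → X) (F : Finset ℕ)
    (hF : F.Nonempty) : Continuous fun t => F.inf' hF (fun i => vd d x y t (p i)) := by
  apply Continuous.finset_inf'_apply
  intro i _
  unfold vd
  fun_prop

theorem morse {X : Type*} {d : X → X → ℝ} {δ : ℝ} (hm : IsMetricFun d)
    (h : IsHyperbolicWith d δ) (hδ : 0 ≤ δ) (L Q : ℝ) (hL : 0 ≤ L) (hQ : 0 ≤ Q) :
    ∃ τ : ℝ, 0 ≤ τ ∧ ∀ (n : ℕ) (p : ℕ → X), (∀ i < n, d (p i) (p (i + 1)) ≤ L) →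
      (∀ i j, i ≤ j → j ≤ n → ((j : ℝ) - i) ≤ Q * (d (p i) (p j) + 1)) →
      ∀ k ≤ n, gromov d (p k) (p 0) (p n) ≤ τ := by
  obtain ⟨D1, hD1, hD1'⟩ := exists_D0 δ L Q hδ hL hQ
  set D0 := D1 + δ with hD0
  set τ := L * (Q * (2 * D0 + 2 * δ + 1)) + D0 with hτ
  refine ⟨τ, by positivity, ?_⟩
  intro n p hstep hqi k hk
  set x := p 0 with hx
  set y := p n with hy
  have hℓ := hm.nonneg x y
  -- every virtual point is close to the path
  have part1 : ∀ s, 0 ≤ s → s ≤ d x y → ∃ i ≤ n, vd d x y s (p i) ≤ D0 := by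
    have hne : (Finset.range (n + 1)).Nonempty := ⟨0, by simp⟩
    obtain ⟨t, ht, htm⟩ := (isCompact_Icc (a := (0:ℝ)) (b := d x y)).exists_isMaxOn
      ⟨0, by simp [hℓ]⟩ (vd_inf_cont d x y p _ hne).continuousOn
    set D := (Finset.range (n + 1)).inf' hne (fun i => vd d x y t (p i)) with hD
    have hmax : ∀ s, 0 ≤ s → s ≤ d x y → ∃ i ≤ n, vd d x y s (p i) ≤ D := by
      intro s hs0 hs1
      obtain ⟨i, hi, hi'⟩ := Finset.exists_mem_eq_inf' hne (fun i => vd d x y s (p i))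
      refine ⟨i, by simpa [Nat.lt_succ_iff] using hi, ?_⟩
      rw [← hi']
      exact htm ⟨hs0, hs1⟩
    have hDD : D ≤ D0 := by
      by_contra hc
      push Not at hc
      obtain ⟨m, hm1, hm2⟩ := hD1' D (by linarith)
      refine morse_step hm h hδ L Q hL hQ n p hstep hqi D (by linarith) t ht.1 ht.2 hmax ?_ m hm1 hm2
      intro i hi
      exact Finset.inf'_le _ (by simp; omega)
    intro s hs0 hs1
    obtain ⟨i, hi, hi'⟩ := hmax s hs0 hs1
    exact ⟨i, hi, hi'.trans hDD⟩
  have hne1 : (Finset.range (k + 1)).Nonempty := ⟨0, by simp⟩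
  have hne2 : (Finset.Icc k n).Nonempty := ⟨k, by simp [hk]⟩
  have part2 : ∃ t, ∃ i ≤ k, ∃ j, k ≤ j ∧ j ≤ n ∧ vd d x y t (p i) ≤ D0 ∧ vd d x y t (p j) ≤ D0 := by
    have hpre := (isPreconnected_Icc (a := (0:ℝ)) (b := d x y))
    rw [isPreconnected_closed_iff] at hpre
    have hcl1 : IsClosed {t | (Finset.range (k + 1)).inf' hne1 (fun i => vd d x y t (p i)) ≤ D0} :=
      isClosed_le (vd_inf_cont d x y p _ hne1) continuous_const
    have hcl2 : IsClosed {t | (Finset.Icc k n).inf' hne2 (fun i => vd d x y t (p i)) ≤ D0} :=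
      isClosed_le (vd_inf_cont d x y p _ hne2) continuous_const
    have hgo := hpre _ _ hcl1 hcl2
    obtain ⟨t, ht, ht1, ht2⟩ := hgo (by
      intro s hs
      obtain ⟨i, hi, hi'⟩ := part1 s hs.1 hs.2
      rcases le_total i k with h1 | h1
      · left
        simp only [mem_setOf_eq, Finset.inf'_le_iff]
        exact ⟨i, by simp; omega, hi'⟩
      · right
        simp only [mem_setOf_eq, Finset.inf'_le_iff]
        exact ⟨i, by simp; omega, hi'⟩) (by
      refine ⟨0, ⟨le_rfl, hℓ⟩, ?_⟩
      simp only [mem_setOf_eq, Finset.inf'_le_iff]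
      refine ⟨0, by simp, ?_⟩
      unfold vd
      rw [← hx, hm.refl, hm.symm y x]
      simp; positivity) (by
      refine ⟨d x y, ⟨hℓ, le_rfl⟩, ?_⟩
      simp only [mem_setOf_eq, Finset.inf'_le_iff]
      refine ⟨n, by simp [hk], ?_⟩
      unfold vd
      rw [← hy, hm.refl]
      simp; positivity)
    simp only [mem_setOf_eq, Finset.inf'_le_iff] at ht1 ht2
    obtain ⟨i, hi, hi'⟩ := ht1
    obtain ⟨j, hj, hj'⟩ := ht2
    simp at hi hj
    exact ⟨t, i, by omega, j, hj.1, hj.2, hi', hj'⟩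
  obtain ⟨t, i, hik, j, hkj, hjn, h1, h2⟩ := part2
  have a1 := (le_max_left (d x (p i) - t) (d y (p i) - (d x y - t))).trans h1
  have a2 := (le_max_right (d x (p i) - t) (d y (p i) - (d x y - t))).trans h1
  have a3 := (le_max_left (d x (p j) - t) (d y (p j) - (d x y - t))).trans h2
  have a4 := (le_max_right (d x (p j) - t) (d y (p j) - (d x y - t))).trans h2
  have hdist : d (p i) (p j) ≤ 2 * D0 + 2 * δ := by
    have h3 := fourPt hm h (p i) x (p j) y
    have e1 := hm.symm (p i) x
    have e2 := hm.symm (p j) y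
    have e3 := hm.symm (p i) y
    rcases max_choice (d (p i) x + d (p j) y) (d x (p j) + d (p i) y) with h6 | h6 <;>
      rw [h6] at h3 <;> linarith
  have hlip : ∀ m, i + m ≤ n → d (p i) (p (i + m)) ≤ L * m := by
    intro m
    induction m with
    | zero => intro _; simp [hm.refl]
    | succ m ih =>
      intro hmn
      have b1 := ih (by omega)
      have b2 := hstep (i + m) (by omega)
      have b3 := hm.triangle (p i) (p (i + m)) (p (i + m + 1))
      push_cast
      rw [← add_assoc]
      linarith
  have hki := hlip (k - i) (by omega)
  rw [show i + (k - i) = k by omega] at hki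
  have hij := hqi i j (by omega) hjn
  have hkij : ((k - i : ℕ) : ℝ) ≤ Q * (2 * D0 + 2 * δ + 1) := by
    rw [Nat.cast_sub hik]
    have : (k:ℝ) ≤ j := by exact_mod_cast hkj
    nlinarith
  have hki2 : d (p i) (p k) ≤ L * (Q * (2 * D0 + 2 * δ + 1)) :=
    hki.trans (mul_le_mul_of_nonneg_left hkij hL)
  have c1 := hm.triangle x (p i) (p k)
  have c2 := hm.triangle y (p i) (p k)
  unfold gromov
  linarith

end

section
open Filter MeasureTheory Topology Metric Set
open scoped ENNReal

/-! ### Word metrics -/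

theorem wl_exists {S : Finset G} (hS : Generates S) (x : G) :
    ∃ l : List G, l.length = wordLength S x ∧ (∀ a ∈ l, a ∈ S ∨ a⁻¹ ∈ S) ∧ l.prod = x := by
  have hx : x ∈ Subgroup.closure (S : Set G) := by rw [hS]; trivial
  rw [← Subgroup.mem_toSubmonoid, Subgroup.closure_toSubmonoid] at hx
  obtain ⟨l, hl, hl'⟩ := Submonoid.exists_list_of_mem_closure hx
  have hne : {n : ℕ | ∃ l : List G, l.length = n ∧ (∀ a ∈ l, a ∈ S ∨ a⁻¹ ∈ S) ∧
      l.prod = x}.Nonempty := ⟨l.length, l, rfl, by simpa using hl, hl'⟩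
  exact Nat.sInf_mem hne

theorem wl_le {S : Finset G} (l : List G) (h : ∀ a ∈ l, a ∈ S ∨ a⁻¹ ∈ S) :
    wordLength S l.prod ≤ l.length := Nat.sInf_le ⟨l, rfl, h, rfl⟩

theorem wl_mul {S : Finset G} (hS : Generates S) (x y : G) :
    wordLength S (x * y) ≤ wordLength S x + wordLength S y := by
  obtain ⟨l, h1, h2, h3⟩ := wl_exists hS x
  obtain ⟨l', h1', h2', h3'⟩ := wl_exists hS y
  rw [← h1, ← h1', ← h3, ← h3', ← List.prod_append, ← List.length_append]
  apply wl_le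
  intro a ha
  rcases List.mem_append.1 ha with h | h
  · exact h2 a h
  · exact h2' a h

theorem wl_inv {S : Finset G} (hS : Generates S) (x : G) :
    wordLength S x⁻¹ = wordLength S x := by
  have key : ∀ x : G, wordLength S x⁻¹ ≤ wordLength S x := by
    intro x
    obtain ⟨l, h1, h2, h3⟩ := wl_exists hS x
    rw [← h1, ← h3, List.prod_inv_reverse]
    refine (wl_le _ ?_).trans (by simp)
    intro a ha
    simp only [List.mem_reverse, List.mem_map] at ha
    obtain ⟨b, hb, rfl⟩ := ha
    rw [inv_inv]
    exact (h2 b hb).symm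
  apply le_antisymm (key x)
  have := key x⁻¹
  rwa [inv_inv] at this

theorem wl_one {S : Finset G} : wordLength S (1 : G) = 0 := by
  have := wl_le (S := S) [] (by simp)
  simpa using this

/-- geodesic paths -/
def Geod (S : Finset G) (n : ℕ) (p : ℕ → G) : Prop :=
  ∀ i j, i ≤ j → j ≤ n → wordLength S ((p i)⁻¹ * p j) = j - i

theorem exists_geod {S : Finset G} (hS : Generates S) (x y : G) :
    ∃ p : ℕ → G, p 0 = x ∧ p (wordLength S (x⁻¹ * y)) = y ∧
      Geod S (wordLength S (x⁻¹ * y)) p := by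
  obtain ⟨l, h1, h2, h3⟩ := wl_exists hS (x⁻¹ * y)
  set n := wordLength S (x⁻¹ * y) with hn
  have hup : ∀ i j, i ≤ j → wordLength S ((x * (l.take i).prod)⁻¹ * (x * (l.take j).prod)) ≤ j - i := by
    intro i j hij
    have : (x * (l.take i).prod)⁻¹ * (x * (l.take j).prod) = ((l.take j).drop i).prod := by
      have h := List.take_append_drop i (l.take j)
      rw [List.take_take, min_eq_left hij] at h
      rw [mul_inv_rev, mul_assoc, inv_mul_cancel_left]
      rw [inv_mul_eq_iff_eq_mul, ← List.prod_append, h]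
    rw [this]
    refine (wl_le _ ?_).trans ?_
    · intro a ha
      exact h2 a (List.mem_of_mem_take (List.mem_of_mem_drop ha))
    · simp; omega
  refine ⟨fun k => x * (l.take k).prod, by simp, ?_, ?_⟩
  · simp only [← h1, List.take_length, h3]; group
  · intro i j hij hj
    apply le_antisymm (hup i j hij)
    have a1 := hup 0 i (by omega)
    have a2 := hup j n hj
    have a3 : wordLength S (x⁻¹ * y) ≤ wordLength S ((x * (l.take 0).prod)⁻¹ * (x * (l.take i).prod))
        + (wordLength S ((x * (l.take i).prod)⁻¹ * (x * (l.take j).prod)) +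
          wordLength S ((x * (l.take j).prod)⁻¹ * (x * (l.take n).prod))) := by
      have e : x⁻¹ * y = ((x * (l.take 0).prod)⁻¹ * (x * (l.take i).prod)) *
        (((x * (l.take i).prod)⁻¹ * (x * (l.take j).prod)) *
          ((x * (l.take j).prod)⁻¹ * (x * (l.take n).prod))) := by
        rw [← h1, List.take_length, h3]; simp; group
      conv_lhs => rw [e]
      refine (wl_mul hS _ _).trans (Nat.add_le_add_left (wl_mul hS _ _) _)
    omega

/-- A left-invariant hyperbolic metric quasi-isometric to the word metric via the identity. -/
structure Nice (S : Finset G) (d : G → G → ℝ) (δ A : ℝ) : Prop where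
  gen : Generates S
  m : IsMetricFun d
  li : LeftInvariant d
  hyp : IsHyperbolicWith d δ
  hδ : 0 ≤ δ
  hA : 1 ≤ A
  up : ∀ x y, d x y ≤ A * wordLength S (x⁻¹ * y)
  low : ∀ x y, (wordLength S (x⁻¹ * y) : ℝ) ≤ A * d x y + A

theorem Nice.step {S : Finset G} {d : G → G → ℝ} {δ A : ℝ} (hd : Nice S d δ A) {n : ℕ} {p : ℕ → G}
    (hp : Geod S n p) (i : ℕ) (hi : i < n) : d (p i) (p (i + 1)) ≤ A := by
  have := hd.up (p i) (p (i + 1))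
  rw [hp i (i + 1) (by omega) hi] at this
  simpa using this

theorem Nice.ruler {S : Finset G} {d : G → G → ℝ} {δ A : ℝ} (hd : Nice S d δ A) :
    ∃ τ : ℝ, 0 ≤ τ ∧ ∀ n p, Geod S n p → ∀ k ≤ n, gromov d (p k) (p 0) (p n) ≤ τ := by
  have hA := hd.hA
  obtain ⟨τ, h0, h⟩ := morse hd.m hd.hyp hd.hδ A A (by linarith) (by linarith)
  refine ⟨τ, h0, fun n p hp => h n p (fun i hi => hd.step hp i hi) ?_⟩
  intro i j hij hj
  have := hd.low (p i) (p j)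
  rw [hp i j hij hj, Nat.cast_sub hij] at this
  linarith

theorem Nice.interp {S : Finset G} {d : G → G → ℝ} {δ A : ℝ} (hd : Nice S d δ A) :
    ∃ τ : ℝ, 0 ≤ τ ∧ ∀ x y s, 0 ≤ s → s ≤ d x y →
      ∃ z, s ≤ d x z ∧ d x z ≤ s + A ∧ gromov d z x y ≤ τ := by
  obtain ⟨τ, h0, h⟩ := hd.ruler
  refine ⟨τ, h0, fun x y s hs0 hs1 => ?_⟩
  obtain ⟨p, hp0, hpn, hp⟩ := exists_geod hd.gen x y
  set n := wordLength S (x⁻¹ * y) with hn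
  have hA := hd.hA
  have hex : ∃ k, s ≤ d x (p k) := ⟨n, by rw [hpn]; exact hs1⟩
  classical
  have hk := Nat.find_spec hex
  have hkn : Nat.find hex ≤ n := Nat.find_min' hex (by rw [hpn]; exact hs1)
  have hmin := fun m => @Nat.find_min _ _ hex m
  generalize Nat.find hex = k at hk hkn hmin
  refine ⟨p k, hk, ?_, ?_⟩
  · rcases k with _ | k
    · rw [hp0, hd.m.refl]; linarith
    · have h1 := hmin (m := k) (by omega)
      push Not at h1
      have h2 := hd.step hp k (by omega)
      have h3 := hd.m.triangle x (p k) (p (k+1))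
      linarith
  · have := h n p hp _ hkn
    rwa [hp0, hpn] at this

theorem Nice.center {S : Finset G} {d g : G → G → ℝ} {δ A δ' A' : ℝ} (hd : Nice S d δ A)
    (hg : Nice S g δ' A') :
    ∃ K : ℝ, 0 ≤ K ∧ ∀ x y z, ∃ p, gromov d p x y ≤ K ∧ g z p ≤ gromov g z x y + K := by
  obtain ⟨τ, h0, h⟩ := hd.ruler
  obtain ⟨τ', h0', h'⟩ := hg.ruler
  have hA := hg.hA
  have hδ' := hg.hδ
  refine ⟨τ + 2 * (τ' + δ' + A'), by positivity, fun x y z => ?_⟩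
  obtain ⟨p, hp0, hpn, hp⟩ := exists_geod hd.gen x y
  set n := wordLength S (x⁻¹ * y) with hn
  have hbn : gromov g (p n) z y ≤ τ' + δ' := by
    have := gromov_le_right hg.m (p n) z y
    rw [← hpn, hg.m.refl] at this
    rw [hpn] at this ⊢
    linarith
  have hex : ∃ k, gromov g (p k) z y ≤ τ' + δ' := ⟨n, hbn⟩
  classical
  have hk := Nat.find_spec hex
  have hkn : Nat.find hex ≤ n := Nat.find_min' hex hbn
  have hmin := fun m => @Nat.find_min _ _ hex m
  generalize Nat.find hex = k at hk hkn hmin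
  have hr := h n p hp k hkn
  have hr' := h' n p hp k hkn
  rw [hp0, hpn] at hr hr'
  have hx : gromov g (p k) z x ≤ τ' + δ' + A' := by
    rcases k with _ | k
    · have := gromov_le_right hg.m (p 0) z x
      rw [hp0, hg.m.refl] at this
      rw [hp0]; linarith
    · have h1 := hmin (m := k) (by omega)
      push Not at h1
      have h2 := hg.hyp (p k) z x y
      have h3 := h' n p hp k (by omega)
      rw [hp0, hpn] at h3
      have h4 : gromov g (p k) z x ≤ τ' + δ' := by
        by_contra hc
        push Not at hc
        have := lt_min hc h1
        linarith
      have h5 := hg.step hp k (by omega)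
      have h6 := hg.m.triangle z (p k) (p (k+1))
      have h7 := hg.m.triangle x (p k) (p (k+1))
      unfold gromov at h4 ⊢
      linarith
  refine ⟨p k, by linarith, ?_⟩
  have e1 := hg.m.symm z (p k)
  have e2 := hg.m.symm x z
  have e3 := hg.m.symm y z
  have hb := gromov_nonneg hg.m (p k) x y
  unfold gromov at hx hk hb ⊢
  linarith

theorem Nice.compare {S : Finset G} {d g : G → G → ℝ} {δ A δ' A' : ℝ} (hd : Nice S d δ A)
    (hg : Nice S g δ' A') :
    ∃ K : ℝ, 1 ≤ K ∧ ∀ x y z, gromov d z x y ≤ K * gromov g z x y + K := by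
  obtain ⟨K, h0, h⟩ := hd.center hg
  have hA := hg.hA
  have hA' := hd.hA
  have hAA : 1 ≤ A * A' := by nlinarith
  refine ⟨A * A' + A * A' * K + A * A' + K, by nlinarith [mul_nonneg (zero_le_one.trans hAA) h0], fun x y z => ?_⟩
  obtain ⟨p, h1, h2⟩ := h x y z
  have h3 : gromov d z x y ≤ d z p + gromov d p x y := by
    have a1 := hd.m.triangle x p z
    have a2 := hd.m.triangle y p z
    have e := hd.m.symm p z
    unfold gromov; linarith
  have h4 := hd.up z p
  have h5 := hg.low z p
  have h6 := gromov_nonneg hg.m z x y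
  have h7 : A * wordLength S (z⁻¹ * p) ≤ A * (A' * g z p + A') :=
    mul_le_mul_of_nonneg_left h5 (by linarith)
  have h8 : A * A' * g z p ≤ A * A' * (gromov g z x y + K) :=
    mul_le_mul_of_nonneg_left h2 (by linarith)
  have h9 : 0 ≤ (A * A' * K + A * A' + K) * gromov g z x y := by positivity
  nlinarith

theorem wordDist_nn {S : Finset G} (x y : G) : 0 ≤ wordDist S x y := by
  unfold wordDist; positivity

theorem wordDist_tri {S : Finset G} (hS : Generates S) (x y z : G) :
    wordDist S x z ≤ wordDist S x y + wordDist S y z := by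
  unfold wordDist
  have := wl_mul hS (x⁻¹ * y) (y⁻¹ * z)
  rw [show x⁻¹ * y * (y⁻¹ * z) = x⁻¹ * z by group] at this
  exact_mod_cast this

theorem wordDist_symm {S : Finset G} (hS : Generates S) (x y : G) :
    wordDist S x y = wordDist S y x := by
  unfold wordDist
  rw [← wl_inv hS, mul_inv_rev, inv_inv]

theorem milnor {S : Finset G} (hS : Generates S) {d : G → G → ℝ} (hd : MemD d)
    (hfin : ∀ R, {x | d 1 x ≤ R}.Finite) : ∃ δ A, Nice S d δ A := by
  obtain ⟨hm, hli, ⟨δ, hδ, hyp⟩, S0, hS0, f, Λ, c, C, hΛ, hc, hC, hf, hfs⟩ := hd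
  set L := Λ * (2 * C + 1 + c) with hL
  have hΛ0 : 0 < Λ := by linarith
  obtain ⟨M, hM⟩ : ∃ M : ℕ, ∀ x, d 1 x ≤ L → wordLength S x ≤ M := by
    obtain ⟨M, hM⟩ := ((hfin L).image (wordLength S)).bddAbove
    exact ⟨M, fun x hx => hM ⟨x, hx, rfl⟩⟩
  have hinv : ∀ x y, d x y = d 1 (x⁻¹ * y) := by
    intro x y
    have := hli x⁻¹ x y
    rw [← this]; simp
  have hback : ∀ x y, wordDist S0 (f x) (f y) ≤ 2 * C + 1 → wordLength S (x⁻¹ * y) ≤ M := by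
    intro x y hxy
    apply hM
    rw [← hinv]
    have h1 := (hf x y).1
    have h2 : d x y / Λ ≤ 2 * C + 1 + c := by linarith
    rw [div_le_iff₀ hΛ0] at h2
    rw [hL]; linarith
  have key : ∀ (n : ℕ) (x y : G) (q : ℕ → G), (∀ i < n, wordDist S0 (q i) (q (i+1)) ≤ 1) →
      wordDist S0 (f x) (q 0) ≤ C → wordDist S0 (f y) (q n) ≤ C →
      wordLength S (x⁻¹ * y) ≤ M * (n + 1) := by
    intro n
    induction n with
    | zero =>
      intro x y q _ h1 h2
      simp only [zero_add, mul_one]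
      apply hback
      have := wordDist_tri hS0 (f x) (q 0) (f y)
      rw [wordDist_symm hS0 (q 0)] at this
      linarith
    | succ n ih =>
      intro x y q hq h1 h2
      obtain ⟨x', hx'⟩ := hfs (q 1)
      have a1 := ih x' y (fun i => q (i + 1)) (fun i hi => hq (i+1) (by omega)) hx' h2
      have a2 : wordLength S (x⁻¹ * x') ≤ M := by
        apply hback
        have b1 := wordDist_tri hS0 (f x) (q 0) (f x')
        have b2 := wordDist_tri hS0 (q 0) (q 1) (f x')
        have b3 := hq 0 (by omega)
        simp only [zero_add] at b3
        rw [wordDist_symm hS0 (q 1)] at b2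
        linarith
      have a3 := wl_mul hS (x⁻¹ * x') (x'⁻¹ * y)
      rw [show x⁻¹ * x' * (x'⁻¹ * y) = x⁻¹ * y by group] at a3
      have : M * (n + 1 + 1) = M * (n + 1) + M := by ring
      omega
  obtain ⟨D, hD0, hD⟩ : ∃ D : ℝ, 0 ≤ D ∧ ∀ s ∈ S, d 1 s ≤ D := by
    refine ⟨∑ s ∈ S, d 1 s, Finset.sum_nonneg fun s _ => hm.nonneg _ _, fun s hs => ?_⟩
    exact Finset.single_le_sum (f := fun s => d 1 s) (fun s _ => hm.nonneg _ _) hs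
  have hup : ∀ l : List G, (∀ a ∈ l, a ∈ S ∨ a⁻¹ ∈ S) → d 1 l.prod ≤ D * l.length := by
    intro l
    induction l with
    | nil => intro _; simp [hm.refl]
    | cons a l ih =>
      intro h
      have h1 := ih (fun b hb => h b (by simp [hb]))
      have h2 : d 1 a ≤ D := by
        rcases h a (by simp) with h | h
        · exact hD a h
        · have := hD _ h
          rw [← hli a] at this
          simp at this
          rwa [hm.symm] at this
      have h3 := hm.triangle 1 a (a * l.prod)
      have h4 := hli a 1 l.prod
      simp only [mul_one] at h4
      simp only [List.prod_cons, List.length_cons]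
      push_cast
      linarith
  have hM0 : (0:ℝ) ≤ M := by positivity
  refine ⟨δ, 1 + D + M * Λ + M * (c + 1), hS, hm, hli, hyp, hδ, ?_, ?_, ?_⟩
  · have : 0 ≤ M * Λ := by positivity
    have : 0 ≤ M * (c+1) := by positivity
    linarith
  · intro x y
    obtain ⟨l, h1, h2, h3⟩ := wl_exists hS (x⁻¹ * y)
    have := hup l h2
    rw [h3, h1, ← hinv] at this
    have h5 : (0:ℝ) ≤ (1 + M * Λ + M * (c+1)) * wordLength S (x⁻¹ * y) := by positivity
    linarith
  · intro x y
    obtain ⟨q, hq0, hqn, hq⟩ := exists_geod hS0 (f x) (f y)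
    have h0 : ∀ z : G, wordDist S0 z z ≤ C := by
      intro z; unfold wordDist; rw [inv_mul_cancel, wl_one]; simpa using hC
    have h1 := key _ x y q (fun i hi => by
      unfold wordDist
      rw [hq i (i+1) (by omega) hi]; simp) (by rw [hq0]; exact h0 _) (by rw [hqn]; exact h0 _)
    have h2 := (hf x y).2
    unfold wordDist at h2
    have h3 : (wordLength S (x⁻¹ * y) : ℝ) ≤ M * (wordLength S0 ((f x)⁻¹ * f y) + 1) := by
      exact_mod_cast h1
    have h4 := hm.nonneg x y
    have h5 : (M:ℝ) * (wordLength S0 ((f x)⁻¹ * f y) + 1) ≤ M * (Λ * d x y + c + 1) :=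
      mul_le_mul_of_nonneg_left (by linarith) hM0
    have h6 : 0 ≤ (1 + D + M * (c + 1)) * d x y := by positivity
    have h7 : 0 ≤ M * Λ := by positivity
    nlinarith

end

section
open Filter MeasureTheory Topology Metric Set
open scoped ENNReal

/-! ### The random walk: basics -/

section Walk

/-- shift of increments -/
def sh (n : ℕ) (ω : ℕ → G) : ℕ → G := fun k => ω (n + k)

theorem sh_sh (n m : ℕ) (ω : ℕ → G) : sh m (sh n ω) = sh (n + m) ω := by
  funext k; simp [sh, add_assoc]

theorem walkPos_zero (ω : ℕ → G) : walkPos 0 ω = 1 := by simp [walkPos]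

theorem walkPos_one (ω : ℕ → G) : walkPos 1 ω = ω 0 := by simp [walkPos]

theorem walkPos_succ (n : ℕ) (ω : ℕ → G) : walkPos (n + 1) ω = walkPos n ω * ω n := by
  simp [walkPos, List.range_succ]

theorem walkPos_add (n m : ℕ) (ω : ℕ → G) :
    walkPos (n + m) ω = walkPos n ω * walkPos m (sh n ω) := by
  induction m with
  | zero => simp [walkPos_zero]
  | succ m ih => rw [← add_assoc, walkPos_succ, ih, walkPos_succ, mul_assoc]; rfl

theorem walkPos_congr {n : ℕ} {ω ω' : ℕ → G} (h : ∀ i < n, ω i = ω' i) :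
    walkPos n ω = walkPos n ω' := by
  unfold walkPos
  congr 1
  apply List.map_congr_left
  intro i hi
  exact h i (by simpa using hi)

variable [Countable G] [MeasurableSpace G] [MeasurableSingletonClass G]

theorem meas_sh (n : ℕ) : Measurable (sh (G := G) n) := by
  apply measurable_pi_lambda
  intro k
  exact measurable_pi_apply _

theorem meas_walkPos (n : ℕ) : Measurable (walkPos (G := G) n) := by
  induction n with
  | zero =>
    have : walkPos (G := G) 0 = fun _ => 1 := by funext ω; exact walkPos_zero ω
    rw [this]; exact measurable_const
  | succ n ih =>
    have : walkPos (G := G) (n + 1) = (fun p : G × G => p.1 * p.2) ∘ fun ω => (walkPos n ω, ω n) := by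
      funext ω; exact walkPos_succ n ω
    rw [this]
    exact (Measurable.of_discrete).comp (ih.prodMk (measurable_pi_apply n))

theorem meas_W (n : ℕ) (Q : G → Prop) : MeasurableSet {ω : ℕ → G | Q (walkPos n ω)} :=
  (meas_walkPos n) (MeasurableSet.of_discrete (s := {x | Q x}))

theorem meas_ex (Q : ℕ → G → Prop) : MeasurableSet {ω : ℕ → G | ∃ n, Q n (walkPos n ω)} := by
  rw [setOf_exists]
  exact MeasurableSet.iUnion fun n => meas_W n _

theorem meas_all (Q : ℕ → G → Prop) : MeasurableSet {ω : ℕ → G | ∀ n, Q n (walkPos n ω)} := by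
  rw [setOf_forall]
  exact MeasurableSet.iInter fun n => meas_W n _

theorem meas_shW (n : ℕ) (E : G → Set (ℕ → G)) (hE : ∀ x, MeasurableSet (E x)) :
    MeasurableSet {ω : ℕ → G | sh n ω ∈ E (walkPos n ω)} := by
  have : {ω : ℕ → G | sh n ω ∈ E (walkPos n ω)} =
      ⋃ x, ({ω | walkPos n ω = x} ∩ sh n ⁻¹' E x) := by
    ext ω; simp
  rw [this]
  exact MeasurableSet.iUnion fun x => (meas_W n (fun y => y = x)).inter (meas_sh n (hE x))

/-- cylinders -/
def cyl (n : ℕ) (g : Fin n → G) : Set (ℕ → G) := {ω | ∀ i : Fin n, ω i = g i}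

theorem meas_cyl (n : ℕ) (g : Fin n → G) : MeasurableSet (cyl n g) := by
  unfold cyl
  rw [setOf_forall]
  refine MeasurableSet.iInter fun i => ?_
  exact measurableSet_eq_fun (measurable_pi_apply (i : ℕ)) measurable_const

theorem cyl_generate : (MeasurableSpace.pi : MeasurableSpace (ℕ → G)) =
    MeasurableSpace.generateFrom {s | ∃ n g, s = cyl (G := G) n g} := by
  apply le_antisymm
  · unfold MeasurableSpace.pi
    refine iSup_le fun k => ?_
    rw [← measurable_iff_comap_le]
    refine @measurable_to_countable' _ _ _ _ (_) _ ?_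
    intro a
    have : (fun ω : ℕ → G => ω k) ⁻¹' {a} = ⋃ g : {g : Fin (k + 1) → G // g (Fin.last k) = a},
        cyl (k + 1) g.1 := by
      ext ω
      simp only [mem_preimage, mem_singleton_iff, mem_iUnion]
      constructor
      · intro h
        exact ⟨⟨fun i => ω i, by simpa using h⟩, fun i => rfl⟩
      · rintro ⟨⟨g, hg⟩, h⟩
        have := h (Fin.last k)
        simpa [hg] using this
    rw [this]
    refine @MeasurableSet.iUnion _ _ (_) _ _ fun g => ?_
    exact MeasurableSpace.measurableSet_generateFrom ⟨_, _, rfl⟩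
  · apply MeasurableSpace.generateFrom_le
    rintro s ⟨n, g, rfl⟩
    exact meas_cyl n g

theorem cyl_piSystem : IsPiSystem {s | ∃ n g, s = cyl (G := G) n g} := by
  have key : ∀ n m (g : Fin n → G) (k : Fin m → G), n ≤ m → (cyl n g ∩ cyl m k).Nonempty →
      cyl n g ∩ cyl m k = cyl m k := by
    rintro n m g k hnm ⟨ω, h1, h2⟩
    apply inter_eq_right.2
    intro ω' h i
    have a1 := h1 i
    have a2 := h2 ⟨i, by omega⟩
    have a3 := h ⟨i, by omega⟩
    simp only at a2 a3
    rw [a3, ← a2, a1]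
  rintro s ⟨n, g, rfl⟩ t ⟨m, k, rfl⟩ hne
  rcases le_total n m with h | h
  · exact ⟨m, k, key _ _ _ _ h hne⟩
  · rw [inter_comm] at hne ⊢
    exact ⟨n, g, key _ _ _ _ h hne⟩

theorem cyl_indep {μ : G → ℝ} {P : Measure (ℕ → G)} (hP : IsWalkMeasure μ P) (n : ℕ)
    (g : Fin n → G) (E : Set (ℕ → G)) (hE : MeasurableSet E) :
    P (cyl n g ∩ sh n ⁻¹' E) = P (cyl n g) * P E := by
  have := hP.1
  have hcyl : ∀ n (g : Fin n → G), P (cyl n g) = ∏ i : Fin n, ENNReal.ofReal (μ (g i)) := hP.2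
  have hQ : (P.restrict (cyl n g)).map (sh n) = P (cyl n g) • P := by
    apply ext_of_generate_finite _ cyl_generate cyl_piSystem
    · rintro s ⟨m, k, rfl⟩
      rw [Measure.map_apply (meas_sh n) (meas_cyl m k), Measure.restrict_apply
        (meas_sh n (meas_cyl m k)), Measure.smul_apply, smul_eq_mul, hcyl, hcyl]
      have e : sh n ⁻¹' cyl m k ∩ cyl n g = cyl (n + m) (Fin.append g k) := by
        ext ω
        constructor
        · rintro ⟨h1, h2⟩ i
          refine Fin.addCases (fun i => ?_) (fun i => ?_) i
          · rw [Fin.append_left]; exact h2 i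
          · rw [Fin.append_right]; exact h1 i
        · intro h
          refine ⟨fun i => ?_, fun i => ?_⟩
          · have := h (Fin.natAdd n i)
            rw [Fin.append_right] at this
            exact this
          · have := h (Fin.castAdd m i)
            rw [Fin.append_left] at this
            exact this
      rw [e, hcyl, Fin.prod_univ_add]
      simp only [Fin.append_left, Fin.append_right]
    · rw [Measure.map_apply (meas_sh n) MeasurableSet.univ, preimage_univ]
      simp
  have h2 := congrArg (fun m : Measure (ℕ → G) => m E) hQ
  simp only [Measure.map_apply (meas_sh n) hE, Measure.restrict_apply (meas_sh n hE),
    Measure.smul_apply, smul_eq_mul] at h2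
  rw [inter_comm]; exact h2

theorem markov {μ : G → ℝ} {P : Measure (ℕ → G)} (hP : IsWalkMeasure μ P) (n : ℕ) (x : G)
    (E : Set (ℕ → G)) (hE : MeasurableSet E) :
    P ({ω | walkPos n ω = x} ∩ sh n ⁻¹' E) = P {ω | walkPos n ω = x} * P E := by
  have e : {ω : ℕ → G | walkPos n ω = x} =
      ⋃ g : {g : Fin n → G // (List.ofFn g).prod = x}, cyl n g.1 := by
    have hw : ∀ ω : ℕ → G, walkPos n ω = (List.ofFn (fun i : Fin n => ω i)).prod := by
      intro ω
      unfold walkPos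
      rw [List.ofFn_eq_map, ← List.map_coe_finRange_eq_range, List.map_map]
      rfl
    ext ω
    simp only [mem_setOf_eq, mem_iUnion]
    constructor
    · intro h
      exact ⟨⟨fun i => ω i, by rw [← h, hw]⟩, fun i => rfl⟩
    · rintro ⟨⟨g, hg⟩, h⟩
      rw [hw, ← hg]
      congr 2
      funext i
      exact h i
  have hd : Pairwise (Function.onFun Disjoint
      fun g : {g : Fin n → G // (List.ofFn g).prod = x} => cyl n g.1) := by
    intro g g' hne
    refine disjoint_left.2 fun ω h1 h2 => hne ?_
    apply Subtype.ext
    funext i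
    rw [← h1 i, ← h2 i]
  rw [e, iUnion_inter, measure_iUnion, measure_iUnion hd (fun g => meas_cyl _ _),
    ← ENNReal.tsum_mul_right]
  · exact tsum_congr fun g => cyl_indep hP n g.1 E hE
  · intro g g' hne
    exact (hd hne).mono inter_subset_left inter_subset_left
  · intro g
    exact (meas_cyl _ _).inter (meas_sh n hE)

theorem markov_fam {μ : G → ℝ} {P : Measure (ℕ → G)} (hP : IsWalkMeasure μ P) (n : ℕ)
    (E : G → Set (ℕ → G)) (hE : ∀ x, MeasurableSet (E x)) :
    P {ω | sh n ω ∈ E (walkPos n ω)} = ∑' x, P {ω | walkPos n ω = x} * P (E x) := by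
  have : {ω : ℕ → G | sh n ω ∈ E (walkPos n ω)} =
      ⋃ x, ({ω | walkPos n ω = x} ∩ sh n ⁻¹' E x) := by
    ext ω; simp
  rw [this, measure_iUnion]
  · exact tsum_congr fun x => markov hP n x _ (hE x)
  · intro x y hxy
    refine disjoint_left.2 fun ω h1 h2 => hxy ?_
    rw [← h1.1, ← h2.1]
  · intro x
    exact (meas_W n (fun y => y = x)).inter (meas_sh n (hE x))

theorem lintegral_W (P : Measure (ℕ → G)) (n : ℕ) (f : G → (ℕ → G) → ℝ≥0∞) (hf : ∀ x, Measurable (f x)) :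
    ∫⁻ ω, f (walkPos n ω) ω ∂P = ∑' x, ∫⁻ ω in {ω | walkPos n ω = x}, f x ω ∂P := by
  have hu : (univ : Set (ℕ → G)) = ⋃ x, {ω | walkPos n ω = x} := by ext ω; simp
  rw [← setLIntegral_univ, hu, lintegral_iUnion]
  · apply tsum_congr
    intro x
    apply setLIntegral_congr_fun (meas_W n (fun y => y = x))
    intro ω hω
    simp only [mem_setOf_eq] at hω
    simp only [hω]
  · exact fun x => meas_W n (fun y => y = x)
  · intro x y hxy
    refine disjoint_left.2 fun ω h1 h2 => hxy ?_
    rw [← show walkPos n ω = x from h1, ← show walkPos n ω = y from h2]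

theorem markov_lint {μ : G → ℝ} {P : Measure (ℕ → G)} (hP : IsWalkMeasure μ P) (n : ℕ)
    (f : G → (ℕ → G) → ℝ≥0∞) (hf : ∀ x, Measurable (f x)) :
    ∫⁻ ω, f (walkPos n ω) (sh n ω) ∂P = ∑' x, P {ω | walkPos n ω = x} * ∫⁻ ω, f x ω ∂P := by
  rw [lintegral_W P n (fun x ω => f x (sh n ω)) (fun x => (hf x).comp (meas_sh n))]
  apply tsum_congr
  intro x
  have hQ : (P.restrict {ω | walkPos n ω = x}).map (sh n) = P {ω | walkPos n ω = x} • P := by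
    ext E hE
    rw [Measure.map_apply (meas_sh n) hE, Measure.restrict_apply (meas_sh n hE), inter_comm,
      markov hP n x E hE]
    rfl
  rw [← lintegral_map (hf x) (meas_sh n), hQ, lintegral_smul_measure, smul_eq_mul]

/-- Sum over a discrete law. -/
theorem lintegral_pos (P : Measure (ℕ → G)) (n : ℕ) (f : G → ℝ≥0∞) :
    ∫⁻ ω, f (walkPos n ω) ∂P = ∑' x, P {ω | walkPos n ω = x} * f x := by
  rw [lintegral_W P n (fun x _ => f x) (fun x => measurable_const)]
  apply tsum_congr
  intro x
  simp [mul_comm]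

theorem tsum_pos (P : Measure (ℕ → G)) [IsProbabilityMeasure P] (n : ℕ) :
    ∑' x, P {ω | walkPos n ω = x} = 1 := by
  have := lintegral_pos P n (fun _ => 1)
  simpa using this.symm

/-- Green function -/
def Gr (P : Measure (ℕ → G)) (x : G) : ℝ≥0∞ := ∑' n, P {ω | walkPos n ω = x}

/-- Last exit decomposition. -/
theorem lastvisit {μ : G → ℝ} {P : Measure (ℕ → G)} (hP : IsWalkMeasure μ P) (x : G)
    (E : G → Set (ℕ → G)) (hE : ∀ x, MeasurableSet (E x))
    (hd : ∀ ω z k, 1 ≤ k → ω ∈ E z → sh k ω ∉ E (z * walkPos k ω)) :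
    ∑' z, Gr P (x⁻¹ * z) * P (E z) = P {ω | ∃ n, sh n ω ∈ E (x * walkPos n ω)} := by
  rw [setOf_exists, measure_iUnion]
  · have h1 : ∀ n, P {ω | sh n ω ∈ E (x * walkPos n ω)} =
        ∑' z, P {ω | walkPos n ω = x⁻¹ * z} * P (E z) := by
      intro n
      rw [markov_fam hP n (fun y => E (x * y)) (fun y => hE _)]
      rw [← (Equiv.mulLeft x⁻¹).tsum_eq]
      apply tsum_congr
      intro z
      simp
    simp_rw [h1]
    rw [ENNReal.tsum_comm]
    apply tsum_congr
    intro z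
    rw [Gr, ENNReal.tsum_mul_right]
  · have key : ∀ n m, n < m → ∀ ω, sh n ω ∈ E (x * walkPos n ω) →
        sh m ω ∉ E (x * walkPos m ω) := by
      intro n m hnm ω h
      have := hd (sh n ω) _ (m - n) (by omega) h
      rw [sh_sh, mul_assoc, ← walkPos_add, show n + (m - n) = m by omega] at this
      exact this
    intro n m hnm
    refine disjoint_left.2 fun ω h1 h2 => ?_
    rcases lt_or_gt_of_ne hnm with h | h
    · exact key n m h ω h1 h2
    · exact key m n h ω h2 h1
  · intro n
    exact meas_shW n (fun y => E (x * y)) (fun y => hE _)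

theorem p_one {μ : G → ℝ} {P : Measure (ℕ → G)} (hP : IsWalkMeasure μ P) (x : G) :
    P {ω | walkPos 1 ω = x} = ENNReal.ofReal (μ x) := by
  have := hP.2 1 (fun _ => x)
  simp only [Fin.forall_fin_one, Finset.univ_unique, Finset.prod_const, Finset.card_singleton,
    pow_one] at this
  rw [← this]
  congr 1
  ext ω
  simp [walkPos_one]

theorem p_add {μ : G → ℝ} {P : Measure (ℕ → G)} (hP : IsWalkMeasure μ P) (n m : ℕ) (x : G) :
    P {ω | walkPos (n + m) ω = x} =
      ∑' y, P {ω | walkPos n ω = y} * P {ω | walkPos m ω = y⁻¹ * x} := by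
  rw [← markov_fam hP n (fun y => {ω | walkPos m ω = y⁻¹ * x}) (fun y => meas_W m (fun z => z = _))]
  congr 1
  ext ω
  simp [walkPos_add, eq_inv_mul_iff_mul_eq]

theorem p_convPow {μ : G → ℝ} {P : Measure (ℕ → G)} (hP : IsWalkMeasure μ P)
    (hμ : ∀ x, 0 ≤ μ x) (n : ℕ) (x : G) :
    convPow μ n x = (P {ω | walkPos n ω = x}).toReal := by
  have := hP.1
  induction n generalizing x with
  | zero =>
    by_cases h : x = 1
    · simp [convPow, h, walkPos_zero]
    · simp [convPow, h, walkPos_zero, Ne.symm h]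
  | succ n ih =>
    rw [p_add hP n 1, ENNReal.tsum_toReal_eq]
    · simp only [convPow]
      apply tsum_congr
      intro y
      rw [ih, p_one hP, ENNReal.toReal_mul, ENNReal.toReal_ofReal (hμ _)]
    · intro y
      exact ENNReal.mul_ne_top (measure_ne_top _ _) (measure_ne_top _ _)

/-- The list of the first increments. -/
def pre (n : ℕ) (ω : ℕ → G) : List G := (List.range n).map ω

theorem pre_hit (x y : G) (n : ℕ) (ω : ℕ → G) :
    IsFirstHitPath x y (pre n ω) ↔ x * walkPos n ω = y ∧ ∀ k < n, x * walkPos k ω ≠ y := by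
  have h1 : ∀ n, walkPositions x (pre n ω) = (List.range (n + 1)).map (fun k => x * walkPos k ω) := by
    intro n
    induction n with
    | zero => simp [walkPositions, pre, walkPos_zero]
    | succ n ih =>
      have h2 : pre (n + 1) ω = pre n ω ++ [ω n] := by simp [pre, List.range_succ]
      have hf : ∀ (l : List G) (z : G), l.foldl (fun p a => p * a) z = z * l.prod := by
        intro l
        induction l with
        | nil => intro z; simp
        | cons a l ihl => intro z; simp [ihl, mul_assoc]
      rw [h2, walkPositions, List.scanl_append]
      rw [walkPositions] at ih
      rw [ih, List.range_succ (n := n + 1), List.map_append]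
      simp [hf, pre, walkPos, List.range_succ, mul_assoc]
  unfold IsFirstHitPath
  rw [h1, List.range_succ, List.map_append]
  simp

theorem hit_eq {μ : G → ℝ} {P : Measure (ℕ → G)} (hP : IsWalkMeasure μ P)
    (hμ : ∀ x, 0 ≤ μ x) (x y : G) :
    hitProb μ x y = (P {ω | ∃ n, x * walkPos n ω = y}).toReal := by
  have := hP.1
  have hcyl : ∀ l : List G, P {ω | pre l.length ω = l} = ENNReal.ofReal ((l.map μ).prod) := by
    intro l
    have h1 := hP.2 l.length (fun i => l.get i)
    have h2 : {ω : ℕ → G | pre l.length ω = l} = {ω | ∀ i : Fin l.length, ω i = l.get i} := by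
      ext ω
      simp only [mem_setOf_eq, pre]
      constructor
      · intro h i
        have h3 : l.get i = l[(i:ℕ)] := rfl
        rw [h3]
        have h4 : ((List.range l.length).map ω)[(i:ℕ)]'(by simp) = l[(i:ℕ)] := by
          congr 1
        rw [← h4]; simp
      · intro h
        apply List.ext_getElem (by simp)
        intro i h1 h2
        simpa using h ⟨i, h2⟩
    rw [h2, h1, ← ENNReal.ofReal_prod_of_nonneg (fun i _ => hμ _)]
    congr 1
    rw [← List.prod_ofFn]
    congr 1
    exact (List.ofFn_getElem_eq_map l μ)
  have hset : {ω : ℕ → G | ∃ n, x * walkPos n ω = y} =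
      ⋃ l : {l : List G // IsFirstHitPath x y l}, {ω | pre l.1.length ω = l.1} := by
    ext ω
    simp only [mem_setOf_eq, mem_iUnion]
    constructor
    · intro h
      classical
      refine ⟨⟨pre (Nat.find h) ω, (pre_hit x y _ ω).2 ⟨Nat.find_spec h, fun k hk => Nat.find_min h hk⟩⟩, ?_⟩
      simp [pre]
    · rintro ⟨⟨l, hl⟩, h⟩
      simp only at h
      rw [← h] at hl
      exact ⟨_, ((pre_hit x y _ ω).1 hl).1⟩
  rw [hset, measure_iUnion]
  · unfold hitProb
    simp_rw [hcyl]
    rw [ENNReal.tsum_toReal_eq (fun l => ENNReal.ofReal_ne_top)]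
    apply tsum_congr
    intro l
    rw [ENNReal.toReal_ofReal]
    apply List.prod_nonneg
    intro a ha
    obtain ⟨b, _, rfl⟩ := List.mem_map.1 ha
    exact hμ b
  · intro l l' hne
    refine disjoint_left.2 fun ω h1 h2 => hne ?_
    simp only [mem_setOf_eq] at h1 h2
    have a1 := (pre_hit x y l.1.length ω).1 (by rw [h1]; exact l.2)
    have a2 := (pre_hit x y l'.1.length ω).1 (by rw [h2]; exact l'.2)
    have : l.1.length = l'.1.length := by
      rcases lt_trichotomy l.1.length l'.1.length with h | h | h
      · exact absurd a1.1 (a2.2 _ h)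
      · exact h
      · exact absurd a2.1 (a1.2 _ h)
    apply Subtype.ext
    rw [← h1, ← h2, this]
  · intro l
    have : {ω : ℕ → G | pre l.1.length ω = l.1} = ⋂ i : Fin l.1.length, {ω | ω i = l.1.get i} := by
      ext ω
      simp only [mem_setOf_eq, pre, mem_iInter]
      constructor
      · intro h i
        have h3 : l.1.get i = l.1[(i:ℕ)] := rfl
        rw [h3]
        have h4 : ((List.range l.1.length).map ω)[(i:ℕ)]'(by simp) = l.1[(i:ℕ)] := by
          congr 1
        rw [← h4]; simp
      · intro h
        apply List.ext_getElem (by simp)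
        intro i h1 h2
        simpa using h ⟨i, h2⟩
    rw [this]
    exact MeasurableSet.iInter fun i => measurableSet_eq_fun (measurable_pi_apply _) measurable_const

end Walk

end

section
open Filter MeasureTheory Topology Metric Set
open scoped ENNReal

/-! ### Green metric estimates -/

section Green
variable [Countable G] [MeasurableSpace G] [MeasurableSingletonClass G]

/-- escape event -/
def escE : Set (ℕ → G) := {ω | ∀ k, 1 ≤ k → walkPos k ω ≠ 1}

theorem meas_escE : MeasurableSet (escE (G := G)) := meas_all (fun k x => 1 ≤ k → x ≠ 1)

/-- `exp (-g)` as an extended nonnegative real -/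
def ef (g : G → G → ℝ) (x y : G) : ℝ≥0∞ := ENNReal.ofReal (Real.exp (-(g x y)))

structure WG (μ : G → ℝ) (P : Measure (ℕ → G)) (g : G → G → ℝ) : Prop where
  hP : IsWalkMeasure μ P
  μnn : ∀ x, 0 ≤ μ x
  m : IsMetricFun g
  li : LeftInvariant g
  hF : ∀ x y, P {ω | ∃ n, x * walkPos n ω = y} = ef g x y
  esc : 0 < P escE
  symm : ∀ x, μ x⁻¹ = μ x

theorem mkWG {μ : G → ℝ} {P : Measure (ℕ → G)} [Infinite G] (hP : IsWalkMeasure μ P)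
    (hprob : IsProbDensity μ) (hsymm : IsSymmetric μ) (hgen : GeneratesSupp μ)
    (hm : IsMetricFun (greenDist μ)) (hli : LeftInvariant (greenDist μ)) :
    WG μ P (greenDist μ) := by
  have := hP.1
  have hF : ∀ x y, P {ω | ∃ n, x * walkPos n ω = y} = ef (greenDist μ) x y := by
    intro x y
    have h1 := hit_eq hP hprob.1 x y
    unfold ef greenDist
    rw [neg_neg]
    by_cases hxy : x = y
    · have h2 : {ω : ℕ → G | ∃ n, x * walkPos n ω = y} = univ := by
        ext ω
        simp only [mem_setOf_eq, mem_univ, iff_true]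
        exact ⟨0, by simp [walkPos_zero, hxy]⟩
      rw [h2] at h1 ⊢
      rw [h1]; simp
    · have h2 := hm.pos x y hxy
      unfold greenDist at h2
      have h3 : 0 ≤ hitProb μ x y := by rw [h1]; exact ENNReal.toReal_nonneg
      have h4 : hitProb μ x y ≠ 0 := by
        intro h; rw [h] at h2; simp at h2
      rw [Real.exp_log (lt_of_le_of_ne h3 (Ne.symm h4)), h1, ENNReal.ofReal_toReal (measure_ne_top _ _)]
  refine ⟨hP, hprob.1, hm, hli, hF, ?_, hsymm⟩
  obtain ⟨x, hx, hx1⟩ : ∃ x, μ x ≠ 0 ∧ x ≠ 1 := by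
    by_contra hc
    push Not at hc
    have h1 : Subgroup.closure {g : G | μ g ≠ 0} ≤ ⊥ := by
      rw [Subgroup.closure_le]
      intro y hy
      simpa using hc y hy
    rw [hgen] at h1
    obtain ⟨y, hy⟩ := exists_ne (1 : G)
    exact hy (by simpa using h1 (Subgroup.mem_top y))
  have h1 := markov hP 1 x ({ω | ∃ n, x * walkPos n ω = 1}ᶜ) (meas_ex (fun _ y => x * y = 1)).compl
  have h2 : ({ω : ℕ → G | walkPos 1 ω = x} ∩ sh 1 ⁻¹' {ω | ∃ n, x * walkPos n ω = 1}ᶜ) ⊆ escE := by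
    rintro ω ⟨h, h'⟩ k hk hk'
    apply h'
    refine ⟨k - 1, ?_⟩
    rw [← show walkPos 1 ω = x from h, ← walkPos_add, show 1 + (k - 1) = k by omega, hk']
  refine lt_of_lt_of_le ?_ (measure_mono h2)
  rw [h1, p_one hP, measure_compl (meas_ex (fun _ y => x * y = 1)) (measure_ne_top _ _), hF]
  apply ENNReal.mul_pos
  · simpa using lt_of_le_of_ne (hprob.1 x) (Ne.symm hx)
  · rw [measure_univ]
    apply ne_of_gt
    apply tsub_pos_of_lt
    unfold ef
    rw [ENNReal.ofReal_lt_one, Real.exp_lt_one_iff]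
    have := hm.pos x 1 hx1
    linarith

variable {μ : G → ℝ} {P : Measure (ℕ → G)} {g : G → G → ℝ}

theorem WG.green_le (H : WG μ P g) (x y : G) : Gr P (x⁻¹ * y) * P escE ≤ ef g x y := by
  classical
  have h := lastvisit H.hP x (fun z => if z = y then escE else ∅)
    (fun z => by by_cases h : z = y <;> simp [h, meas_escE]) (by
      intro ω z k hk hω hω'
      by_cases hz : z = y
      · simp only [hz, if_true] at hω hω'
        by_cases hz' : y * walkPos k ω = y
        · exact hω k hk (by simpa using hz')
        · simp [hz'] at hω'
      · simp [hz] at hω)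
  rw [tsum_eq_single y] at h
  · simp only [if_true] at h
    rw [h, ← H.hF]
    apply measure_mono
    rintro ω ⟨n, hn⟩
    refine ⟨n, ?_⟩
    by_contra hc
    simp [hc] at hn
  · intro z hz
    simp [hz]

theorem WG.le_green (H : WG μ P g) (x y : G) : ef g x y ≤ Gr P (x⁻¹ * y) := by
  rw [← H.hF, setOf_exists]
  refine (measure_iUnion_le _).trans (le_of_eq ?_)
  unfold Gr
  apply tsum_congr
  intro n
  congr 1
  ext ω
  simp [eq_inv_mul_iff_mul_eq]

theorem ef_le_one (hm : IsMetricFun g) (x y : G) : ef g x y ≤ 1 := by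
  unfold ef
  rw [ENNReal.ofReal_le_one, Real.exp_le_one_iff]
  have := hm.nonneg x y
  linarith

theorem WG.green_le' (H : WG μ P g) (x y : G) : Gr P (x⁻¹ * y) ≤ (P escE)⁻¹ * ef g x y := by
  have := H.hP.1
  rw [← ENNReal.div_eq_inv_mul, ENNReal.le_div_iff_mul_le (Or.inl H.esc.ne') (Or.inl (measure_ne_top _ _))]
  exact H.green_le x y

theorem WG.green_ne_top (H : WG μ P g) (y : G) : Gr P y ≠ ⊤ := by
  have h := H.green_le' 1 y
  rw [inv_one, one_mul] at h
  refine ne_top_of_le_ne_top ?_ h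
  exact ENNReal.mul_ne_top (ENNReal.inv_ne_top.2 H.esc.ne') ENNReal.ofReal_ne_top

theorem WG.escape (H : WG μ P g) (x : G) {A : Set G} (hA : A.Finite) :
    ∀ᵐ ω ∂P, ∀ᶠ n in atTop, x * walkPos n ω ∉ A := by
  refine ae_eventually_notMem (s := fun n => {ω | x * walkPos n ω ∈ A}) ?_
  have h1 : ∀ n, P {ω | x * walkPos n ω ∈ A} ≤ ∑ z ∈ hA.toFinset, P {ω | walkPos n ω = x⁻¹ * z} := by
    intro n
    refine le_trans (measure_mono ?_) (measure_biUnion_finset_le _ _)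
    intro ω hω
    simp only [mem_iUnion]
    exact ⟨x * walkPos n ω, by simpa using hω, by simp⟩
  refine ne_top_of_le_ne_top ?_ (ENNReal.tsum_le_tsum h1)
  rw [Summable.tsum_finsetSum (fun _ _ => ENNReal.summable)]
  exact (ENNReal.sum_lt_top.2 fun z _ => (H.green_ne_top _).lt_top).ne

open scoped Classical in
/-- last exit event from A -/
def lastE (A : Set G) (z : G) : Set (ℕ → G) :=
  if z ∈ A then {ω | ∀ k, 1 ≤ k → z * walkPos k ω ∉ A} else ∅

theorem meas_lastE (A : Set G) (z : G) : MeasurableSet (lastE A z) := by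
  unfold lastE
  split_ifs
  · exact meas_all (fun k y => 1 ≤ k → z * y ∉ A)
  · exact MeasurableSet.empty

theorem WG.lastE_sum (H : WG μ P g) (A : Set G) (x : G) :
    ∑' z, Gr P (x⁻¹ * z) * P (lastE A z) = P {ω | ∃ n, sh n ω ∈ lastE A (x * walkPos n ω)} := by
  apply lastvisit H.hP x _ (meas_lastE A)
  intro ω z k hk h1 h2
  unfold lastE at h1 h2
  split_ifs at h1 with hz
  · have := h1 k hk
    simp [this] at h2
  · exact h1

theorem WG.hit_finite (H : WG μ P g) {A : Set G} (hA : A.Finite) (x : G) :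
    P {ω | ∃ n, x * walkPos n ω ∈ A} ≤ ∑' z, Gr P (x⁻¹ * z) * P (lastE A z) := by
  rw [H.lastE_sum]
  apply measure_mono_ae
  filter_upwards [H.escape x hA] with ω hω hex
  obtain ⟨n0, hn0⟩ := eventually_atTop.1 hω
  obtain ⟨n, hn⟩ := hex
  classical
  have hb : ∃ n, ∀ m, n < m → x * walkPos m ω ∉ A := ⟨n0, fun m hm => hn0 m hm.le⟩
  by_cases hz : ∃ n, (∀ m, n < m → x * walkPos m ω ∉ A) ∧ x * walkPos n ω ∈ A
  · obtain ⟨N, h1, h2⟩ := hz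
    refine ⟨N, ?_⟩
    unfold lastE
    rw [if_pos h2]
    intro k hk
    rw [mul_assoc, ← walkPos_add]
    exact h1 _ (by omega)
  · exfalso
    push Not at hz
    have : ∀ j, ∀ m, n0 - j < m → x * walkPos m ω ∉ A := by
      intro j
      induction j with
      | zero => exact fun m hm => hn0 m (by omega)
      | succ j ih =>
        intro m hm
        by_cases h : n0 - j < m
        · exact ih m h
        · have : m = n0 - j := by omega
          rw [this]
          exact hz _ ih
    by_cases h : n = 0
    · exact hz 0 (fun m hm => this n0 m (by omega)) (h ▸ hn)
    · exact this n0 n (by omega) hn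

theorem ef_le_mul {x y z : G} {c : ℝ} (h : g x y + g y z - c ≤ g x z) :
    ef g x z ≤ ENNReal.ofReal (Real.exp c) * ef g x y * ef g y z := by
  unfold ef
  rw [← ENNReal.ofReal_mul (Real.exp_pos _).le, ← ENNReal.ofReal_mul (by positivity)]
  apply ENNReal.ofReal_le_ofReal
  rw [← Real.exp_add, ← Real.exp_add]
  apply Real.exp_le_exp.2
  linarith

theorem WG.P1 (H : WG μ P g) (A : Set G) (x y : G) (c : ℝ)
    (hA : ∀ z ∈ A, g x y + g y z - c ≤ g x z) :
    P {ω | ∃ n, x * walkPos n ω ∈ A} ≤ (P escE)⁻¹ * ENNReal.ofReal (Real.exp c) * ef g x y := by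
  have := H.hP.1
  have hfin : ∀ s : Finset G, P {ω | ∃ n, x * walkPos n ω ∈ A ∩ s} ≤
      (P escE)⁻¹ * ENNReal.ofReal (Real.exp c) * ef g x y := by
    intro s
    have hf : (A ∩ s).Finite := s.finite_toSet.inter_of_right _
    refine (H.hit_finite hf x).trans ?_
    calc ∑' z, Gr P (x⁻¹ * z) * P (lastE (A ∩ s) z)
        ≤ ∑' z, (P escE)⁻¹ * ENNReal.ofReal (Real.exp c) * ef g x y *
            (Gr P (y⁻¹ * z) * P (lastE (A ∩ s) z)) := by
          apply ENNReal.tsum_le_tsum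
          intro z
          by_cases hz : z ∈ A ∩ s
          · rw [← mul_assoc]
            refine mul_le_mul_left ?_ _
            refine (H.green_le' x z).trans ?_
            rw [mul_assoc, mul_assoc]
            refine mul_le_mul_right ?_ _
            refine (ef_le_mul (hA z hz.1)).trans ?_
            rw [mul_assoc]
            exact mul_le_mul_right (mul_le_mul_right (H.le_green y z) _) _
          · simp [lastE, hz]
      _ ≤ _ := by
          rw [ENNReal.tsum_mul_left, H.lastE_sum]
          exact mul_le_of_le_one_right' prob_le_one
  have hU : {ω : ℕ → G | ∃ n, x * walkPos n ω ∈ A} =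
      ⋃ s : Finset G, {ω | ∃ n, x * walkPos n ω ∈ A ∩ s} := by
    ext ω
    simp only [mem_setOf_eq, mem_iUnion]
    constructor
    · rintro ⟨n, hn⟩
      exact ⟨{x * walkPos n ω}, n, hn, by simp⟩
    · rintro ⟨s, n, hn, _⟩
      exact ⟨n, hn⟩
  rw [hU, Directed.measure_iUnion]
  · exact iSup_le hfin
  · apply Monotone.directed_le
    intro s t hst ω
    rintro ⟨n, h1, h2⟩
    exact ⟨n, h1, hst h2⟩

end Green

end

section
open Filter MeasureTheory Topology Metric Set
open scoped ENNReal

section Green2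

variable [Countable G] [MeasurableSpace G] [MeasurableSingletonClass G]
variable {μ : G → ℝ} {P : Measure (ℕ → G)} {g : G → G → ℝ}

theorem WG.psymm (H : WG μ P g) (n : ℕ) (x : G) :
    P {ω | walkPos n ω = x⁻¹} = P {ω | walkPos n ω = x} := by
  induction n generalizing x with
  | zero => simp [walkPos_zero, eq_comm (a := (1:G))]
  | succ n ih =>
    rw [p_add H.hP n 1, add_comm n 1, p_add H.hP 1 n, ← (Equiv.mulLeft x⁻¹).tsum_eq]
    apply tsum_congr
    intro z
    simp only [Equiv.coe_mulLeft]
    rw [p_one H.hP, p_one H.hP, mul_comm, show (x⁻¹ * z)⁻¹ * x⁻¹ = z⁻¹ by group, H.symm, ← ih,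
      show (x⁻¹ * z)⁻¹ = z⁻¹ * x by group]

theorem WG.Gr_symm (H : WG μ P g) (x : G) : Gr P x⁻¹ = Gr P x := by
  unfold Gr
  exact tsum_congr fun n => H.psymm n x

theorem WG.p_even (H : WG μ P g) (n : ℕ) (x : G) :
    P {ω | walkPos (n + n) ω = x} ≤ 2 * P {ω | walkPos (n + n) ω = 1} := by
  have e1 : P {ω | walkPos (n + n) ω = 1} = ∑' y, P {ω | walkPos n ω = y} * P {ω | walkPos n ω = y} := by
    rw [p_add H.hP]
    apply tsum_congr
    intro y
    rw [mul_one, H.psymm]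
  have e2 : P {ω | walkPos (n + n) ω = 1} =
      ∑' y, P {ω | walkPos n ω = y⁻¹ * x} * P {ω | walkPos n ω = y⁻¹ * x} := by
    rw [e1, ← (Equiv.mulLeft x⁻¹).tsum_eq]
    apply tsum_congr
    intro y
    simp only [Equiv.coe_mulLeft]
    rw [← H.psymm n (x⁻¹ * y), show (x⁻¹ * y)⁻¹ = y⁻¹ * x by group]
  rw [two_mul]
  nth_rw 2 [e1]
  rw [e2, ← ENNReal.tsum_add, p_add H.hP]
  refine ENNReal.tsum_le_tsum fun y => ?_
  rcases le_total (P {ω | walkPos n ω = y}) (P {ω | walkPos n ω = y⁻¹ * x}) with h | h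
  · exact (mul_le_mul_left h _).trans le_self_add
  · exact (mul_le_mul_right h _).trans le_add_self

theorem WG.p_bound (H : WG μ P g) (n : ℕ) (x : G) :
    P {ω | walkPos n ω = x} ≤ 2 * P {ω | walkPos (n / 2 + n / 2) ω = 1} := by
  have := H.hP.1
  rcases Nat.even_or_odd' n with ⟨k, rfl | rfl⟩
  · rw [show 2 * k / 2 = k by omega, two_mul k]
    exact H.p_even k x
  · rw [show (2 * k + 1) / 2 = k by omega, show 2 * k + 1 = 1 + (k + k) by omega, p_add H.hP]
    calc ∑' y, P {ω | walkPos 1 ω = y} * P {ω | walkPos (k + k) ω = y⁻¹ * x}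
        ≤ ∑' y, P {ω | walkPos 1 ω = y} * (2 * P {ω | walkPos (k + k) ω = 1}) :=
          ENNReal.tsum_le_tsum fun y => mul_le_mul_right (H.p_even k _) _
      _ = _ := by rw [ENNReal.tsum_mul_right, tsum_pos, one_mul]

theorem WG.proper (H : WG μ P g) (R : ℝ) : {x | g 1 x ≤ R}.Finite := by
  have := H.hP.1
  set b : ℕ → ℝ≥0∞ := fun n => 2 * P {ω : ℕ → G | walkPos (n / 2 + n / 2) ω = 1} with hb
  have hbs : ∑' n, b n ≠ ⊤ := by
    have hev : ∑' n, 2 * P {ω : ℕ → G | walkPos (n + n) ω = 1} ≠ ⊤ := by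
      rw [ENNReal.tsum_mul_left]
      refine ENNReal.mul_ne_top (by simp) (ne_top_of_le_ne_top (H.green_ne_top 1) ?_)
      unfold Gr
      exact ENNReal.tsum_comp_le_tsum_of_injective (f := fun n : ℕ => n + n)
        (fun a c h => by simp at h; omega) (fun n => P {ω : ℕ → G | walkPos n ω = 1})
    rw [← tsum_even_add_odd ENNReal.summable ENNReal.summable]
    have e1 : ∀ k, b (2 * k) = 2 * P {ω : ℕ → G | walkPos (k + k) ω = 1} := by
      intro k; simp only [hb]; rw [show 2 * k / 2 = k by omega]
    have e2 : ∀ k, b (2 * k + 1) = 2 * P {ω : ℕ → G | walkPos (k + k) ω = 1} := by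
      intro k; simp only [hb]; rw [show (2 * k + 1) / 2 = k by omega]
    simp only [e1, e2]
    exact ENNReal.add_ne_top.2 ⟨hev, hev⟩
  set ε : ℝ≥0∞ := ENNReal.ofReal (Real.exp (-R)) with hε
  have hε0 : 0 < ε := by rw [hε, ENNReal.ofReal_pos]; exact Real.exp_pos _
  obtain ⟨i, hi⟩ := ((ENNReal.tendsto_sum_nat_add b hbs).eventually (gt_mem_nhds (ENNReal.half_pos hε0.ne'))).exists
  have hfin : {x | ε / 2 ≤ ∑ n ∈ Finset.range i, P {ω : ℕ → G | walkPos n ω = x}}.Finite := by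
    refine ENNReal.finite_const_le_of_tsum_ne_top ?_ (ENNReal.half_pos hε0.ne').ne'
    rw [Summable.tsum_finsetSum (fun _ _ => ENNReal.summable)]
    simp [tsum_pos]
  refine hfin.subset ?_
  intro x hx
  by_contra hlt
  simp only [mem_setOf_eq, not_le] at hlt hx
  have h1 := H.le_green 1 x
  have h2 : ε ≤ ef g 1 x := ENNReal.ofReal_le_ofReal (Real.exp_le_exp.2 (by linarith))
  have h3 : Gr P x < ε := by
    unfold Gr
    have e3 : ∑' n, P {ω : ℕ → G | walkPos n ω = x} = ∑ n ∈ Finset.range i, P {ω : ℕ → G | walkPos n ω = x}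
        + ∑' k, P {ω : ℕ → G | walkPos (k + i) ω = x} :=
      (ENNReal.summable.sum_add_tsum_nat_add' (f := fun n => P {ω : ℕ → G | walkPos n ω = x})).symm
    have h4 : ∑' k, P {ω : ℕ → G | walkPos (k + i) ω = x} ≤ ∑' k, b (k + i) :=
      ENNReal.tsum_le_tsum fun k => H.p_bound _ x
    rw [e3, ← ENNReal.add_halves ε]
    exact ENNReal.add_lt_add hlt (lt_of_le_of_lt h4 hi)
  simp only [inv_one, one_mul] at h1
  exact absurd (h2.trans h1) (not_le.2 h3)

end Green2

end

section
open Filter MeasureTheory Topology Metric Set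
open scoped ENNReal

section Moment

theorem gromov_li {d : G → G → ℝ} (h : LeftInvariant d) (a w x y : G) :
    gromov d (a * w) (a * x) (a * y) = gromov d w x y := by
  unfold gromov; rw [h, h, h]

variable [Countable G] [MeasurableSpace G] [MeasurableSingletonClass G]
variable {μ : G → ℝ} {P : Measure (ℕ → G)} {g : G → G → ℝ} {S : Finset G} {δ A : ℝ}

theorem WG.P3 (H : WG μ P g) (N : Nice S g δ A) :
    ∃ C : ℝ, 1 ≤ C ∧ ∀ y r, P {ω | ∃ m, r ≤ gromov g 1 (walkPos m ω) y} ≤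
      ENNReal.ofReal (C * Real.exp (-r)) := by
  have := H.hP.1
  have hA := N.hA
  have hδ := N.hδ
  obtain ⟨τ, h0, h⟩ := N.interp
  set c := 2 * (A + τ + δ) with hc
  set K := (P (escE (G := G)))⁻¹ * ENNReal.ofReal (Real.exp c) with hK
  have hKt : K ≠ ⊤ := ENNReal.mul_ne_top (ENNReal.inv_ne_top.2 H.esc.ne') ENNReal.ofReal_ne_top
  refine ⟨max 1 K.toReal, le_max_left _ _, fun y r => ?_⟩
  by_cases hr0 : r < 0
  · refine prob_le_one.trans ?_
    rw [ENNReal.one_le_ofReal]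
    have h1 : 1 ≤ Real.exp (-r) := Real.one_le_exp (by linarith)
    nlinarith [le_max_left 1 K.toReal]
  push Not at hr0
  by_cases hr : g 1 y < r
  · have : {ω : ℕ → G | ∃ m, r ≤ gromov g 1 (walkPos m ω) y} = ∅ := by
      ext ω
      simp only [mem_setOf_eq, mem_empty_iff_false, iff_false, not_exists, not_le]
      intro m
      exact (gromov_le_right H.m 1 (walkPos m ω) y).trans_lt hr
    rw [this]; simp
  push Not at hr
  obtain ⟨z, hz1, hz2, hz3⟩ := h 1 y r hr0 hr
  have hP1 := H.P1 {w | r ≤ gromov g 1 w y} 1 z c (by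
    intro w hw
    have hw : r ≤ gromov g 1 w y := hw
    have h1 := gromov_add H.m 1 z y
    have h2 := gromov_add H.m 1 z w
    have h3 := N.hyp 1 y z w
    rw [gromov_comm H.m 1 y z, gromov_comm H.m 1 y w] at h3
    have h4 : r - τ ≤ min (gromov g 1 z y) (gromov g 1 w y) := le_min (by linarith) (by linarith)
    have h5 : gromov g z 1 w ≤ A + τ + δ := by linarith
    have e1 := H.m.symm z w
    unfold gromov at h5
    linarith)
  simp only [one_mul, mem_setOf_eq] at hP1
  refine hP1.trans ?_
  rw [← hK, ← ENNReal.ofReal_toReal hKt]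
  unfold ef
  rw [← ENNReal.ofReal_mul ENNReal.toReal_nonneg]
  apply ENNReal.ofReal_le_ofReal
  rw [ENNReal.toReal_ofReal ENNReal.toReal_nonneg]
  gcongr
  · exact le_max_right _ _

theorem tail_mean (P : Measure (ℕ → G)) (C : ℝ) (f : (ℕ → G) → ℝ)
    (hf : ∀ k : ℕ, MeasurableSet {ω | (k:ℝ) ≤ f ω})
    (h : ∀ k : ℕ, P {ω | (k:ℝ) ≤ f ω} ≤ ENNReal.ofReal (C * Real.exp (-k))) :
    ∫⁻ ω, ENNReal.ofReal (f ω) ∂P ≤ ∑' k : ℕ, ENNReal.ofReal (C * Real.exp (-k)) := by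
  calc ∫⁻ ω, ENNReal.ofReal (f ω) ∂P
      ≤ ∫⁻ ω, ∑' k : ℕ, {ω | (k:ℝ) ≤ f ω}.indicator 1 ω ∂P := by
        apply lintegral_mono
        intro ω
        by_cases h0 : f ω < 0
        · simp [ENNReal.ofReal_of_nonpos h0.le]
        push Not at h0
        refine le_trans ?_ (ENNReal.sum_le_tsum (Finset.range (⌊f ω⌋₊ + 1)))
        have : ∀ k ∈ Finset.range (⌊f ω⌋₊ + 1), {ω : ℕ → G | (k:ℝ) ≤ f ω}.indicator (1 : (ℕ → G) → ℝ≥0∞) ω = 1 := by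
          intro k hk
          apply indicator_of_mem
          have : k ≤ ⌊f ω⌋₊ := by simpa [Nat.lt_succ_iff] using hk
          exact (Nat.le_floor_iff h0).1 this
        rw [Finset.sum_congr rfl this]
        simp only [Finset.sum_const, Finset.card_range, nsmul_eq_mul, mul_one]
        rw [← ENNReal.ofReal_natCast]
        apply ENNReal.ofReal_le_ofReal
        push_cast
        exact (Nat.lt_floor_add_one _).le
    _ = ∑' k : ℕ, P {ω | (k:ℝ) ≤ f ω} := by
        rw [lintegral_tsum]
        · apply tsum_congr
          intro k
          rw [lintegral_indicator_one (hf k)]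
        · intro k
          exact (measurable_one.indicator (hf k)).aemeasurable
    _ ≤ _ := ENNReal.tsum_le_tsum h

theorem tailC_ne_top (C : ℝ) (hC : 0 ≤ C) : ∑' k : ℕ, ENNReal.ofReal (C * Real.exp (-k)) ≠ ⊤ := by
  have hs : Summable fun k : ℕ => C * Real.exp (-(k:ℝ)) := by
    apply Summable.mul_left
    exact Real.summable_exp_neg_nat
  rw [← ENNReal.ofReal_tsum_of_nonneg (fun k => by positivity) hs]
  exact ENNReal.ofReal_ne_top

def jE (g : G → G → ℝ) (τ δ : ℝ) (y u : G) : Set (ℕ → G) :=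
  {ω | ∀ m, gromov g 1 y (y * u) ≤ τ ∧ τ + δ < gromov g 1 (y * u * walkPos m ω) (y * u)}

theorem meas_jE (g : G → G → ℝ) (τ δ : ℝ) (y u : G) : MeasurableSet (jE g τ δ y u) :=
  meas_all (fun _ x => gromov g 1 y (y * u) ≤ τ ∧ τ + δ < gromov g 1 (y * u * x) (y * u))

def jV (g : G → G → ℝ) (τ δ : ℝ) (y : G) : Set (ℕ → G) := {ω | sh 1 ω ∈ jE g τ δ y (walkPos 1 ω)}

theorem WG.jump_sum (H : WG μ P g) (N : Nice S g δ A) (τ : ℝ) :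
    ∑' y, P (jV g τ δ y) ≤ (P (escE (G := G)))⁻¹ * ENNReal.ofReal (Real.exp (2 * (τ + δ))) := by
  have := H.hP.1
  have hmeas : ∀ y, MeasurableSet (jV g τ δ y) := fun y => meas_shW 1 _ (meas_jE g τ δ y)
  set K := (P (escE (G := G)))⁻¹ * ENNReal.ofReal (Real.exp (2 * (τ + δ))) with hK
  have hx : ∀ x, ∑' y, Gr P (x⁻¹ * y) * P (jV g τ δ y) ≤ K * Gr P x := by
    intro x
    rw [lastvisit H.hP x _ hmeas]
    · have hP1 := H.P1 {z | gromov g 1 x z ≤ τ + δ} x 1 (2 * (τ + δ)) (by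
        intro z hz
        have hz : gromov g 1 x z ≤ τ + δ := hz
        have := H.m.symm z 1
        unfold gromov at hz
        linarith)
      have h2 : ef g x 1 ≤ Gr P x := by
        have := H.le_green x 1
        rwa [mul_one, H.Gr_symm] at this
      refine le_trans (measure_mono ?_) (hP1.trans (mul_le_mul_right h2 _))
      rintro ω ⟨n, hn⟩
      have h1 := (hn 0).1
      have h3 := N.hyp 1 x (x * walkPos n ω) (x * walkPos n ω * walkPos 1 (sh n ω))
      have h4 : min (gromov g 1 x (x * walkPos n ω)) (gromov g 1 x (x * walkPos n ω * walkPos 1 (sh n ω))) ≤ τ + δ := by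
        linarith
      rcases min_le_iff.1 h4 with h5 | h5
      · exact ⟨n, h5⟩
      · refine ⟨n + 1, ?_⟩
        rw [walkPos_add, ← mul_assoc]
        exact h5
    · intro ω y k hk h1 h2
      have key : ∀ k, 1 ≤ k → τ + δ < gromov g 1 (y * walkPos 1 ω) (y * walkPos k ω) := by
        intro k hk
        obtain ⟨j, rfl⟩ := Nat.exists_eq_add_of_le hk
        have := (h1 j).2
        rw [mul_assoc, ← walkPos_add, gromov_comm H.m] at this
        exact this
      have h3 := (h2 0).1
      rw [mul_assoc, ← walkPos_add] at h3
      have h4 := N.hyp 1 (y * walkPos 1 ω) (y * walkPos k ω) (y * walkPos (k + 1) ω)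
      have h5 := lt_min (key k hk) (key (k + 1) (by omega))
      linarith
  rw [ENNReal.tsum_eq_iSup_sum]
  refine iSup_le fun s => ?_
  have hW : (s : Set G).Finite := s.finite_toSet
  calc ∑ y ∈ s, P (jV g τ δ y)
      ≤ ∑ y ∈ s, P (jV g τ δ y) * ∑' x, Gr P (y⁻¹ * x) * P (lastE (s : Set G) x) := by
        refine Finset.sum_le_sum fun y hy => ?_
        have h1 := H.hit_finite hW y
        have h2 : {ω : ℕ → G | ∃ n, y * walkPos n ω ∈ (s : Set G)} = univ := by
          ext ω; simp only [mem_setOf_eq, mem_univ, iff_true]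
          exact ⟨0, by simpa [walkPos_zero] using hy⟩
        rw [h2, measure_univ] at h1
        calc P (jV g τ δ y) = P (jV g τ δ y) * 1 := (mul_one _).symm
          _ ≤ _ := mul_le_mul_right h1 _
    _ ≤ ∑' y, P (jV g τ δ y) * ∑' x, Gr P (y⁻¹ * x) * P (lastE (s : Set G) x) :=
        ENNReal.sum_le_tsum s
    _ = ∑' x, P (lastE (s : Set G) x) * ∑' y, Gr P (x⁻¹ * y) * P (jV g τ δ y) := by
        simp_rw [← ENNReal.tsum_mul_left]
        rw [ENNReal.tsum_comm]
        refine tsum_congr fun x => tsum_congr fun y => ?_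
        rw [← H.Gr_symm (y⁻¹ * x), show (y⁻¹ * x)⁻¹ = x⁻¹ * y by group]
        ring
    _ ≤ ∑' x, P (lastE (s : Set G) x) * (K * Gr P x) :=
        ENNReal.tsum_le_tsum fun x => mul_le_mul_right (hx x) _
    _ = K * ∑' x, Gr P ((1:G)⁻¹ * x) * P (lastE (s : Set G) x) := by
        rw [← ENNReal.tsum_mul_left]
        refine tsum_congr fun x => ?_
        rw [inv_one, one_mul]
        ring
    _ ≤ K := by
        rw [H.lastE_sum]
        calc _ ≤ K * 1 := mul_le_mul_right prob_le_one _
          _ = K := mul_one _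

open scoped Classical in
theorem WG.moment (H : WG μ P g) (N : Nice S g δ A) :
    ∑' u, P {ω | walkPos 1 ω = u} * ENNReal.ofReal (g 1 u) ≠ ⊤ := by
  have := H.hP.1
  have hδ := N.hδ
  have hA := N.hA
  obtain ⟨τ, hτ, hrul⟩ := N.ruler
  obtain ⟨C, hC1, hP3⟩ := H.P3 N
  obtain ⟨R, hR⟩ : ∃ R, ∀ r, R ≤ r → C * Real.exp (-r) ≤ 1 / 2 := by
    refine ⟨Real.log (2 * C), fun r hr => ?_⟩
    have h1 : Real.exp (-r) ≤ Real.exp (-(Real.log (2 * C))) := Real.exp_le_exp.2 (by linarith)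
    rw [Real.exp_neg (Real.log _), Real.exp_log (by linarith)] at h1
    calc C * Real.exp (-r) ≤ C * (2 * C)⁻¹ := by gcongr
      _ = 1 / 2 := by field_simp
  have hinv : ∀ z, g 1 z⁻¹ = g 1 z := by
    intro z
    have := H.li z 1 z⁻¹
    rw [mul_one, mul_inv_cancel] at this
    rw [← this, H.m.symm]
  have hlow : ∀ y u, gromov g 1 y (y * u) ≤ τ → R + τ + δ ≤ g 1 (y * u) → 1 / 2 ≤ P (jE g τ δ y u) := by
    intro y u hcr hbig
    set z := y * u with hz
    have h1 : (jE g τ δ y u)ᶜ ⊆ {ω | ∃ m, g 1 z - τ - δ ≤ gromov g 1 (walkPos m ω) z⁻¹} := by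
      intro ω hω
      simp only [jE, mem_compl_iff, mem_setOf_eq, not_forall, not_and, not_lt] at hω
      obtain ⟨m, hm⟩ := hω
      refine ⟨m, ?_⟩
      have h2 := hm hcr
      rw [← hz] at h2
      have h3 := gromov_li H.li z⁻¹ 1 (z * walkPos m ω) z
      rw [mul_one, inv_mul_cancel_left, inv_mul_cancel] at h3
      have h4 := gromov_add H.m 1 z⁻¹ (walkPos m ω)
      rw [gromov_comm H.m 1, gromov_comm H.m z⁻¹, h3, hinv] at h4
      linarith
    have h2 : P (jE g τ δ y u)ᶜ ≤ 1 / 2 := by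
      refine (measure_mono h1).trans ((hP3 _ _).trans ?_)
      refine (ENNReal.ofReal_le_ofReal (hR _ (by linarith))).trans ?_
      rw [ENNReal.ofReal_div_of_pos (by norm_num)]
      simp
    rw [prob_compl_eq_one_sub (meas_jE g τ δ y u)] at h2
    have h5 := tsub_le_iff_right.1 h2
    have h6 : (1:ℝ≥0∞) / 2 + 1 / 2 = 1 := ENNReal.add_halves 1
    have h7 : (1:ℝ≥0∞) / 2 + 1 / 2 ≤ 1 / 2 + P (jE g τ δ y u) := by rw [h6]; exact h5
    exact (ENNReal.add_le_add_iff_left (by simp)).1 h7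
  have hball := H.proper (R + τ + δ)
  set p : G → ℝ≥0∞ := fun u => P {ω | walkPos 1 ω = u} with hp
  -- the main double sum
  have hD : ∑' u, ∑' y, p u * (if gromov g 1 y (y * u) ≤ τ then 1 else 0) ≠ ⊤ := by
    have hle : ∀ y u, p u * (if gromov g 1 y (y * u) ≤ τ then 1 else 0) ≤
        2 * (p u * P (jE g τ δ y u)) + p u * (if g 1 (y * u) ≤ R + τ + δ then 1 else 0) := by
      intro y u
      by_cases h1 : gromov g 1 y (y * u) ≤ τ
      · by_cases h2 : g 1 (y * u) ≤ R + τ + δ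
        · simp only [h1, h2, if_true]; exact le_add_self
        · simp only [h1, if_true]
          push Not at h2
          have h3 := hlow y u h1 h2.le
          refine le_trans ?_ le_self_add
          calc p u * 1 = 2 * (p u * (1 / 2)) := by
                rw [mul_left_comm, one_div, ENNReal.mul_inv_cancel] <;> simp
            _ ≤ _ := by gcongr
      · simp [h1]
    have h1 : ∑' y, ∑' u, 2 * (p u * P (jE g τ δ y u)) ≠ ⊤ := by
      have e : ∀ y, ∑' u, 2 * (p u * P (jE g τ δ y u)) = 2 * P (jV g τ δ y) := by
        intro y
        rw [ENNReal.tsum_mul_left]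
        unfold jV
        rw [markov_fam H.hP 1 _ (meas_jE g τ δ y)]
      simp_rw [e]
      rw [ENNReal.tsum_mul_left]
      refine ENNReal.mul_ne_top (by simp) (ne_top_of_le_ne_top ?_ (H.jump_sum N τ))
      exact ENNReal.mul_ne_top (ENNReal.inv_ne_top.2 H.esc.ne') ENNReal.ofReal_ne_top
    have h2 : ∑' y, ∑' u, p u * (if g 1 (y * u) ≤ R + τ + δ then 1 else 0) ≠ ⊤ := by
      rw [ENNReal.tsum_comm]
      have e : ∀ u, ∑' y, p u * (if g 1 (y * u) ≤ R + τ + δ then 1 else 0) =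
          p u * ∑' y, (if g 1 y ≤ R + τ + δ then 1 else 0) := by
        intro u
        rw [ENNReal.tsum_mul_left]
        congr 1
        exact (Equiv.mulRight u).tsum_eq (fun y => (if g 1 y ≤ R + τ + δ then 1 else 0 : ℝ≥0∞))
      simp_rw [e]
      rw [ENNReal.tsum_mul_right]
      refine ENNReal.mul_ne_top (by rw [hp, tsum_pos]; simp) ?_
      rw [tsum_eq_sum (s := hball.toFinset)]
      · exact (ENNReal.sum_lt_top.2 fun y _ => by split_ifs <;> simp).ne
      · intro y hy
        have : ¬ g 1 y ≤ R + τ + δ := by simpa using hy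
        simp [this]
    rw [ENNReal.tsum_comm]
    refine ne_top_of_le_ne_top (ENNReal.add_ne_top.2 ⟨h1, h2⟩) ?_
    rw [← ENNReal.tsum_add]
    refine ENNReal.tsum_le_tsum fun y => ?_
    rw [← ENNReal.tsum_add]
    exact ENNReal.tsum_le_tsum fun u => hle y u
  -- counting
  have hcount : ∀ u, (wordLength S u : ℝ≥0∞) ≤ ∑' y, (if gromov g 1 y (y * u) ≤ τ then 1 else 0) := by
    intro u
    obtain ⟨q, hq0, hqn, hq⟩ := exists_geod N.gen 1 u
    rw [inv_one, one_mul] at hqn hq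
    have hinj : Set.InjOn (fun k => (q k)⁻¹) (Finset.range (wordLength S u)) := by
      intro i hi j hj hij
      have hij : q i = q j := by simpa using hij
      simp only [Finset.coe_range, mem_Iio] at hi hj
      by_contra hne
      rcases lt_or_gt_of_ne hne with h | h
      · have := hq i j h.le hj.le
        rw [hij, inv_mul_cancel, wl_one] at this
        omega
      · have := hq j i h.le hi.le
        rw [hij, inv_mul_cancel, wl_one] at this
        omega
    refine le_trans ?_ (ENNReal.sum_le_tsum ((Finset.range (wordLength S u)).image (fun k => (q k)⁻¹)))
    rw [Finset.sum_image hinj, Finset.sum_congr rfl (g := fun _ => 1)]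
    · simp
    · intro k hk
      have hk : k < wordLength S u := by simpa using hk
      have h1 := hrul _ q hq k hk.le
      rw [hq0, hqn] at h1
      rw [if_pos]
      rw [← gromov_li H.li (q k), mul_one, mul_inv_cancel, mul_inv_cancel_left]
      exact h1
  have hfin : ENNReal.ofReal A * ∑' u, ∑' y, p u * (if gromov g 1 y (y * u) ≤ τ then 1 else 0) ≠ ⊤ :=
    ENNReal.mul_ne_top ENNReal.ofReal_ne_top hD
  refine ne_top_of_le_ne_top hfin ?_
  rw [← ENNReal.tsum_mul_left]
  refine ENNReal.tsum_le_tsum fun u => ?_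
  rw [ENNReal.tsum_mul_left, mul_left_comm]
  refine mul_le_mul_right ?_ _
  refine le_trans ?_ (mul_le_mul_right (hcount u) _)
  have := N.up 1 u
  rw [inv_one, one_mul] at this
  rw [← ENNReal.ofReal_natCast, ← ENNReal.ofReal_mul (by linarith)]
  exact ENNReal.ofReal_le_ofReal this

end Moment

end

section
open Filter MeasureTheory Topology Metric Set
open scoped ENNReal

section Entropy

variable [Countable G] [MeasurableSpace G] [MeasurableSingletonClass G]
variable {μ : G → ℝ} {P : Measure (ℕ → G)} {g : G → G → ℝ} {S : Finset G} {δ A : ℝ}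

theorem exists_small (C e : ℝ) (hC : 0 ≤ C) (he : 0 < e) : ∃ R, 0 ≤ R ∧ ∀ r, R ≤ r → C * Real.exp (-r) ≤ e := by
  refine ⟨C / e, by positivity, fun r hr => ?_⟩
  have h1 : r + 1 ≤ Real.exp r := Real.add_one_le_exp r
  rw [Real.exp_neg, ← div_eq_mul_inv, div_le_iff₀ (Real.exp_pos r)]
  rw [div_le_iff₀ he] at hr
  nlinarith

def gE (g : G → G → ℝ) (r : ℝ) (x : G) : Set (ℕ → G) :=
  {ω | ∀ m, gromov g 1 (walkPos m ω) x⁻¹ < r}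

theorem meas_gE (g : G → G → ℝ) (r : ℝ) (x : G) : MeasurableSet (gE g r x) :=
  meas_all (fun _ y => gromov g 1 y x⁻¹ < r)

theorem WG.gE_compl (H : WG μ P g) {C r : ℝ} (x : G)
    (hP3 : ∀ y r, P {ω | ∃ m, r ≤ gromov g 1 (walkPos m ω) y} ≤ ENNReal.ofReal (C * Real.exp (-r))) :
    P (gE g r x)ᶜ ≤ ENNReal.ofReal (C * Real.exp (-r)) := by
  refine le_trans (measure_mono ?_) (hP3 x⁻¹ r)
  intro ω hω
  simpa [gE] using hω

theorem WG.inv (H : WG μ P g) (z : G) : g 1 z⁻¹ = g 1 z := by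
  have := H.li z 1 z⁻¹
  rw [mul_one, mul_inv_cancel] at this
  rw [← this, H.m.symm]

theorem WG.good_dist (H : WG μ P g) {r : ℝ} {x : G} {ω : ℕ → G} (h : ω ∈ gE g r x) (m : ℕ) :
    g 1 x + g x (x * walkPos m ω) - 2 * r ≤ g 1 (x * walkPos m ω) := by
  have h1 := h m
  have h2 := H.li x⁻¹ 1 (x * walkPos m ω)
  have h3 := H.li x 1 (walkPos m ω)
  rw [mul_one, inv_mul_cancel_left] at h2
  rw [mul_one] at h3
  unfold gromov at h1
  have e1 := H.m.symm x⁻¹ 1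
  have e2 := H.m.symm (walkPos m ω) 1
  have e3 := H.m.symm (walkPos m ω) x⁻¹
  have e4 := H.inv x
  linarith

open scoped Classical in
theorem WG.annulus (H : WG μ P g) (N : Nice S g δ A) :
    ∃ C : ℝ≥0∞, C ≠ ⊤ ∧ ∀ R : ℝ,
      ∑' x, (if R ≤ g 1 x ∧ g 1 x ≤ R + 1 then ef g 1 x else 0) ≤ C := by
  have := H.hP.1
  obtain ⟨C, hC1, hP3⟩ := H.P3 N
  have he : 0 < (P (escE (G := G))).toReal := ENNReal.toReal_pos H.esc.ne' (measure_ne_top _ _)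
  obtain ⟨r, hr0, hr⟩ := exists_small C ((P (escE (G := G))).toReal / 2) (by linarith) (by linarith)
  have hEv : ∀ x, P (escE (G := G)) / 2 ≤ P (escE ∩ gE g r x) := by
    intro x
    have h1 : P (escE (G := G)) ≤ P (escE ∩ gE g r x) + P (gE g r x)ᶜ := by
      refine le_trans (measure_mono ?_) (measure_union_le _ _)
      intro ω hω
      by_cases h : ω ∈ gE g r x
      · exact Or.inl ⟨hω, h⟩
      · exact Or.inr h
    have h2 : P (gE g r x)ᶜ ≤ P (escE (G := G)) / 2 := by
      refine (H.gE_compl x hP3).trans ((ENNReal.ofReal_le_ofReal (hr r le_rfl)).trans ?_)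
      rw [ENNReal.ofReal_div_of_pos (by norm_num), ENNReal.ofReal_toReal (measure_ne_top _ _)]
      simp
    have h3 : P (escE (G := G)) / 2 + P (escE (G := G)) / 2 ≤ P (escE ∩ gE g r x) + P (escE (G := G)) / 2 := by
      rw [ENNReal.add_halves]
      exact h1.trans (add_le_add_right h2 _)
    exact (ENNReal.add_le_add_iff_right (ENNReal.div_ne_top (measure_ne_top _ _) (by simp))).1 h3
  set E : G → Set (ℕ → G) := fun x => {ω | ∃ n, walkPos n ω = x ∧ sh n ω ∈ escE ∩ gE g r x} with hE
  have hEm : ∀ x, MeasurableSet (E x) := by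
    intro x
    simp only [hE]
    rw [setOf_exists]
    refine MeasurableSet.iUnion fun n => ?_
    exact (meas_W n (fun y => y = x)).inter (meas_sh n (meas_escE.inter (meas_gE g r x)))
  have hPE : ∀ x, Gr P x * P (escE ∩ gE g r x) = P (E x) := by
    intro x
    have h := lastvisit H.hP 1 (fun z => if z = x then escE ∩ gE g r x else ∅)
      (fun z => by
        by_cases h : z = x
        · simp only [h, if_true]; exact meas_escE.inter (meas_gE g r x)
        · simp [h]) (by
        intro ω z k hk h1 h2
        by_cases hz : z = x
        · simp only [hz, if_true] at h1 h2
          have hne := h1.1 k hk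
          rw [if_neg (by simpa using hne)] at h2
          exact h2
        · simp [hz] at h1)
    rw [tsum_eq_single x] at h
    · simp only [inv_one, one_mul, if_true] at h
      rw [h]
      congr 1
      ext ω
      simp only [hE, mem_setOf_eq]
      apply exists_congr
      intro n
      by_cases hn : walkPos n ω = x <;> simp [hn]
    · intro z hz
      simp [hz]
  have hball := H.proper (1 + 2 * r)
  set N0 := hball.toFinset.card with hN0
  have hmult : ∀ (R : ℝ) (s : Finset G), (∀ x ∈ s, R ≤ g 1 x ∧ g 1 x ≤ R + 1) →
      ∑ x ∈ s, P (E x) ≤ N0 := by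
    intro R s hs
    have h1 : ∑ x ∈ s, P (E x) = ∫⁻ ω, ∑ x ∈ s, (E x).indicator 1 ω ∂P := by
      rw [lintegral_finsetSum _ (fun x _ => measurable_one.indicator (hEm x))]
      refine Finset.sum_congr rfl fun x _ => ?_
      rw [lintegral_indicator_one (hEm x)]
    rw [h1]
    calc ∫⁻ ω, ∑ x ∈ s, (E x).indicator 1 ω ∂P ≤ ∫⁻ ω, (N0 : ℝ≥0∞) ∂P := by
          apply lintegral_mono
          intro ω
          have e : ∑ x ∈ s, (E x).indicator (1 : (ℕ → G) → ℝ≥0∞) ω = ((s.filter (fun x => ω ∈ E x)).card : ℝ≥0∞) := by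
            rw [Finset.card_filter]
            push_cast
            refine Finset.sum_congr rfl fun x _ => ?_
            by_cases h : ω ∈ E x <;> simp [h]
          simp only [e]
          rw [Nat.cast_le]
          rcases (s.filter (fun x => ω ∈ E x)).eq_empty_or_nonempty with h0 | ⟨x0, hx0⟩
          · rw [h0]; simp
          have key : ∀ x ∈ s.filter (fun x => ω ∈ E x), g x0 x ≤ 1 + 2 * r := by
            have aux : ∀ x ∈ s, ∀ x' ∈ s, ∀ n n', n ≤ n' → walkPos n ω = x → walkPos n' ω = x' →
                sh n ω ∈ gE g r x → g x x' ≤ 1 + 2 * r := by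
              intro x hx x' hx' n n' hnn h1 h2 h3
              obtain ⟨m, rfl⟩ := Nat.exists_eq_add_of_le hnn
              rw [walkPos_add, h1] at h2
              have h4 := H.good_dist h3 m
              rw [h2] at h4
              have := hs x hx
              have := hs x' hx'
              linarith
            intro x hx
            rw [Finset.mem_filter] at hx hx0
            obtain ⟨hx1, n, h2, h3⟩ := hx
            obtain ⟨hx1', n', h2', h3'⟩ := hx0
            rcases le_total n n' with h | h
            · rw [H.m.symm]
              exact aux x hx1 x0 hx1' n n' h h2 h2' h3.2
            · exact aux x0 hx1' x hx1 n' n h h2' h2 h3'.2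
          refine Finset.card_le_card_of_injOn (fun x => x0⁻¹ * x) ?_ ?_
          · intro x hx
            simp only [Finite.coe_toFinset, mem_setOf_eq]
            have := H.li x0⁻¹ x0 x
            rw [inv_mul_cancel] at this
            rw [this]
            exact key x hx
          · intro x _ y _ h
            simpa using h
      _ = N0 := by simp
  refine ⟨2 * (P (escE (G := G)))⁻¹ * N0, ENNReal.mul_ne_top (ENNReal.mul_ne_top (by simp)
    (ENNReal.inv_ne_top.2 H.esc.ne')) (by simp), fun R => ?_⟩
  rw [ENNReal.tsum_eq_iSup_sum]
  refine iSup_le fun s => ?_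
  rw [← Finset.sum_filter]
  calc ∑ x ∈ s with R ≤ g 1 x ∧ g 1 x ≤ R + 1, ef g 1 x
      ≤ ∑ x ∈ s with R ≤ g 1 x ∧ g 1 x ≤ R + 1, 2 * (P (escE (G := G)))⁻¹ * P (E x) := by
        refine Finset.sum_le_sum fun x _ => ?_
        rw [← hPE x]
        have h1 := H.le_green 1 x
        rw [inv_one, one_mul] at h1
        have h2 : (1:ℝ≥0∞) ≤ 2 * (P (escE (G := G)))⁻¹ * P (escE ∩ gE g r x) := by
          calc (1:ℝ≥0∞) = 2 * (P (escE (G := G)))⁻¹ * (P (escE (G := G)) / 2) := by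
                rw [ENNReal.div_eq_inv_mul, mul_assoc, mul_left_comm _ (2⁻¹ : ℝ≥0∞),
                  ENNReal.inv_mul_cancel H.esc.ne' (measure_ne_top _ _), mul_one,
                  ENNReal.mul_inv_cancel] <;> simp
            _ ≤ _ := mul_le_mul_right (hEv x) _
        calc ef g 1 x ≤ Gr P x * 1 := by rwa [mul_one]
          _ ≤ Gr P x * (2 * (P (escE (G := G)))⁻¹ * P (escE ∩ gE g r x)) := mul_le_mul_right h2 _
          _ = _ := by ring
    _ ≤ _ := by
        rw [← Finset.mul_sum]
        exact mul_le_mul_right (hmult R _ (fun x hx => (Finset.mem_filter.1 hx).2)) _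

open scoped Classical in
theorem WG.poincare (H : WG μ P g) (N : Nice S g δ A) {s : ℝ} (hs : 1 < s) :
    Summable fun x => Real.exp (-(s * g 1 x)) := by
  obtain ⟨C, hC, hann⟩ := H.annulus N
  have h1 : ∑' x, ENNReal.ofReal (Real.exp (-(s * g 1 x))) ≤
      ∑' k : ℕ, C * ENNReal.ofReal (Real.exp (-((s - 1) * k))) := by
    calc ∑' x, ENNReal.ofReal (Real.exp (-(s * g 1 x)))
        ≤ ∑' x, ∑' k : ℕ, (if (k:ℝ) ≤ g 1 x ∧ g 1 x ≤ k + 1 then ef g 1 x else 0) *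
            ENNReal.ofReal (Real.exp (-((s - 1) * k))) := by
          refine ENNReal.tsum_le_tsum fun x => ?_
          have h0 := H.m.nonneg 1 x
          have hk1 := Nat.floor_le h0
          have hk2 := (Nat.lt_floor_add_one (g 1 x)).le
          refine le_trans ?_ (ENNReal.le_tsum ⌊g 1 x⌋₊)
          rw [if_pos ⟨hk1, hk2⟩]
          unfold ef
          rw [← ENNReal.ofReal_mul (Real.exp_pos _).le, ← Real.exp_add]
          apply ENNReal.ofReal_le_ofReal
          apply Real.exp_le_exp.2
          nlinarith
      _ = ∑' k : ℕ, (∑' x, (if (k:ℝ) ≤ g 1 x ∧ g 1 x ≤ k + 1 then ef g 1 x else 0)) *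
            ENNReal.ofReal (Real.exp (-((s - 1) * k))) := by
          rw [ENNReal.tsum_comm]
          refine tsum_congr fun k => ?_
          rw [ENNReal.tsum_mul_right]
      _ ≤ _ := ENNReal.tsum_le_tsum fun k => mul_le_mul_left (hann k) _
  have h2 : ∑' k : ℕ, C * ENNReal.ofReal (Real.exp (-((s - 1) * k))) ≠ ⊤ := by
    rw [ENNReal.tsum_mul_left]
    refine ENNReal.mul_ne_top hC ?_
    have hsum : Summable fun k : ℕ => Real.exp (-((s - 1) * (k:ℝ))) := by
      have := Real.summable_exp_nat_mul_iff (a := -(s - 1)) |>.2 (by linarith)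
      refine this.congr fun k => ?_
      congr 1; ring
    rw [← ENNReal.ofReal_tsum_of_nonneg (fun k => (Real.exp_pos _).le) hsum]
    exact ENNReal.ofReal_ne_top
  have h3 := ENNReal.summable_toReal (ne_top_of_le_ne_top h2 h1)
  refine h3.congr fun x => ?_
  rw [ENNReal.toReal_ofReal (Real.exp_pos _).le]

end Entropy

end

section
open Filter MeasureTheory Topology Metric Set
open scoped ENNReal

section Averages

variable [Countable G] [MeasurableSpace G] [MeasurableSingletonClass G]
variable {μ : G → ℝ} {P : Measure (ℕ → G)} {g : G → G → ℝ} {S : Finset G} {δ A : ℝ}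

theorem mp_sh (hP : IsWalkMeasure μ P) (n : ℕ) : MeasurePreserving (sh (G := G) n) P P := by
  have := hP.1
  refine ⟨meas_sh n, ?_⟩
  ext E hE
  rw [Measure.map_apply (meas_sh n) hE]
  have := markov_fam hP n (fun _ => E) (fun _ => hE)
  rw [ENNReal.tsum_mul_right, tsum_pos, one_mul] at this
  exact this

def av (P : Measure (ℕ → G)) (f : G → G → ℝ) (n : ℕ) : ℝ := ∫ ω, f 1 (walkPos n ω) ∂P

theorem meas_fW (F : G → ℝ) (n : ℕ) : Measurable fun ω : ℕ → G => F (walkPos n ω) :=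
  (Measurable.of_discrete (f := F)).comp (meas_walkPos n)

theorem int_W {f : G → G → ℝ} (hP : IsWalkMeasure μ P) (hm : IsMetricFun f) (hli : LeftInvariant f)
    (h1 : Integrable (fun ω => f 1 (walkPos 1 ω)) P) (n : ℕ) :
    Integrable (fun ω => f 1 (walkPos n ω)) P := by
  have := hP.1
  induction n with
  | zero => simp [walkPos_zero]
  | succ n ih =>
    have h2 : Integrable (fun ω => f 1 (walkPos 1 (sh n ω))) P :=
      (mp_sh hP n).integrable_comp_of_integrable h1
    refine (ih.add h2).mono' (meas_fW (f 1) (n + 1)).aestronglyMeasurable ?_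
    refine Eventually.of_forall fun ω => ?_
    rw [Real.norm_of_nonneg (hm.nonneg _ _), walkPos_add]
    have h3 := hm.triangle 1 (walkPos n ω) (walkPos n ω * walkPos 1 (sh n ω))
    have h4 := hli (walkPos n ω) 1 (walkPos 1 (sh n ω))
    rw [mul_one] at h4
    simp only [Pi.add_apply]
    linarith

theorem qa {f : G → G → ℝ} (hP : IsWalkMeasure μ P) (hm : IsMetricFun f) (hli : LeftInvariant f)
    (h1 : Integrable (fun ω => f 1 (walkPos 1 ω)) P) {K : ℝ≥0∞} (hK : K ≠ ⊤)
    (hb : ∀ y n, ∫⁻ ω, ENNReal.ofReal (gromov f 1 (walkPos n ω) y) ∂P ≤ K) (n m : ℕ) :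
    av P f (n + m) ≤ av P f n + av P f m ∧ av P f n + av P f m - 2 * K.toReal ≤ av P f (n + m) := by
  have := hP.1
  have hi := int_W hP hm hli h1
  set X : (ℕ → G) → ℝ := fun ω => gromov f 1 (walkPos m (sh n ω)) (walkPos n ω)⁻¹ with hX
  have hsh : Integrable (fun ω => f 1 (walkPos m (sh n ω))) P :=
    (mp_sh hP n).integrable_comp_of_integrable (hi m)
  have hav : ∫ ω, f 1 (walkPos m (sh n ω)) ∂P = av P f m := by
    unfold av
    have h2 := integral_map (μ := P) (meas_sh n).aemeasurable (f := fun ω => f 1 (walkPos m ω))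
      (meas_fW (f 1) m).aestronglyMeasurable
    rw [(mp_sh hP n).map_eq] at h2
    exact h2.symm
  have hXe : ∀ ω, X ω = (f 1 (walkPos n ω) + f 1 (walkPos m (sh n ω)) - f 1 (walkPos (n + m) ω)) / 2 := by
    intro ω
    simp only [hX, walkPos_add]
    unfold gromov
    have e1 := hli (walkPos n ω) (walkPos n ω)⁻¹ (walkPos m (sh n ω))
    have e2 := hli (walkPos n ω) (walkPos n ω)⁻¹ 1
    rw [mul_inv_cancel] at e1 e2
    rw [mul_one] at e2
    have e3 := hm.symm (walkPos n ω)⁻¹ (walkPos m (sh n ω))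
    have e4 := hm.symm 1 (walkPos m (sh n ω))
    linarith
  have hXi : Integrable X P := by
    have : X = fun ω => (f 1 (walkPos n ω) + f 1 (walkPos m (sh n ω)) - f 1 (walkPos (n + m) ω)) / 2 :=
      funext hXe
    rw [this]
    exact (((hi n).add hsh).sub (hi (n + m))).div_const 2
  have hXint : ∫ ω, X ω ∂P = (av P f n + av P f m - av P f (n + m)) / 2 := by
    simp_rw [hXe]
    have hadd : Integrable (fun ω => f 1 (walkPos n ω) + f 1 (walkPos m (sh n ω))) P := (hi n).add hsh
    rw [integral_div, integral_sub hadd (hi (n + m)), integral_add (hi n) hsh, hav]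
    rfl
  have hX0 : ∀ ω, 0 ≤ X ω := fun ω => gromov_nonneg hm _ _ _
  have hX1 : 0 ≤ ∫ ω, X ω ∂P := integral_nonneg hX0
  have hX2 : ∫ ω, X ω ∂P ≤ K.toReal := by
    rw [integral_eq_lintegral_of_nonneg_ae (Eventually.of_forall hX0) hXi.aestronglyMeasurable]
    refine ENNReal.toReal_mono hK ?_
    have h3 := markov_lint hP n (fun x ω => ENNReal.ofReal (gromov f 1 (walkPos m ω) x⁻¹))
      (fun x => (meas_fW (fun z => gromov f 1 z x⁻¹) m).ennreal_ofReal)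
    simp only [hX]
    rw [h3]
    calc _ ≤ ∑' x, P {ω | walkPos n ω = x} * K := ENNReal.tsum_le_tsum fun x => mul_le_mul_right (hb _ _) _
      _ = K := by rw [ENNReal.tsum_mul_right, tsum_pos, one_mul]
  constructor <;> linarith

theorem quasi_add {u : ℕ → ℝ} {K : ℝ} (h0 : u 0 = 0) (hK : 0 ≤ K) (hnn : ∀ n, 0 ≤ u n)
    (h1 : ∀ n m, u (n + m) ≤ u n + u m) (h2 : ∀ n m, u n + u m - K ≤ u (n + m)) :
    ∃ L, Tendsto (fun n : ℕ => u n / n) atTop (𝓝 L) ∧ ∀ n : ℕ, n * L ≤ u n ∧ u n ≤ n * L + K := by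
  have hs : Subadditive u := h1
  have hb : BddBelow (range fun n : ℕ => u n / n) := ⟨0, by
    rintro _ ⟨n, rfl⟩
    have := hnn n
    positivity⟩
  have hl := hs.tendsto_lim hb
  refine ⟨hs.lim, hl, ?_⟩
  have hs2 : Subadditive (fun n => K - u n) := by
    intro n m
    have := h2 n m
    linarith
  have ht : Tendsto (fun n : ℕ => (K - u n) / n) atTop (𝓝 (0 - hs.lim)) := by
    simp_rw [sub_div]
    exact (tendsto_const_div_atTop_nhds_zero_nat K).sub hl
  have hb2 : BddBelow (range fun n : ℕ => (K - u n) / n) := ht.bddBelow_range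
  have hl2 := tendsto_nhds_unique (hs2.tendsto_lim hb2) ht
  intro n
  rcases Nat.eq_zero_or_pos n with rfl | hn
  · simp [h0, hK]
  have hn' : (0:ℝ) < n := by exact_mod_cast hn
  have a1 := hs.lim_le_div hb hn.ne'
  have a2 := hs2.lim_le_div hb2 hn.ne'
  rw [hl2] at a2
  rw [le_div_iff₀ hn'] at a1 a2
  constructor <;> linarith

theorem WG.av_sum (H : WG μ P g) (f : G → G → ℝ) (hm : IsMetricFun f) (n : ℕ)
    (hi : Integrable (fun ω => f 1 (walkPos n ω)) P) :
    HasSum (fun x => convPow μ n x * f 1 x) (av P f n) := by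
  have := H.hP.1
  have h1 : ∑' x, P {ω | walkPos n ω = x} * ENNReal.ofReal (f 1 x) = ENNReal.ofReal (av P f n) := by
    rw [← lintegral_pos P n (fun x => ENNReal.ofReal (f 1 x)), av,
      ofReal_integral_eq_lintegral_ofReal hi (Eventually.of_forall fun ω => hm.nonneg _ _)]
  have h2 : ∀ x, convPow μ n x * f 1 x = (P {ω | walkPos n ω = x} * ENNReal.ofReal (f 1 x)).toReal := by
    intro x
    rw [p_convPow H.hP H.μnn, ENNReal.toReal_mul, ENNReal.toReal_ofReal (hm.nonneg _ _)]
  have hne : ∑' x, P {ω | walkPos n ω = x} * ENNReal.ofReal (f 1 x) ≠ ⊤ := by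
    rw [h1]; exact ENNReal.ofReal_ne_top
  have h3 := ENNReal.hasSum_toReal hne
  rw [← ENNReal.tsum_toReal_eq (fun x => ENNReal.ne_top_of_tsum_ne_top hne x), h1,
    ENNReal.toReal_ofReal (show 0 ≤ av P f n from integral_nonneg fun ω => hm.nonneg _ _)] at h3
  convert h3 using 1
  funext x
  exact h2 x

theorem WG.entropy_bounds (H : WG μ P g) (N : Nice S g δ A) (n : ℕ)
    (hi : Integrable (fun ω => g 1 (walkPos n ω)) P) :
    av P g n ≤ entropyAt μ n ∧ ∀ s, 1 < s →
      entropyAt μ n ≤ s * av P g n + ∑' x, Real.exp (-(s * g 1 x)) := by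
  have := H.hP.1
  have hsum := H.av_sum g H.m n hi
  set p := convPow μ n with hp
  have hp0 : ∀ x, 0 ≤ p x := fun x => by rw [hp, p_convPow H.hP H.μnn]; exact ENNReal.toReal_nonneg
  have hple : ∀ x, p x ≤ Real.exp (-(g 1 x)) := by
    intro x
    rw [hp, p_convPow H.hP H.μnn]
    have h1 : P {ω | walkPos n ω = x} ≤ ef g 1 x := by
      rw [← H.hF 1 x]
      exact measure_mono fun ω hω => ⟨n, by simpa using hω⟩
    have := ENNReal.toReal_mono ENNReal.ofReal_ne_top h1
    rwa [ENNReal.toReal_ofReal (Real.exp_pos _).le] at this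
  have hlow : ∀ x, p x * g 1 x ≤ -(p x * Real.log (p x)) := by
    intro x
    rcases (hp0 x).eq_or_lt with h | h
    · rw [← h]; simp
    have := Real.log_le_log h (hple x)
    rw [Real.log_exp] at this
    nlinarith
  have hup : ∀ s x, -(p x * Real.log (p x)) ≤ s * (p x * g 1 x) + Real.exp (-(s * g 1 x)) := by
    intro s x
    rcases (hp0 x).eq_or_lt with h | h
    · rw [← h]; simp [(Real.exp_pos _).le]
    have h1 := Real.log_le_sub_one_of_pos (x := Real.exp (-(s * g 1 x)) / p x) (by positivity)
    rw [Real.log_div (Real.exp_pos _).ne' h.ne', Real.log_exp] at h1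
    have h2 := mul_le_mul_of_nonneg_left h1 h.le
    have h3 : p x * (Real.exp (-(s * g 1 x)) / p x - 1) = Real.exp (-(s * g 1 x)) - p x := by
      field_simp
    rw [h3] at h2
    nlinarith
  have hnn : ∀ x, 0 ≤ -(p x * Real.log (p x)) := fun x =>
    (mul_nonneg (hp0 x) (H.m.nonneg _ _)).trans (hlow x)
  have hS : Summable fun x => -(p x * Real.log (p x)) :=
    Summable.of_nonneg_of_le hnn (hup 2)
      ((hsum.summable.mul_left 2).add (H.poincare N (by norm_num)))
  have he : entropyAt μ n = ∑' x, -(p x * Real.log (p x)) := by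
    unfold entropyAt; rw [tsum_neg]
  rw [he]
  constructor
  · rw [← hsum.tsum_eq]
    exact hsum.summable.tsum_le_tsum hlow hS
  · intro s hs
    have hS2 := H.poincare N hs
    rw [← hsum.tsum_eq, ← tsum_mul_left, ← (hsum.summable.mul_left s).tsum_add hS2]
    exact hS.tsum_le_tsum (hup s) ((hsum.summable.mul_left s).add hS2)

theorem WG.int_one (H : WG μ P g) (N : Nice S g δ A) :
    Integrable (fun ω => g 1 (walkPos 1 ω)) P := by
  refine ⟨(meas_fW (g 1) 1).aestronglyMeasurable, ?_⟩
  rw [hasFiniteIntegral_iff_ofReal (Eventually.of_forall fun ω => H.m.nonneg _ _),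
    lintegral_pos P 1 (fun x => ENNReal.ofReal (g 1 x))]
  exact lt_top_iff_ne_top.2 (H.moment N)

/-- mean of Gromov products for a comparable metric -/
theorem WG.mean_gromov (H : WG μ P g) (N : Nice S g δ A) {f : G → G → ℝ} {K : ℝ} (hK : 1 ≤ K)
    (hf : ∀ x y z, gromov f z x y ≤ K * gromov g z x y + K) :
    ∃ K' : ℝ≥0∞, K' ≠ ⊤ ∧ ∀ y n, ∫⁻ ω, ENNReal.ofReal (gromov f 1 (walkPos n ω) y) ∂P ≤ K' := by
  have := H.hP.1
  obtain ⟨C, hC1, hP3⟩ := H.P3 N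
  have hT := tailC_ne_top C (by linarith)
  refine ⟨ENNReal.ofReal K * (∑' k : ℕ, ENNReal.ofReal (C * Real.exp (-k))) + ENNReal.ofReal K,
    ENNReal.add_ne_top.2 ⟨ENNReal.mul_ne_top ENNReal.ofReal_ne_top hT, ENNReal.ofReal_ne_top⟩, fun y n => ?_⟩
  have h1 := tail_mean P C (fun ω => gromov g 1 (walkPos n ω) y)
    (fun k => meas_W n (fun x => (k:ℝ) ≤ gromov g 1 x y))
    (fun k => le_trans (measure_mono (show {ω | (k:ℝ) ≤ gromov g 1 (walkPos n ω) y} ⊆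
      {ω | ∃ m, (k:ℝ) ≤ gromov g 1 (walkPos m ω) y} from fun ω hω => ⟨n, hω⟩)) (hP3 y k))
  calc ∫⁻ ω, ENNReal.ofReal (gromov f 1 (walkPos n ω) y) ∂P
      ≤ ∫⁻ ω, (ENNReal.ofReal K * ENNReal.ofReal (gromov g 1 (walkPos n ω) y) + ENNReal.ofReal K) ∂P := by
        apply lintegral_mono
        intro ω
        beta_reduce
        rw [← ENNReal.ofReal_mul (by linarith), ← ENNReal.ofReal_add
          (mul_nonneg (by linarith) (gromov_nonneg H.m _ _ _)) (by linarith)]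
        exact ENNReal.ofReal_le_ofReal (hf _ _ _)
    _ = ENNReal.ofReal K * ∫⁻ ω, ENNReal.ofReal (gromov g 1 (walkPos n ω) y) ∂P + ENNReal.ofReal K := by
        rw [lintegral_add_right _ measurable_const, lintegral_const_mul _
          (meas_fW (fun x => gromov g 1 x y) n).ennreal_ofReal]
        simp
    _ ≤ _ := by gcongr

/-- linear growth of averages -/
theorem WG.av_lin (H : WG μ P g) (N : Nice S g δ A) {f : G → G → ℝ} (hm : IsMetricFun f)
    (hli : LeftInvariant f) (h1 : Integrable (fun ω => f 1 (walkPos 1 ω)) P) {K : ℝ} (hK : 1 ≤ K)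
    (hf : ∀ x y z, gromov f z x y ≤ K * gromov g z x y + K) :
    ∃ L K' : ℝ, 0 ≤ K' ∧ Tendsto (fun n : ℕ => av P f n / n) atTop (𝓝 L) ∧
      ∀ n : ℕ, n * L ≤ av P f n ∧ av P f n ≤ n * L + K' := by
  have := H.hP.1
  obtain ⟨K', hK', hb⟩ := H.mean_gromov N hK hf
  have hq := qa H.hP hm hli h1 hK' hb
  have h0 : av P f 0 = 0 := by simp [av, walkPos_zero, hm.refl]
  obtain ⟨L, hL, hL'⟩ := quasi_add (K := 2 * K'.toReal) h0 (by positivity)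
    (fun n => integral_nonneg fun ω => hm.nonneg _ _) (fun n m => (hq n m).1) (fun n m => (hq n m).2)
  exact ⟨L, 2 * K'.toReal, by positivity, hL, hL'⟩

theorem WG.entropy_eq (H : WG μ P g) (N : Nice S g δ A) {h : ℝ} (hent : HasEntropy μ h) :
    0 < h ∧ ∀ n : ℕ, n * h ≤ av P g n := by
  have := H.hP.1
  obtain ⟨L, K', hK', hL, hL'⟩ := H.av_lin N H.m H.li (H.int_one N) (K := 1) le_rfl
    (fun x y z => by linarith)
  have hi := int_W H.hP H.m H.li (H.int_one N)
  have hhL : h ≤ L := by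
    have key : ∀ s, 1 < s → h ≤ s * L := by
      intro s hs
      have ht : Tendsto (fun n : ℕ => s * (av P g n / n) + (∑' x, Real.exp (-(s * g 1 x))) / n) atTop
          (𝓝 (s * L + 0)) := (hL.const_mul s).add (tendsto_const_div_atTop_nhds_zero_nat _)
      rw [add_zero] at ht
      refine le_of_tendsto_of_tendsto' hent ht fun n => ?_
      have h1 := (H.entropy_bounds N n (hi n)).2 s hs
      rw [← mul_div_assoc, ← add_div]
      gcongr
    have ht : Tendsto (fun s : ℝ => s * L) (𝓝[>] 1) (𝓝 (1 * L)) :=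
      ((continuous_id.mul continuous_const).tendsto 1).mono_left nhdsWithin_le_nhds
    rw [one_mul] at ht
    refine ge_of_tendsto ht ?_
    filter_upwards [self_mem_nhdsWithin] with s hs using key s hs
  have hLh : L ≤ h := le_of_tendsto_of_tendsto' hL hent fun n => by
    have h1 := (H.entropy_bounds N n (hi n)).1
    gcongr
  have hpos : 0 < L := by
    set M := 2 * (K' + 1) with hM
    have hA := H.proper M
    have hsm : Tendsto (fun n => P {ω | walkPos n ω ∈ {x | g 1 x ≤ M}}) atTop (𝓝 0) := by
      have h1 : ∀ n, P {ω | walkPos n ω ∈ {x | g 1 x ≤ M}} ≤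
          ∑ z ∈ hA.toFinset, P {ω | walkPos n ω = z} := by
        intro n
        refine le_trans (measure_mono ?_) (measure_biUnion_finset_le _ _)
        intro ω hω
        simp only [mem_iUnion]
        exact ⟨walkPos n ω, by simpa using hω, rfl⟩
      have h2 : Tendsto (fun n => ∑ z ∈ hA.toFinset, P {ω | walkPos n ω = z}) atTop (𝓝 (∑ z ∈ hA.toFinset, 0)) :=
        tendsto_finsetSum _ fun z _ => ENNReal.tendsto_atTop_zero_of_tsum_ne_top (H.green_ne_top z)
      rw [Finset.sum_const_zero] at h2
      exact tendsto_of_tendsto_of_tendsto_of_le_of_le tendsto_const_nhds h2 (fun _ => zero_le) h1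
    have hhalf : (0:ℝ≥0∞) < 1 / 2 := by simp
    obtain ⟨n, hn, hn1⟩ := ((hsm.eventually (gt_mem_nhds hhalf)).and (eventually_ge_atTop 1)).exists
    have h3 : 1 / 2 ≤ P {ω : ℕ → G | M ≤ g 1 (walkPos n ω)} := by
      have h4 : (1:ℝ≥0∞) ≤ P {ω | walkPos n ω ∈ {x | g 1 x ≤ M}} + P {ω : ℕ → G | M ≤ g 1 (walkPos n ω)} := by
        rw [← measure_univ (μ := P)]
        refine le_trans (measure_mono ?_) (measure_union_le _ _)
        intro ω _
        rcases le_total (g 1 (walkPos n ω)) M with h | h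
        · exact Or.inl h
        · exact Or.inr h
      have h5 : (1:ℝ≥0∞) / 2 + 1 / 2 ≤ 1 / 2 + P {ω : ℕ → G | M ≤ g 1 (walkPos n ω)} := by
        rw [ENNReal.add_halves]
        exact h4.trans (add_le_add_left hn.le _)
      exact (ENNReal.add_le_add_iff_left (by simp)).1 h5
    have h6 := mul_meas_ge_le_integral_of_nonneg (Eventually.of_forall fun ω => H.m.nonneg 1 (walkPos n ω)) (hi n) M
    have h7 : (1:ℝ) / 2 ≤ P.real {ω : ℕ → G | M ≤ g 1 (walkPos n ω)} := by
      have := ENNReal.toReal_mono (measure_ne_top _ _) h3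
      simpa [Measure.real] using this
    have h8 := (hL' n).2
    have h9 : K' + 1 ≤ av P g n := by
      refine le_trans ?_ h6
      nlinarith
    have hn' : (0:ℝ) < n := by exact_mod_cast hn1
    by_contra hneg
    push Not at hneg
    nlinarith
  have heq : h = L := le_antisymm hhL hLh
  rw [heq]
  exact ⟨hpos, fun n => (hL' n).1⟩

theorem drift_le {f : G → G → ℝ} (hP : IsWalkMeasure μ P) (hm : IsMetricFun f) (hli : LeftInvariant f)
    (h1 : Integrable (fun ω => f 1 (walkPos 1 ω)) P) {L l : ℝ}
    (hL : Tendsto (fun n : ℕ => av P f n / n) atTop (𝓝 L))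
    (hl : ∀ᵐ ω ∂P, Tendsto (fun n : ℕ => f 1 (walkPos n ω) / n) atTop (𝓝 l)) : L ≤ l := by
  have := hP.1
  have hi := int_W hP hm hli h1
  set T : ℕ → (ℕ → G) → ℝ := fun M ω => max (f 1 (walkPos 1 ω) - M) 0 with hT
  have hTm : ∀ M, Measurable (T M) := fun M => (meas_fW (fun x => max (f 1 x - M) 0) 1)
  have hTi : ∀ M, Integrable (T M) P := by
    intro M
    refine h1.mono' (hTm M).aestronglyMeasurable (Eventually.of_forall fun ω => ?_)
    rw [Real.norm_of_nonneg (le_max_right _ _)]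
    refine max_le ?_ (hm.nonneg _ _)
    have : (0:ℝ) ≤ M := by positivity
    linarith
  have hT0 : Tendsto (fun M => ∫ ω, T M ω ∂P) atTop (𝓝 0) := by
    have : Tendsto (fun M => ∫ ω, T M ω ∂P) atTop (𝓝 (∫ ω, (0:ℝ) ∂P)) := by
      refine tendsto_integral_of_dominated_convergence (fun ω => f 1 (walkPos 1 ω))
        (fun M => (hTm M).aestronglyMeasurable) h1 (fun M => Eventually.of_forall fun ω => ?_)
        (Eventually.of_forall fun ω => ?_)
      · rw [Real.norm_of_nonneg (le_max_right _ _)]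
        refine max_le ?_ (hm.nonneg _ _)
        have : (0:ℝ) ≤ M := by positivity
        linarith
      · refine tendsto_const_nhds.congr' ?_
        obtain ⟨M0, hM0⟩ := exists_nat_ge (f 1 (walkPos 1 ω))
        filter_upwards [eventually_ge_atTop M0] with M hM
        have : (M0:ℝ) ≤ M := by exact_mod_cast hM
        simp only [hT]
        rw [max_eq_right (by linarith)]
    simpa using this
  have hpt : ∀ (M : ℕ) (n : ℕ) ω, f 1 (walkPos n ω) ≤ n * M + ∑ i ∈ Finset.range n, T M (sh i ω) := by
    intro M n ω
    induction n with
    | zero => simp [walkPos_zero, hm.refl]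
    | succ n ih =>
      rw [Finset.sum_range_succ, walkPos_add]
      have h3 := hm.triangle 1 (walkPos n ω) (walkPos n ω * walkPos 1 (sh n ω))
      have h4 := hli (walkPos n ω) 1 (walkPos 1 (sh n ω))
      rw [mul_one] at h4
      have h5 : f 1 (walkPos 1 (sh n ω)) - M ≤ T M (sh n ω) := le_max_left _ _
      push_cast
      linarith
  have key : ∀ M : ℕ, L ≤ l + ∫ ω, T M ω ∂P := by
    intro M
    have hlim : Tendsto (fun n : ℕ => ∫ ω, min (f 1 (walkPos n ω) / n) M ∂P) atTop (𝓝 (∫ _, min l M ∂P)) := by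
      refine tendsto_integral_of_dominated_convergence (fun _ => (M:ℝ))
        (fun n => (meas_fW (fun x => min (f 1 x / n) M) n).aestronglyMeasurable) (integrable_const _)
        (fun n => Eventually.of_forall fun ω => ?_) ?_
      · rw [Real.norm_of_nonneg]
        · exact min_le_right _ _
        · exact le_min (div_nonneg (hm.nonneg _ _) (by positivity)) (by positivity)
      · filter_upwards [hl] with ω hω
        exact hω.min tendsto_const_nhds
    have hlim2 := hlim.add_const (∫ ω, T M ω ∂P)
    have hle : L ≤ ∫ _, min l M ∂P + ∫ ω, T M ω ∂P := by
      refine le_of_tendsto_of_tendsto hL hlim2 ?_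
      filter_upwards [eventually_ge_atTop 1] with n hn
      have hn' : (0:ℝ) < n := by exact_mod_cast hn
      have hsi : ∀ i, Integrable (fun ω => T M (sh i ω)) P := fun i =>
        (mp_sh hP i).integrable_comp_of_integrable (hTi M)
      have hse : ∀ i, ∫ ω, T M (sh i ω) ∂P = ∫ ω, T M ω ∂P := by
        intro i
        have h2 := integral_map (μ := P) (meas_sh i).aemeasurable (f := T M)
          (hTm M).aestronglyMeasurable
        rw [(mp_sh hP i).map_eq] at h2
        exact h2.symm
      have hmi : Integrable (fun ω => min (f 1 (walkPos n ω) / n) M) P := by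
        refine ((hi n).div_const n).mono' (meas_fW (fun x => min (f 1 x / n) M) n).aestronglyMeasurable
          (Eventually.of_forall fun ω => ?_)
        rw [Real.norm_of_nonneg]
        · exact min_le_left _ _
        · exact le_min (div_nonneg (hm.nonneg _ _) (by positivity)) (by positivity)
      have hs2 : Integrable (fun ω => (∑ i ∈ Finset.range n, T M (sh i ω)) / n) P :=
        (integrable_finsetSum _ fun i _ => hsi i).div_const _
      have e1 : ∫ ω, (∑ i ∈ Finset.range n, T M (sh i ω)) / n ∂P = ∫ ω, T M ω ∂P := by
        rw [integral_div, integral_finsetSum _ fun i _ => hsi i]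
        simp only [hse, Finset.sum_const, Finset.card_range, nsmul_eq_mul]
        field_simp
      rw [← e1, ← integral_add hmi hs2]
      unfold av
      rw [← integral_div]
      refine integral_mono ((hi n).div_const _) (hmi.add hs2) fun ω => ?_
      have hnn : 0 ≤ (∑ i ∈ Finset.range n, T M (sh i ω)) / n :=
        div_nonneg (Finset.sum_nonneg fun i _ => le_max_right _ _) hn'.le
      rcases le_total (f 1 (walkPos n ω) / n) M with h | h
      · simp only [min_eq_left h]; linarith
      · simp only [min_eq_right h]
        have := hpt M n ω
        rw [div_le_iff₀ hn', add_mul, div_mul_cancel₀ _ hn'.ne']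
        linarith
    have h3 : ∫ _ : ℕ → G, min l M ∂P ≤ l := by
      simp
    linarith
  have hfin : Tendsto (fun M : ℕ => l + ∫ ω, T M ω ∂P) atTop (𝓝 (l + 0)) := hT0.const_add l
  rw [add_zero] at hfin
  exact ge_of_tendsto' hfin key

end Averages

end

section
open Filter MeasureTheory Topology Metric Set
open scoped ENNReal

section Bdry

variable {S : Finset G} {d : G → G → ℝ} {δ A : ℝ} {B : Type*}

def GP (bd : BoundaryData G d B) (δ : ℝ) (gp : B → G → ℝ) : Prop :=
  ∀ u b y, bd.conv u b → ∀ᶠ n in atTop, |gromov d 1 (u n) y - gp b y| ≤ δ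

theorem conv_pair (N : Nice S d δ A) (bd : BoundaryData G d B) {u w : ℕ → G} {b : B}
    (hu : bd.conv u b) (hw : bd.conv w b) (R : ℝ) :
    ∃ n0, ∀ n m, n0 ≤ n → n0 ≤ m → R ≤ gromov d 1 (u n) (w m) := by
  have h1 := (bd.conv_iff u w b hu).1 hw
  have h2 := bd.conv_tendstoInfinity w b hw
  obtain ⟨n1, h1⟩ := eventually_atTop.1 (tendsto_atTop.1 h1 (R + δ))
  obtain ⟨p, h2⟩ := eventually_atTop.1 (tendsto_atTop.1 h2 (R + δ))
  refine ⟨max n1 (max p.1 p.2), fun n m hn hm => ?_⟩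
  have a1 := h1 n (by omega)
  have a2 := h2 (n, m) ⟨by simp; omega, by simp; omega⟩
  have a3 := N.hyp 1 (w n) (u n) (w m)
  rw [gromov_comm N.m 1 (w n) (u n)] at a3
  have : R + δ ≤ min (gromov d 1 (u n) (w n)) (gromov d 1 (w n) (w m)) := le_min a1 a2
  linarith

theorem exists_gp (N : Nice S d δ A) (bd : BoundaryData G d B) : ∃ gp, GP bd δ gp := by
  have key : ∀ b y, ∃ t : ℝ, ∀ u, bd.conv u b → ∀ᶠ n in atTop, |gromov d 1 (u n) y - t| ≤ δ := by
    intro b y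
    obtain ⟨w, hw⟩ := bd.conv_surj b
    obtain ⟨n0, h0⟩ := conv_pair N bd hw hw (d 1 y + 2 * δ)
    refine ⟨gromov d 1 (w n0) y, fun u hu => ?_⟩
    obtain ⟨n1, h1⟩ := conv_pair N bd hu hw (d 1 y + 2 * δ)
    filter_upwards [eventually_ge_atTop n1] with n hn
    set m := max n0 n1 with hm
    have a1 := h0 n0 m le_rfl (le_max_left _ _)
    have a2 := h1 n m hn (le_max_right _ _)
    have hδ := N.hδ
    have a3 : d 1 y + δ ≤ gromov d 1 (u n) (w n0) := by
      have := N.hyp 1 (w m) (u n) (w n0)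
      rw [gromov_comm N.m 1 (w m) (u n), gromov_comm N.m 1 (w m) (w n0)] at this
      have h := le_min a2 a1
      linarith
    have b1 := N.hyp 1 (u n) (w n0) y
    have b2 := N.hyp 1 (w n0) (u n) y
    rw [gromov_comm N.m 1 (w n0) (u n)] at b2
    have c1 := gromov_le_right N.m 1 (u n) y
    have c2 := gromov_le_right N.m 1 (w n0) y
    rw [min_eq_right (by linarith)] at b1 b2
    rw [abs_le]
    constructor <;> linarith
  choose gp hgp using key
  exact ⟨gp, fun u b y hu => hgp b y u hu⟩

variable {bd : BoundaryData G d B} {gp : B → G → ℝ}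

theorem gp_ex (N : Nice S d δ A) (hgp : GP bd δ gp) (b : B) (x y : G) :
    ∃ z : G, |gromov d 1 z x - gp b x| ≤ δ ∧ |gromov d 1 z y - gp b y| ≤ δ := by
  obtain ⟨u, hu⟩ := bd.conv_surj b
  obtain ⟨n, hn⟩ := ((hgp u b x hu).and (hgp u b y hu)).exists
  exact ⟨u n, hn⟩

theorem gp_le (N : Nice S d δ A) (hgp : GP bd δ gp) (b : B) (y : G) : gp b y ≤ d 1 y + δ := by
  obtain ⟨z, hz, -⟩ := gp_ex N hgp b y y
  have := gromov_le_right N.m 1 z y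
  rw [abs_le] at hz
  linarith

theorem gp_ge (N : Nice S d δ A) (hgp : GP bd δ gp) (b : B) (y : G) : -δ ≤ gp b y := by
  obtain ⟨z, hz, -⟩ := gp_ex N hgp b y y
  have := gromov_nonneg N.m 1 z y
  rw [abs_le] at hz
  linarith

theorem gp_gp (N : Nice S d δ A) (hgp : GP bd δ gp) (b : B) (x y : G) {r : ℝ} (hx : r ≤ gp b x)
    (hy : r ≤ gp b y) : r - 2 * δ ≤ gromov d 1 x y := by
  obtain ⟨z, h1, h2⟩ := gp_ex N hgp b x y
  rw [abs_le] at h1 h2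
  have h3 := N.hyp 1 z x y
  have : r - δ ≤ min (gromov d 1 z x) (gromov d 1 z y) := le_min (by linarith) (by linarith)
  linarith

theorem gp_tri (N : Nice S d δ A) (hgp : GP bd δ gp) (b : B) (x y : G) {r : ℝ} (hy : r ≤ gp b y)
    (hxy : r ≤ gromov d 1 x y) : r - 3 * δ ≤ gp b x := by
  obtain ⟨z, h1, h2⟩ := gp_ex N hgp b x y
  rw [abs_le] at h1 h2
  have h3 := N.hyp 1 y z x
  rw [gromov_comm N.m 1 y z, gromov_comm N.m 1 y x] at h3
  have hδ := N.hδ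
  have : r - δ ≤ min (gromov d 1 z y) (gromov d 1 x y) := le_min (by linarith) (by linarith)
  linarith

theorem gp_interp (N : Nice S d δ A) (hgp : GP bd δ gp) : ∃ r0, 0 ≤ r0 ∧ ∀ y r, 0 ≤ r → r ≤ d 1 y →
    ∃ z, r ≤ d 1 z ∧ ∀ b, r ≤ gp b y → d 1 z - r0 ≤ gp b z := by
  obtain ⟨τ, hτ, h⟩ := N.interp
  have hδ := N.hδ
  have hA := N.hA
  refine ⟨A + τ + 3 * δ, by linarith, fun y r hr hry => ?_⟩
  obtain ⟨z, h1, h2, h3⟩ := h 1 y r hr hry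
  refine ⟨z, h1, fun b hb => ?_⟩
  have h4 := gromov_add N.m 1 z y
  have h5 := gp_tri N hgp b z y (r := r - τ) (by linarith) (by linarith)
  linarith

theorem gp_ray (N : Nice S d δ A) (hgp : GP bd δ gp) : ∃ r0, 0 ≤ r0 ∧ ∀ b s, ∃ x, s ≤ d 1 x ∧
    d 1 x - r0 ≤ gp b x := by
  obtain ⟨r0, h0, h⟩ := gp_interp N hgp
  have hδ := N.hδ
  refine ⟨r0, h0, fun b s => ?_⟩
  obtain ⟨u, hu⟩ := bd.conv_surj b
  obtain ⟨n0, hn⟩ := conv_pair N bd hu hu (max s 0 + δ)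
  obtain ⟨m, hm1, hm2⟩ := ((hgp u b (u n0) hu).and (eventually_ge_atTop n0)).exists
  have h1 := hn m n0 hm2 le_rfl
  rw [abs_le] at hm1
  obtain ⟨z, hz1, hz2⟩ := h (u n0) (max s 0) (le_max_right _ _)
    (by have := gromov_le_right N.m 1 (u m) (u n0); linarith)
  exact ⟨z, (le_max_left _ _).trans hz1, hz2 b (by linarith)⟩

theorem smul_smul_inv (bd : BoundaryData G d B) (N : IsMetricFun d) (x : G) (b : B) :
    bd.smul x (bd.smul x⁻¹ b) = b := by
  obtain ⟨u, hu⟩ := bd.conv_surj b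
  have h := bd.smul_conv x _ _ (bd.smul_conv x⁻¹ u b hu)
  simp only [mul_inv_cancel_left] at h
  exact bd.conv_unique _ _ _ h hu

theorem smul_mul (bd : BoundaryData G d B) (x y : G) (b : B) :
    bd.smul (x * y) b = bd.smul x (bd.smul y b) := by
  obtain ⟨u, hu⟩ := bd.conv_surj b
  have h := bd.smul_conv x _ _ (bd.smul_conv y u b hu)
  have h2 := bd.smul_conv (x * y) u b hu
  simp only [mul_assoc] at h2
  exact bd.conv_unique _ _ _ h2 h

theorem gp_smul (N : Nice S d δ A) (hgp : GP bd δ gp) (b : B) (x : G) :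
    |gp (bd.smul x b) x + gp b x⁻¹ - d 1 x| ≤ 2 * δ := by
  obtain ⟨u, hu⟩ := bd.conv_surj b
  have hxu := bd.smul_conv x u b hu
  obtain ⟨n, h1, h2⟩ := ((hgp _ _ x hxu).and (hgp u b x⁻¹ hu)).exists
  have h3 := gromov_add N.m 1 x (x * u n)
  have h4 := gromov_li N.li x 1 x⁻¹ (u n)
  rw [mul_one, mul_inv_cancel] at h4
  rw [gromov_comm N.m 1 x (x * u n), h4, gromov_comm N.m 1 x⁻¹ (u n)] at h3
  rw [abs_le] at *
  constructor <;> linarith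

theorem gp_bus (N : Nice S d δ A) (hgp : GP bd δ gp) (b : B) (y : G) :
    |busemann d bd 1 y b - (2 * gp b y - d 1 y)| ≤ 2 * δ := by
  have key : ∀ u, bd.conv u b →
      limsup (fun n => d 1 (u n) - d y (u n)) atTop ∈
        Icc (2 * gp b y - d 1 y - 2 * δ) (2 * gp b y - d 1 y + 2 * δ) := by
    intro u hu
    have hE : ∀ᶠ n in atTop, d 1 (u n) - d y (u n) ∈
        Icc (2 * gp b y - d 1 y - 2 * δ) (2 * gp b y - d 1 y + 2 * δ) := by
      filter_upwards [hgp u b y hu] with n hn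
      rw [abs_le] at hn
      have e1 := N.m.symm (u n) 1
      have e2 := N.m.symm (u n) y
      have e3 := N.m.symm y 1
      unfold gromov at hn
      constructor <;> linarith
    have hlo : ∀ᶠ n in atTop, 2 * gp b y - d 1 y - 2 * δ ≤ d 1 (u n) - d y (u n) := hE.mono fun n h => h.1
    have hhi : ∀ᶠ n in atTop, d 1 (u n) - d y (u n) ≤ 2 * gp b y - d 1 y + 2 * δ := hE.mono fun n h => h.2
    constructor
    · exact le_limsup_of_frequently_le hlo.frequently (isBoundedUnder_of_eventually_le hhi)
    · exact limsup_le_of_le (isBoundedUnder_of_eventually_ge hlo).isCoboundedUnder_le hhi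
  obtain ⟨u, hu⟩ := bd.conv_surj b
  have h1 := key u hu
  unfold busemann
  have hle : ∀ t ∈ {t : ℝ | ∃ u, bd.conv u b ∧ t = limsup (fun n => d 1 (u n) - d y (u n)) atTop},
      t ≤ 2 * gp b y - d 1 y + 2 * δ := by
    rintro t ⟨u, hu, rfl⟩
    exact (key u hu).2
  have hmem : limsup (fun n => d 1 (u n) - d y (u n)) atTop ∈
      {t : ℝ | ∃ u, bd.conv u b ∧ t = limsup (fun n => d 1 (u n) - d y (u n)) atTop} := ⟨u, hu, rfl⟩
  have h2 := csSup_le ⟨_, hmem⟩ hle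
  have h3 := le_csSup ⟨_, hle⟩ hmem
  have h4 := h1.1
  rw [abs_le]
  constructor <;> linarith

end Bdry

section Vis

variable {S : Finset G} {d : G → G → ℝ} {δ A : ℝ} {B : Type*} [MetricSpace B]
variable {bd : BoundaryData G d B} {gp : B → G → ℝ} {ε C : ℝ}

theorem gp_V1 (N : Nice S d δ A) (hgp : GP bd δ gp) (hvis : IsVisualMetric d bd ε C) {b b' : B} {y : G}
    {r : ℝ} (h : r ≤ gp b y) (hd : dist b b' < Real.exp (-ε * r) / C) : r - 3 * δ ≤ gp b' y := by
  have hδ := N.hδ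
  by_cases hbb : b = b'
  · rw [← hbb]; linarith
  obtain ⟨hε, hC, hv⟩ := hvis
  obtain ⟨u, hu⟩ := bd.conv_surj b
  obtain ⟨w, hw⟩ := bd.conv_surj b'
  have h1 := (hv u w b b' hu hw hbb).2
  have h2 : Real.exp (-ε * seqGromov d u w) < Real.exp (-ε * r) := by
    rw [lt_div_iff₀ hC] at hd
    linarith
  rw [Real.exp_lt_exp] at h2
  have h3 : r < seqGromov d u w := by nlinarith
  have h4 := eventually_lt_of_lt_liminf h3
    (isBoundedUnder_of_eventually_ge (Eventually.of_forall fun n => gromov_nonneg N.m 1 (u n) (w n)))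
  obtain ⟨n, ⟨a1, a2⟩, a3⟩ := ((h4.and (hgp u b y hu)).and (hgp w b' y hw)).exists
  rw [abs_le] at a2 a3
  have a4 := N.hyp 1 (u n) (w n) y
  have : r - δ ≤ min (gromov d 1 (u n) (w n)) (gromov d 1 (u n) y) := le_min (by linarith) (by linarith)
  linarith

theorem gp_V2 (N : Nice S d δ A) (hgp : GP bd δ gp) (hvis : IsVisualMetric d bd ε C) {b b' : B} {y : G}
    {r : ℝ} (h : r ≤ gp b y) (h' : r ≤ gp b' y) : dist b b' ≤ C * Real.exp (-ε * (r - 2 * δ)) := by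
  have hδ := N.hδ
  obtain ⟨hε, hC, hv⟩ := hvis
  by_cases hbb : b = b'
  · rw [hbb, dist_self]; positivity
  obtain ⟨u, hu⟩ := bd.conv_surj b
  obtain ⟨w, hw⟩ := bd.conv_surj b'
  have h1 := (hv u w b b' hu hw hbb).1
  have hn : ¬ Tendsto (fun n => gromov d 1 (u n) (w n)) atTop atTop := by
    intro h
    exact hbb (bd.conv_unique w b b' ((bd.conv_iff u w b hu).2 h) hw)
  rw [Filter.tendsto_atTop] at hn
  push Not at hn
  obtain ⟨K, hK⟩ := hn
  have h2 : r - 2 * δ ≤ seqGromov d u w := by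
    refine le_liminf_of_le (IsCobounded.of_frequently_le (l := K) ?_) ?_
    · rw [frequently_map]
      exact hK.mono fun n hn => hn.le
    · filter_upwards [hgp u b y hu, hgp w b' y hw] with n a2 a3
      rw [abs_le] at a2 a3
      have a4 := N.hyp 1 y (u n) (w n)
      rw [gromov_comm N.m 1 y, gromov_comm N.m 1 y] at a4
      have : r - δ ≤ min (gromov d 1 (u n) y) (gromov d 1 (w n) y) := le_min (by linarith) (by linarith)
      linarith
  refine h1.trans (mul_le_mul_of_nonneg_left (Real.exp_le_exp.2 ?_) hC.le)
  nlinarith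

/-- open shadows -/
def Shm (d : G → G → ℝ) (gp : B → G → ℝ) (ε C r : ℝ) (x : G) : Set B :=
  thickening (Real.exp (-ε * (d 1 x - r)) / C) {b | d 1 x - r ≤ gp b x}

theorem Shm_open (r : ℝ) (x : G) : IsOpen (Shm d gp ε C r x) := isOpen_thickening

theorem mem_Shm (hvis : IsVisualMetric d bd ε C) {r : ℝ} {x : G} {b : B} (h : d 1 x - r ≤ gp b x) :
    b ∈ Shm d gp ε C r x :=
  self_subset_thickening (div_pos (Real.exp_pos _) hvis.2.1) _ h

theorem Shm_sub (N : Nice S d δ A) (hgp : GP bd δ gp) (hvis : IsVisualMetric d bd ε C) {r : ℝ} {x : G}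
    {b : B} (h : b ∈ Shm d gp ε C r x) : d 1 x - r - 3 * δ ≤ gp b x := by
  unfold Shm at h
  rw [mem_thickening_iff] at h
  obtain ⟨z, hz, hd⟩ := h
  rw [dist_comm] at hd
  exact gp_V1 N hgp hvis hz hd

end Vis

end

section
open Filter MeasureTheory Topology Metric Set
open scoped ENNReal

section Meas

variable {S : Finset G} {d : G → G → ℝ} {δ A : ℝ} {B : Type*} [MetricSpace B] [MeasurableSpace B]
  [BorelSpace B]
variable {bd : BoundaryData G d B} {gp : B → G → ℝ} {ε C v : ℝ} {ρ : Measure B} [IsFiniteMeasure ρ]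

theorem qc_int (hsmul : ∀ γ : G, Measurable (bd.smul γ)) (x : G) (hac : actPush bd x ρ ≪ ρ)
    {E : Set B} (hE : MeasurableSet E) :
    ρ ((bd.smul x⁻¹) ⁻¹' E) = ∫⁻ b in E, (actPush bd x ρ).rnDeriv ρ b ∂ρ := by
  have : IsFiniteMeasure (actPush bd x ρ) := by unfold actPush; infer_instance
  rw [Measure.setLIntegral_rnDeriv' hac hE]
  unfold actPush
  rw [Measure.map_apply (hsmul _) hE]

theorem qc_bounds (hsmul : ∀ γ : G, Measurable (bd.smul γ)) (hv : 0 ≤ v)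
    (hqc : IsQuasiconformalMeasure bd ρ v) :
    ∃ C0 : ℝ, 0 < C0 ∧ ∀ (x : G) (E : Set B), MeasurableSet E → ∀ t : ℝ,
      ((∀ b ∈ E, busemann d bd 1 x⁻¹ b ≤ t) →
        ρ ((bd.smul x⁻¹) ⁻¹' E) ≤ ENNReal.ofReal (C0 * Real.exp (v * t)) * ρ E) ∧
      ((∀ b ∈ E, t ≤ busemann d bd 1 x⁻¹ b) →
        ENNReal.ofReal (C0⁻¹ * Real.exp (v * t)) * ρ E ≤ ρ ((bd.smul x⁻¹) ⁻¹' E)) := by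
  obtain ⟨C0, hC0, h⟩ := hqc
  refine ⟨C0, hC0, fun x E hE t => ?_⟩
  obtain ⟨h1, -, h2⟩ := h x
  rw [qc_int hsmul x h1 hE]
  have h3 : ∀ᵐ b ∂(ρ.restrict E), _ := ae_restrict_of_ae h2
  constructor
  · intro ht
    rw [← setLIntegral_const]
    refine lintegral_mono_ae ?_
    filter_upwards [h3, ae_restrict_mem hE] with b hb hbE
    refine hb.1.trans (ENNReal.ofReal_le_ofReal ?_)
    have := ht b hbE
    gcongr
  · intro ht
    rw [← setLIntegral_const]
    refine lintegral_mono_ae ?_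
    filter_upwards [h3, ae_restrict_mem hE] with b hb hbE
    refine le_trans (ENNReal.ofReal_le_ofReal ?_) hb.2
    have := ht b hbE
    gcongr

theorem rho_upper (N : Nice S d δ A) (hgp : GP bd δ gp) (hvis : IsVisualMetric d bd ε C)
    (hsmul : ∀ γ : G, Measurable (bd.smul γ)) (hv : 0 ≤ v) (hqc : IsQuasiconformalMeasure bd ρ v) :
    ∃ C1 : ℝ, 0 < C1 ∧ ∀ y r, ρ {b | r ≤ gp b y} ≤ ENNReal.ofReal (C1 * Real.exp (-(v * r))) := by
  obtain ⟨C0, hC0, hb⟩ := qc_bounds hsmul hv hqc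
  obtain ⟨r0, hr0, hi⟩ := gp_interp N hgp
  have hδ := N.hδ
  set m := (ρ univ).toReal with hm
  have hm0 : 0 ≤ m := ENNReal.toReal_nonneg
  have hρ : ρ univ = ENNReal.ofReal m := (ENNReal.ofReal_toReal (measure_ne_top _ _)).symm
  have hsh : ∀ x, ρ (Shm d gp ε C r0 x) ≤
      ENNReal.ofReal (C0 * Real.exp (v * (2 * r0 + 12 * δ - d 1 x)) * m) := by
    intro x
    have hE : MeasurableSet ((bd.smul x) ⁻¹' (Shm d gp ε C r0 x)) :=
      hsmul x (Shm_open r0 x).measurableSet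
    have h1 := (hb x _ hE (2 * r0 + 12 * δ - d 1 x)).1 (by
      intro b hbE
      have a1 := Shm_sub N hgp hvis hbE
      have a2 := gp_smul N hgp b x
      have a3 := gp_bus N hgp b x⁻¹
      have a4 : d 1 x⁻¹ = d 1 x := by
        have := N.li x 1 x⁻¹
        rw [mul_one, mul_inv_cancel] at this
        rw [← this, N.m.symm]
      rw [abs_le] at a2 a3
      linarith)
    have e : (bd.smul x⁻¹) ⁻¹' ((bd.smul x) ⁻¹' (Shm d gp ε C r0 x)) = Shm d gp ε C r0 x := by
      ext b
      simp [smul_smul_inv bd N.m]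
    rw [e] at h1
    refine h1.trans ?_
    rw [ENNReal.ofReal_mul (p := C0 * Real.exp (v * (2 * r0 + 12 * δ - d 1 x))) (by positivity), ← hρ]
    exact mul_le_mul_right (measure_mono (subset_univ _)) _
  refine ⟨(C0 * Real.exp (v * (2 * r0 + 12 * δ)) + 1) * Real.exp (v * δ) * (m + 1), by positivity,
    fun y r => ?_⟩
  have hK : 0 ≤ C0 * Real.exp (v * (2 * r0 + 12 * δ)) := by positivity
  set K := C0 * Real.exp (v * (2 * r0 + 12 * δ)) with hKdef
  rcases le_or_gt r δ with hr | hr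
  · refine (measure_mono (subset_univ _)).trans ?_
    rw [hρ]
    apply ENNReal.ofReal_le_ofReal
    have h1 : 1 ≤ Real.exp (v * δ) * Real.exp (-(v * r)) := by
      rw [← Real.exp_add]
      apply Real.one_le_exp
      nlinarith
    calc m ≤ (1 * 1) * (m + 1) := by linarith
      _ ≤ ((K + 1) * (Real.exp (v * δ) * Real.exp (-(v * r)))) * (m + 1) := by
        gcongr; linarith
      _ = _ := by ring
  · rcases le_or_gt (r - δ) (d 1 y) with hry | hry
    · obtain ⟨z, hz1, hz2⟩ := hi y (r - δ) (by linarith) hry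
      have hsub : {b | r ≤ gp b y} ⊆ Shm d gp ε C r0 z := fun b hb =>
        mem_Shm hvis (hz2 b (by have : r ≤ gp b y := hb; linarith))
      refine (measure_mono hsub).trans ((hsh z).trans (ENNReal.ofReal_le_ofReal ?_))
      have e1 : C0 * Real.exp (v * (2 * r0 + 12 * δ - d 1 z)) ≤
          K * (Real.exp (v * δ) * Real.exp (-(v * r))) := by
        rw [hKdef, ← Real.exp_add, mul_assoc, ← Real.exp_add]
        gcongr
        nlinarith
      calc C0 * Real.exp (v * (2 * r0 + 12 * δ - d 1 z)) * m ≤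
          (K + 1) * (Real.exp (v * δ) * Real.exp (-(v * r))) * (m + 1) := by
            refine mul_le_mul (e1.trans ?_) (by linarith) hm0 (by positivity)
            gcongr; linarith
        _ = _ := by ring
    · have : {b | r ≤ gp b y} = ∅ := by
        ext b
        simp only [mem_setOf_eq, mem_empty_iff_false, iff_false, not_le]
        have := gp_le N hgp b y
        linarith
      rw [this]; simp

theorem rho_lower (N : Nice S d δ A) (hgp : GP bd δ gp) (hvis : IsVisualMetric d bd ε C)
    (hsmul : ∀ γ : G, Measurable (bd.smul γ)) (hv : 0 < v) (hqc : IsQuasiconformalMeasure bd ρ v)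
    {E : Set B} (hE : MeasurableSet E) (hinv : ∀ x b, b ∈ E → bd.smul x b ∈ E) (hE0 : ρ E ≠ 0) :
    ∃ R0 c : ℝ, 0 < c ∧ ∀ r, R0 ≤ r → ∀ x,
      ENNReal.ofReal (c * Real.exp (-(v * d 1 x))) ≤ ρ (Shm d gp ε C r x ∩ E) := by
  obtain ⟨C0, hC0, hb⟩ := qc_bounds hsmul hv.le hqc
  obtain ⟨C1, hC1, hup⟩ := rho_upper N hgp hvis hsmul hv.le hqc
  have hδ := N.hδ
  set e := (ρ E).toReal with he
  have he0 : 0 < e := ENNReal.toReal_pos hE0 (measure_ne_top _ _)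
  have hρe : ρ E = ENNReal.ofReal e := (ENNReal.ofReal_toReal (measure_ne_top _ _)).symm
  obtain ⟨R, hR0, hR⟩ := exists_small C1 (e / 2) hC1.le (half_pos he0)
  refine ⟨R / v + 2 * δ, C0⁻¹ * Real.exp (-(v * (2 * δ + 2 * δ))) * (e / 2), by positivity, fun r hr x => ?_⟩
  set D := (bd.smul x) ⁻¹' (Shm d gp ε C r x ∩ E) with hD
  have hDm : MeasurableSet D := hsmul x ((Shm_open r x).measurableSet.inter hE)
  have hdiff : ρ (E \ D) ≤ ENNReal.ofReal (e / 2) := by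
    have hsub : E \ D ⊆ {b | r - 2 * δ ≤ gp b x⁻¹} := by
      rintro b ⟨hbE, hbD⟩
      have h1 : bd.smul x b ∉ Shm d gp ε C r x := fun h => hbD ⟨h, hinv x b hbE⟩
      have h2 : ¬ (d 1 x - r ≤ gp (bd.smul x b) x) := fun h => h1 (mem_Shm hvis h)
      have h3 := gp_smul N hgp b x
      rw [abs_le] at h3
      simp only [mem_setOf_eq]
      linarith
    refine (measure_mono hsub).trans ((hup _ _).trans (ENNReal.ofReal_le_ofReal (hR _ ?_)))
    have : R / v ≤ r - 2 * δ := by linarith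
    rw [div_le_iff₀ hv] at this
    linarith
  have hDl : ENNReal.ofReal (e / 2) ≤ ρ D := by
    have h1 : ρ E ≤ ρ D + ρ (E \ D) := by
      refine le_trans (measure_mono ?_) (measure_union_le _ _)
      intro b hb
      by_cases h : b ∈ D
      · exact Or.inl h
      · exact Or.inr ⟨hb, h⟩
    have h2 : ENNReal.ofReal (e / 2) + ENNReal.ofReal (e / 2) ≤ ρ D + ENNReal.ofReal (e / 2) := by
      rw [← ENNReal.ofReal_add (by positivity) (by positivity), add_halves, ← hρe]
      exact h1.trans (add_le_add_right hdiff _)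
    exact (ENNReal.add_le_add_iff_right ENNReal.ofReal_ne_top).1 h2
  have h1 := (hb x D hDm (-(d 1 x) - 2 * δ - 2 * δ)).2 (by
    intro b hbE
    have a3 := gp_bus N hgp b x⁻¹
    have a5 := gp_ge N hgp b x⁻¹
    have a4 : d 1 x⁻¹ = d 1 x := by
      have := N.li x 1 x⁻¹
      rw [mul_one, mul_inv_cancel] at this
      rw [← this, N.m.symm]
    rw [abs_le] at a3
    linarith)
  have e1 : (bd.smul x⁻¹) ⁻¹' D = Shm d gp ε C r x ∩ E := by
    ext b
    simp [hD, smul_smul_inv bd N.m]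
  rw [e1] at h1
  refine le_trans ?_ h1
  refine le_trans ?_ (mul_le_mul_right hDl _)
  rw [← ENNReal.ofReal_mul (by positivity)]
  apply ENNReal.ofReal_le_ofReal
  apply le_of_eq
  have : v * (-(d 1 x) - 2 * δ - 2 * δ) = -(v * (2 * δ + 2 * δ)) + -(v * d 1 x) := by ring
  rw [this, Real.exp_add]
  ring

theorem vit (N : Nice S d δ A) (hgp : GP bd δ gp) (hvis : IsVisualMetric d bd ε C) {r : ℝ} (A0 : Set G)
    (hne : ∀ x ∈ A0, (Shm d gp ε C r x).Nonempty) :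
    ∃ A' ⊆ A0, A'.PairwiseDisjoint (Shm d gp ε C r) ∧ ∀ x ∈ A0, ∃ x' ∈ A', d 1 x' ≤ d 1 x + 1 ∧
      d 1 x' - (r + 1 + 5 * δ) ≤ gromov d 1 x x' := by
  obtain ⟨A', hA', hdis, h⟩ := Vitali.exists_disjoint_subfamily_covering_enlargement
    (Shm d gp ε C r) A0 (fun x => Real.exp (-(d 1 x))) (Real.exp 1) (by simp)
    (fun x _ => (Real.exp_pos _).le) 1 (fun x _ => by
      rw [Real.exp_le_one_iff]; have := N.m.nonneg 1 x; linarith) hne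
  refine ⟨A', hA', hdis, fun x hx => ?_⟩
  obtain ⟨x', hx', ⟨b, hb1, hb2⟩, hle⟩ := h x hx
  rw [← Real.exp_add, Real.exp_le_exp] at hle
  refine ⟨x', hx', by linarith, ?_⟩
  have a1 := Shm_sub N hgp hvis hb1
  have a2 := Shm_sub N hgp hvis hb2
  have := gp_gp N hgp b x x' (r := d 1 x' - 1 - r - 3 * δ) (by linarith) (by linarith)
  linarith

theorem covV [Countable G] (N : Nice S d δ A) (hgp : GP bd δ gp) (hvis : IsVisualMetric d bd ε C)
    (hsmul : ∀ γ : G, Measurable (bd.smul γ)) (hv : 0 ≤ v) (hqc : IsQuasiconformalMeasure bd ρ v)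
    {E : Set B} (hE : MeasurableSet E) {r c : ℝ} (hc : 0 < c)
    (hlow : ∀ x, ENNReal.ofReal (c * Real.exp (-(v * d 1 x))) ≤ ρ (Shm d gp ε C r x ∩ E)) :
    ∃ C3 : ℝ≥0∞, C3 ≠ ⊤ ∧ ∀ D U : Set B, (∀ b ∈ D, ∃ x, b ∈ Shm d gp ε C r x ∧ Shm d gp ε C r x ⊆ U) →
      ρ D ≤ C3 * ρ (U ∩ E) := by
  obtain ⟨C1, hC1, hup⟩ := rho_upper N hgp hvis hsmul hv hqc
  refine ⟨ENNReal.ofReal (C1 * Real.exp (v * (r + 1 + 8 * δ)) / c), ENNReal.ofReal_ne_top, fun D U hD => ?_⟩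
  set A0 : Set G := {x | Shm d gp ε C r x ⊆ U} with hA0
  obtain ⟨A', hA', hdis, h⟩ := vit N hgp hvis (r := r) A0 (fun x _ => by
    by_contra hne
    rw [not_nonempty_iff_eq_empty] at hne
    have := hlow x
    rw [hne, empty_inter, measure_empty, nonpos_iff_eq_zero, ENNReal.ofReal_eq_zero] at this
    have : 0 < c * Real.exp (-(v * d 1 x)) := by positivity
    linarith)
  have hsub : D ⊆ ⋃ x ∈ A', {b | d 1 x - (r + 1 + 8 * δ) ≤ gp b x} := by
    intro b hb
    obtain ⟨x, hx1, hx2⟩ := hD b hb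
    obtain ⟨x', hx', h1, h2⟩ := h x hx2
    simp only [mem_iUnion]
    refine ⟨x', hx', ?_⟩
    have a1 := Shm_sub N hgp hvis hx1
    have hδ := N.hδ
    have := gp_tri N hgp b x' x (r := d 1 x' - (r + 1 + 5 * δ)) (by linarith)
      (by rw [gromov_comm N.m]; exact h2)
    simp only [mem_setOf_eq]
    linarith
  calc ρ D ≤ ρ (⋃ x ∈ A', {b | d 1 x - (r + 1 + 8 * δ) ≤ gp b x}) := measure_mono hsub
    _ ≤ ∑' x : A', ρ {b | d 1 (x : G) - (r + 1 + 8 * δ) ≤ gp b x} := measure_biUnion_le _ (to_countable _) _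
    _ ≤ ∑' x : A', ENNReal.ofReal (C1 * Real.exp (v * (r + 1 + 8 * δ)) / c) * ρ (Shm d gp ε C r x ∩ E) := by
        refine ENNReal.tsum_le_tsum fun x => ?_
        refine (hup _ _).trans (le_trans ?_ (mul_le_mul_right (hlow x) _))
        rw [← ENNReal.ofReal_mul (by positivity)]
        apply ENNReal.ofReal_le_ofReal
        apply le_of_eq
        have : -(v * (d 1 (x:G) - (r + 1 + 8 * δ))) = v * (r + 1 + 8 * δ) + -(v * d 1 (x : G)) := by ring
        rw [this, Real.exp_add]
        field_simp
    _ = ENNReal.ofReal (C1 * Real.exp (v * (r + 1 + 8 * δ)) / c) * ρ (⋃ x ∈ A', Shm d gp ε C r x ∩ E) := by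
        rw [ENNReal.tsum_mul_left, measure_biUnion (to_countable _)
          (hdis.mono fun x => inter_subset_left) (fun x _ => (Shm_open r x).measurableSet.inter hE)]
    _ ≤ _ := by
        refine mul_le_mul_right (measure_mono ?_) _
        intro b hb
        simp only [mem_iUnion] at hb
        obtain ⟨x, hx, hb1, hb2⟩ := hb
        exact ⟨hA' hx hb1, hb2⟩

theorem hitV [Countable G] [MeasurableSpace G] [MeasurableSingletonClass G]
    {μ : G → ℝ} {P : Measure (ℕ → G)} {g : G → G → ℝ} (H : WG μ P g)
    (N : Nice S d δ A) (hgp : GP bd δ gp) (hvis : IsVisualMetric d bd ε C)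
    {K : ℝ} (hK : 1 ≤ K) (hcmp : ∀ x y z, gromov g z x y ≤ K * gromov d z x y + K)
    {r c : ℝ} (hc : 0 < c)
    (hlow : ∀ x, ENNReal.ofReal (c * Real.exp (-(v * d 1 x))) ≤ ρ (Shm d gp ε C r x)) :
    ∃ C2 : ℝ≥0∞, C2 ≠ ⊤ ∧ ∀ (A0 : Set G) (U : Set B) (M : ℝ), (∀ x ∈ A0, Shm d gp ε C r x ⊆ U) →
      (∀ x ∈ A0, v * d 1 x - g 1 x ≤ M) →
      P {ω | ∃ n, walkPos n ω ∈ A0} ≤ C2 * ENNReal.ofReal (Real.exp M) * ρ U := by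
  have := H.hP.1
  set q := 2 * (K * (r + 1 + 5 * δ) + K) with hq
  refine ⟨(P escE)⁻¹ * ENNReal.ofReal (Real.exp q) * ENNReal.ofReal c⁻¹, ?_, fun A0 U M hU hM => ?_⟩
  · refine ENNReal.mul_ne_top (ENNReal.mul_ne_top (ENNReal.inv_ne_top.2 ?_) ENNReal.ofReal_ne_top)
      ENNReal.ofReal_ne_top
    exact H.esc.ne'
  obtain ⟨A', hA', hdis, h⟩ := vit N hgp hvis (r := r) A0 (fun x _ => by
    by_contra hne
    rw [not_nonempty_iff_eq_empty] at hne
    have := hlow x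
    rw [hne, measure_empty, nonpos_iff_eq_zero, ENNReal.ofReal_eq_zero] at this
    have : 0 < c * Real.exp (-(v * d 1 x)) := by positivity
    linarith)
  set Q : G → Set G := fun x => {z | g 1 x + g x z - q ≤ g 1 z} with hQ
  have hsub : {ω : ℕ → G | ∃ n, walkPos n ω ∈ A0} ⊆ ⋃ x ∈ A', {ω | ∃ n, 1 * walkPos n ω ∈ Q x} := by
    rintro ω ⟨n, hn⟩
    obtain ⟨x', hx', -, h2⟩ := h _ hn
    simp only [mem_iUnion]
    refine ⟨x', hx', n, ?_⟩
    rw [one_mul]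
    have h3 := gromov_add N.m 1 x' (walkPos n ω)
    rw [gromov_comm N.m 1 x'] at h3
    have h4 := hcmp 1 (walkPos n ω) x'
    have h5 : K * gromov d x' 1 (walkPos n ω) ≤ K * (r + 1 + 5 * δ) := by
      apply mul_le_mul_of_nonneg_left _ (by linarith)
      linarith
    have h6 : gromov g x' 1 (walkPos n ω) ≤ K * (r + 1 + 5 * δ) + K := by linarith
    unfold gromov at h6
    have e1 := H.m.symm (walkPos n ω) x'
    simp only [hQ, mem_setOf_eq]
    linarith
  calc P {ω : ℕ → G | ∃ n, walkPos n ω ∈ A0} ≤ P (⋃ x ∈ A', {ω | ∃ n, 1 * walkPos n ω ∈ Q x}) :=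
        measure_mono hsub
    _ ≤ ∑' x : A', P {ω | ∃ n, 1 * walkPos n ω ∈ Q x} := measure_biUnion_le _ (to_countable _) _
    _ ≤ ∑' x : A', ((P escE)⁻¹ * ENNReal.ofReal (Real.exp q) * ENNReal.ofReal c⁻¹ *
          ENNReal.ofReal (Real.exp M)) * ρ (Shm d gp ε C r x) := by
        refine ENNReal.tsum_le_tsum fun x => ?_
        refine (H.P1 (Q x) 1 x q (fun z hz => hz)).trans ?_
        rw [mul_assoc, mul_assoc, mul_assoc, mul_assoc]
        refine mul_le_mul_right (mul_le_mul_right ?_ _) _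
        refine le_trans ?_ (mul_le_mul_right (mul_le_mul_right (hlow x) _) _)
        rw [← ENNReal.ofReal_mul (by positivity), ← ENNReal.ofReal_mul (by positivity)]
        apply ENNReal.ofReal_le_ofReal
        have := hM x (hA' x.2)
        have e : c⁻¹ * (Real.exp M * (c * Real.exp (-(v * d 1 (x : G))))) = Real.exp (M + -(v * d 1 (x:G))) := by
          rw [Real.exp_add]; field_simp
        rw [e]
        apply Real.exp_le_exp.2
        linarith
    _ = ((P escE)⁻¹ * ENNReal.ofReal (Real.exp q) * ENNReal.ofReal c⁻¹ *
          ENNReal.ofReal (Real.exp M)) * ρ (⋃ x ∈ A', Shm d gp ε C r x) := by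
        rw [ENNReal.tsum_mul_left, measure_biUnion (to_countable _)
          hdis (fun x _ => (Shm_open r x).measurableSet)]
    _ ≤ _ := by
        refine mul_le_mul_right (measure_mono ?_) _
        intro b hb
        simp only [mem_iUnion] at hb
        obtain ⟨x, hx, hb1⟩ := hb
        exact hU x (hA' hx) hb1

end Meas

end

section
open Filter MeasureTheory Topology Metric Set
open scoped ENNReal

section Core

variable [Countable G] [MeasurableSpace G] [MeasurableSingletonClass G]
variable {μ : G → ℝ} {P : Measure (ℕ → G)} {g : G → G → ℝ}
variable {S : Finset G} {d : G → G → ℝ} {δ A δ' A' : ℝ} {B : Type*} [MetricSpace B] [MeasurableSpace B]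
  [BorelSpace B]
variable {bd : BoundaryData G d B} {gp : B → G → ℝ} {ε C v : ℝ} {ρ : Measure B} [IsFiniteMeasure ρ]

theorem tight (H : WG μ P g) (Nd : Nice S d δ A) (Ng : Nice S g δ' A')
    (hid : ∀ n, Integrable (fun ω => d 1 (walkPos n ω)) P) {K0 : ℝ}
    (hK0 : ∀ n, v * av P d n ≤ av P g n + K0) {C2 : ℝ≥0∞} (hC2 : C2 ≠ ⊤)
    (hit : ∀ (A0 : Set G) (M : ℝ), (∀ x ∈ A0, v * d 1 x - g 1 x ≤ M) →
      P {ω | ∃ n, walkPos n ω ∈ A0} ≤ C2 * ENNReal.ofReal (Real.exp M)) :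
    ∃ K1 : ℝ, ∀ (n : ℕ) (M : ℝ), 0 < M →
      P {ω | M < v * d 1 (walkPos n ω) - g 1 (walkPos n ω)} ≤ ENNReal.ofReal (K1 / M) := by
  have := H.hP.1
  have hig := int_W H.hP H.m H.li (H.int_one Ng)
  set c2 := C2.toReal with hc2
  have hc20 : 0 ≤ c2 := ENNReal.toReal_nonneg
  have hT := tailC_ne_top c2 hc20
  set K := ∑' k : ℕ, ENNReal.ofReal (c2 * Real.exp (-k)) with hK
  refine ⟨K0 + K.toReal, fun n M hM => ?_⟩
  set T : (ℕ → G) → ℝ := fun ω => v * d 1 (walkPos n ω) - g 1 (walkPos n ω) with hTdef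
  have hTi : Integrable T P := ((hid n).const_mul v).sub (hig n)
  have h1 : ∫⁻ ω, ENNReal.ofReal (-T ω) ∂P ≤ K := by
    refine tail_mean P c2 (fun ω => -T ω) (fun k => ?_) (fun k => ?_)
    · exact meas_W n (fun x => (k:ℝ) ≤ -(v * d 1 x - g 1 x))
    · have h2 := hit {x | v * d 1 x - g 1 x ≤ -(k:ℝ)} (-(k:ℝ)) (fun x hx => hx)
      refine le_trans (measure_mono ?_) (h2.trans ?_)
      · intro ω hω
        refine ⟨n, ?_⟩
        have h3 : (k:ℝ) ≤ -(v * d 1 (walkPos n ω) - g 1 (walkPos n ω)) := hω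
        simp only [mem_setOf_eq]
        linarith
      · rw [ENNReal.ofReal_mul hc20, hc2, ENNReal.ofReal_toReal hC2]
  have hneg : Integrable (fun ω => max (-T ω) 0) P := hTi.neg.pos_part
  have h2 : ∫ ω, max (-T ω) 0 ∂P ≤ K.toReal := by
    rw [integral_eq_lintegral_of_nonneg_ae
      (Eventually.of_forall fun ω => le_max_right _ _ : 0 ≤ᵐ[P] fun ω => max (-T ω) 0)
      hneg.aestronglyMeasurable]
    refine ENNReal.toReal_mono hT (le_trans (lintegral_mono fun ω => ?_) h1)
    beta_reduce
    rw [ENNReal.ofReal_max]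
    simp
  have h3 : ∫ ω, T ω ∂P ≤ K0 := by
    have h4 : ∫ ω, T ω ∂P = v * av P d n - av P g n := by
      rw [hTdef, integral_sub ((hid n).const_mul v) (hig n), integral_const_mul]
      rfl
    have := hK0 n
    linarith
  have h4 : ∫ ω, max (T ω) 0 ∂P ≤ K0 + K.toReal := by
    have e : ∀ ω, max (T ω) 0 = T ω + max (-T ω) 0 := by
      intro ω
      rcases le_total 0 (T ω) with h | h
      · rw [max_eq_left h, max_eq_right (by linarith)]; ring
      · rw [max_eq_right h, max_eq_left (by linarith)]; ring
    simp_rw [e]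
    rw [integral_add hTi hneg]
    exact add_le_add h3 h2
  have h5 := mul_meas_ge_le_integral_of_nonneg (Eventually.of_forall fun ω => le_max_right (T ω) 0)
    hTi.pos_part M
  have h6 : P.real {ω | M ≤ max (T ω) 0} ≤ (K0 + K.toReal) / M := by
    rw [le_div_iff₀ hM]; linarith
  rw [← ENNReal.ofReal_toReal (measure_ne_top P {ω | M < v * d 1 (walkPos n ω) - g 1 (walkPos n ω)})]
  refine ENNReal.ofReal_le_ofReal (le_trans (ENNReal.toReal_mono (measure_ne_top _ _) (measure_mono ?_)) h6)
  intro ω hω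
  have h7 : M < v * d 1 (walkPos n ω) - g 1 (walkPos n ω) := hω
  show M ≤ max (T ω) 0
  exact le_max_of_le_left h7.le

theorem nu_ac (H : WG μ P g) (Nd : Nice S d δ A) (Ng : Nice S g δ' A') (hgp : GP bd δ gp)
    (hvis : IsVisualMetric d bd ε C)
    (hsmul : ∀ γ : G, Measurable (bd.smul γ)) (hρ : ρ ≠ 0) (hv : 0 < v)
    (hqc : IsQuasiconformalMeasure bd ρ v)
    (hid : ∀ n, Integrable (fun ω => d 1 (walkPos n ω)) P) {K0 : ℝ}
    (hK0 : ∀ n, v * av P d n ≤ av P g n + K0)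
    {Zinf : (ℕ → G) → B} (hZ : Measurable Zinf)
    (hconv : ∀ᵐ ω ∂P, bd.conv (fun n => walkPos n ω) (Zinf ω)) :
    P.map Zinf ≪ ρ := by
  have := H.hP.1
  have hδ := Nd.hδ
  obtain ⟨hε, hC, -⟩ := id hvis
  obtain ⟨R0, c, hc, hlow0⟩ := rho_lower (gp := gp) Nd hgp hvis hsmul hv hqc MeasurableSet.univ
    (fun _ _ _ => mem_univ _) (by simpa using hρ)
  simp only [inter_univ] at hlow0
  obtain ⟨K, hK, hcmp⟩ := Ng.compare Nd
  obtain ⟨K', hK', hcmp'⟩ := Nd.compare Ng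
  obtain ⟨K1, htight⟩ : ∃ K1 : ℝ, ∀ (n : ℕ) (M : ℝ), 0 < M →
      P {ω | M < v * d 1 (walkPos n ω) - g 1 (walkPos n ω)} ≤ ENNReal.ofReal (K1 / M) := by
    obtain ⟨C2, hC2, hit⟩ := hitV H Nd hgp hvis hK hcmp hc (hlow0 R0 le_rfl)
    refine tight H Nd Ng hid hK0 (C2 := C2 * ρ univ) (ENNReal.mul_ne_top hC2 (measure_ne_top _ _)) ?_
    intro A0 M hM
    have := hit A0 univ M (fun _ _ => subset_univ _) hM
    rwa [mul_right_comm] at this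
  obtain ⟨CP, hCP, hP3⟩ := H.P3 Ng
  refine Measure.AbsolutelyContinuous.mk fun N hN hN0 => ?_
  rw [Measure.map_apply hZ hN]
  by_contra hne
  set e := (P (Zinf ⁻¹' N)).toReal / 4 with he
  have he0 : 0 < e := by
    have := ENNReal.toReal_pos hne (measure_ne_top _ _)
    positivity
  -- choose the constants
  obtain ⟨r1, hr1, hsm⟩ := exists_small CP e (by linarith) he0
  have hgood : ∀ n, P {ω | sh n ω ∈ (gE g r1 (walkPos n ω))ᶜ} ≤ ENNReal.ofReal e := by
    intro n
    rw [markov_fam H.hP n (fun x => (gE g r1 x)ᶜ) (fun x => (meas_gE g r1 x).compl)]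
    calc _ ≤ ∑' x, P {ω | walkPos n ω = x} * ENNReal.ofReal e := by
          refine ENNReal.tsum_le_tsum fun x => mul_le_mul_right ?_ _
          exact (H.gE_compl x hP3).trans (ENNReal.ofReal_le_ofReal (hsm r1 le_rfl))
      _ = ENNReal.ofReal e := by rw [ENNReal.tsum_mul_right, tsum_pos, one_mul]
  set r := max R0 (K' * r1 + K' + δ) with hr
  obtain ⟨C2, hC2, hit⟩ := hitV H Nd hgp hvis hK hcmp hc (hlow0 r (le_max_left _ _))
  set M := |K1| / e + 1 with hMdef
  have hM0 : 0 < M := by positivity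
  have hTM : ∀ n, P {ω | M < v * d 1 (walkPos n ω) - g 1 (walkPos n ω)} ≤ ENNReal.ofReal e := by
    intro n
    refine (htight n M hM0).trans (ENNReal.ofReal_le_ofReal ?_)
    rw [div_le_iff₀ hM0, hMdef]
    have h1 : e * (|K1| / e + 1) = |K1| + e := by field_simp
    have h2 := le_abs_self K1
    linarith
  obtain ⟨U, hNU, hUo, hUl⟩ : ∃ U ⊇ N, IsOpen U ∧ C2 * ENNReal.ofReal (Real.exp M) * ρ U ≤ ENNReal.ofReal e := by
    have hq : C2 * ENNReal.ofReal (Real.exp M) ≠ ⊤ := ENNReal.mul_ne_top hC2 ENNReal.ofReal_ne_top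
    set q := C2 * ENNReal.ofReal (Real.exp M) with hqd
    have h1 : ENNReal.ofReal e / (q + 1) ≠ 0 := by
      refine ENNReal.div_ne_zero.2 ⟨by simpa using he0, by simp [hq]⟩
    obtain ⟨U, hU, hUo, hUl⟩ := N.exists_isOpen_le_add ρ h1
    refine ⟨U, hU, hUo, ?_⟩
    rw [hN0, zero_add] at hUl
    calc q * ρ U ≤ (q + 1) * (ENNReal.ofReal e / (q + 1)) := mul_le_mul' le_self_add hUl
      _ ≤ ENNReal.ofReal e := ENNReal.mul_div_le
  set A0 : Set G := {x | Shm d gp ε C r x ⊆ U ∧ v * d 1 x - g 1 x ≤ M} with hA0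
  have hhit := (hit A0 U M (fun x hx => hx.1) (fun x hx => hx.2)).trans hUl
  set F : ℕ → Set (ℕ → G) := fun n => {ω | ∃ n, walkPos n ω ∈ A0} ∪
    ({ω | sh n ω ∈ (gE g r1 (walkPos n ω))ᶜ} ∪ {ω | M < v * d 1 (walkPos n ω) - g 1 (walkPos n ω)}) with hF
  have hFl : ∀ n, P (F n) ≤ ENNReal.ofReal (3 * e) := by
    intro n
    have e3 : ENNReal.ofReal (3 * e) = ENNReal.ofReal e + (ENNReal.ofReal e + ENNReal.ofReal e) := by
      rw [← ENNReal.ofReal_add he0.le he0.le, ← ENNReal.ofReal_add he0.le (by positivity)]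
      congr 1; ring
    rw [e3]
    refine (measure_union_le _ _).trans (add_le_add hhit ((measure_union_le _ _).trans
      (add_le_add (hgood n) (hTM n))))
  have hev : ∀ᵐ ω ∂P, ω ∈ Zinf ⁻¹' N → ∃ k, ∀ n, k ≤ n → ω ∈ F n := by
    filter_upwards [hconv] with ω hω hN'
    obtain ⟨s, hs, hball⟩ := Metric.isOpen_iff.1 hUo _ (hNU hN')
    -- d Z_n → ∞
    have hdinf : Tendsto (fun n => d 1 (walkPos n ω)) atTop atTop := by
      rw [Filter.tendsto_atTop]
      intro R
      obtain ⟨n0, hn0⟩ := conv_pair Nd bd hω hω R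
      filter_upwards [eventually_ge_atTop n0] with n hn
      exact (hn0 n n hn hn).trans (gromov_le_right Nd.m _ _ _)
    obtain ⟨R, hR, hRs⟩ := exists_small (C) (s / 2) hC.le (by positivity)
    obtain ⟨k, hk⟩ := eventually_atTop.1 (Filter.tendsto_atTop.1 hdinf (R / ε + r + 5 * δ))
    refine ⟨k, fun n hn => ?_⟩
    by_cases hg1 : sh n ω ∈ gE g r1 (walkPos n ω)
    swap
    · exact Or.inr (Or.inl hg1)
    by_cases hT1 : M < v * d 1 (walkPos n ω) - g 1 (walkPos n ω)
    · exact Or.inr (Or.inr hT1)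
    refine Or.inl ⟨n, ?_, not_lt.1 hT1⟩
    have hgpZ : d 1 (walkPos n ω) - r ≤ gp (Zinf ω) (walkPos n ω) := by
      obtain ⟨m, hm1, hm2⟩ := ((hgp _ _ (walkPos n ω) hω).and (eventually_ge_atTop n)).exists
      obtain ⟨j, rfl⟩ := Nat.exists_eq_add_of_le hm2
      have a1 := hg1 j
      have a2 := gromov_li H.li (walkPos n ω) 1 (walkPos j (sh n ω)) (walkPos n ω)⁻¹
      rw [mul_one, mul_inv_cancel, ← walkPos_add] at a2
      have a3 := hcmp' (walkPos (n + j) ω) 1 (walkPos n ω)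
      have a4 := gromov_add Nd.m 1 (walkPos n ω) (walkPos (n + j) ω)
      rw [gromov_comm Nd.m 1, gromov_comm Nd.m (walkPos n ω)] at a4
      rw [abs_le] at hm1
      have a5 : K' * gromov g (walkPos n ω) (walkPos (n + j) ω) 1 ≤ K' * r1 := by
        apply mul_le_mul_of_nonneg_left _ (by linarith)
        linarith
      have a6 : K' * r1 + K' + δ ≤ r := le_max_right _ _
      linarith
    intro b' hb'
    apply hball
    rw [mem_ball]
    have b1 := Shm_sub Nd hgp hvis hb'
    have b2 := gp_V2 Nd hgp hvis (r := d 1 (walkPos n ω) - r - 3 * δ) b1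
      (show _ ≤ gp (Zinf ω) (walkPos n ω) by linarith)
    have b3 := hk n hn
    have b4 := hRs (ε * (d 1 (walkPos n ω) - r - 3 * δ - 2 * δ)) (by
      have : R / ε ≤ d 1 (walkPos n ω) - r - 3 * δ - 2 * δ := by linarith
      rw [div_le_iff₀ hε] at this
      linarith)
    rw [neg_mul] at b2
    linarith
  have hcon : P (Zinf ⁻¹' N) ≤ ENNReal.ofReal (3 * e) := by
    have h1 : P (Zinf ⁻¹' N) ≤ P (⋃ k, ⋂ n, ⋂ (_ : k ≤ n), F n) := by
      refine measure_mono_ae ?_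
      filter_upwards [hev] with ω hω hN'
      obtain ⟨k, hk⟩ := hω hN'
      exact mem_iUnion.2 ⟨k, by simpa using hk⟩
    refine h1.trans ?_
    have hmono : Monotone fun k => ⋂ n, ⋂ (_ : k ≤ n), F n := by
      intro k k' hkk ω hω
      simp only [mem_iInter] at hω ⊢
      exact fun n hn => hω n (hkk.trans hn)
    rw [hmono.measure_iUnion]
    refine iSup_le fun k => (measure_mono ?_).trans (hFl k)
    intro ω hω
    simp only [mem_iInter] at hω
    exact hω k le_rfl
  have h2 := ENNReal.toReal_mono ENNReal.ofReal_ne_top hcon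
  rw [ENNReal.toReal_ofReal (by positivity)] at h2
  linarith

theorem rho_ac (H : WG μ P g) (Nd : Nice S d δ A) (hgp : GP bd δ gp)
    (hvis : IsVisualMetric d bd ε C)
    (hsmul : ∀ γ : G, Measurable (bd.smul γ)) (hv : 0 < v)
    (hqc : IsQuasiconformalMeasure bd ρ v)
    {Zinf : (ℕ → G) → B} (hZ : Measurable Zinf)
    (hconv : ∀ᵐ ω ∂P, bd.conv (fun n => walkPos n ω) (Zinf ω)) (hac : P.map Zinf ≪ ρ) :
    ρ ≪ P.map Zinf := by
  have := H.hP.1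
  have hδ := Nd.hδ
  obtain ⟨hε, hC, -⟩ := id hvis
  refine Measure.AbsolutelyContinuous.mk fun N hN hN0 => ?_
  rw [Measure.map_apply hZ hN] at hN0
  by_contra hne
  have hq : ∀ x, P (Zinf ⁻¹' (bd.smul x ⁻¹' N)) = 0 := by
    intro x
    obtain ⟨n, hn⟩ : ∃ n, P {ω | walkPos n ω = x} ≠ 0 := by
      by_contra hall
      push Not at hall
      have h1 := H.hF 1 x
      have h2 : P {ω : ℕ → G | ∃ n, 1 * walkPos n ω = x} = 0 := by
        simp only [one_mul]
        rw [setOf_exists]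
        exact measure_iUnion_null hall
      rw [h2] at h1
      have : 0 < ef g 1 x := by unfold ef; simp [Real.exp_pos]
      exact this.ne h1
    have hEm : MeasurableSet (Zinf ⁻¹' (bd.smul x ⁻¹' N)) := hZ (hsmul x hN)
    have h1 := markov H.hP n x _ hEm
    have h2 : P ({ω | walkPos n ω = x} ∩ sh n ⁻¹' (Zinf ⁻¹' (bd.smul x ⁻¹' N))) = 0 := by
      refine measure_mono_null_ae ?_ hN0
      have hc2 : ∀ᵐ ω ∂P, bd.conv (fun m => walkPos m (sh n ω)) (Zinf (sh n ω)) :=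
        (mp_sh H.hP n).quasiMeasurePreserving.ae hconv
      filter_upwards [hconv, hc2] with ω h3 h4 h5
      obtain ⟨h5, h6⟩ := h5
      have h7 := bd.smul_conv x _ _ h4
      have h5 : walkPos n ω = x := h5
      have h8 : (fun m => x * walkPos m (sh n ω)) = fun m => walkPos (n + m) ω := by
        funext m
        rw [walkPos_add, h5]
      rw [h8] at h7
      have h9 : Zinf ω = bd.smul x (Zinf (sh n ω)) := by
        refine bd.conv_unique _ _ _ ?_ h7
        rw [bd.conv_iff _ _ _ h3, Filter.tendsto_atTop]
        intro R
        obtain ⟨n0, hn0⟩ := conv_pair Nd bd h3 h3 R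
        filter_upwards [eventually_ge_atTop n0] with m hm
        exact hn0 _ _ hm (by omega)
      have h6 : bd.smul x (Zinf (sh n ω)) ∈ N := h6
      rw [← h9] at h6
      exact h6
    rw [h2] at h1
    exact (mul_eq_zero.1 h1.symm).resolve_left hn
  set E : Set B := ⋃ x, bd.smul x ⁻¹' N with hE
  have hEm : MeasurableSet E := MeasurableSet.iUnion fun x => hsmul x hN
  have hEinv : ∀ x b, b ∈ E → bd.smul x b ∈ E := by
    intro x b hb
    obtain ⟨y, hy⟩ := mem_iUnion.1 hb
    refine mem_iUnion.2 ⟨y * x⁻¹, ?_⟩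
    simp only [mem_preimage] at hy ⊢
    rw [smul_mul bd]
    have := smul_smul_inv bd Nd.m x⁻¹ b
    rw [inv_inv] at this
    rwa [this]
  have hone : ∀ b, bd.smul 1 b = b := by
    intro b
    obtain ⟨u, hu⟩ := bd.conv_surj b
    have h := bd.smul_conv 1 u b hu
    simp only [one_mul] at h
    exact bd.conv_unique _ _ _ h hu
  have hEne : ρ E ≠ 0 := by
    intro h
    apply hne
    refine measure_mono_null ?_ h
    intro b hb
    exact mem_iUnion.2 ⟨1, by rw [mem_preimage, hone]; exact hb⟩
  have hPE : P (Zinf ⁻¹' E) = 0 := by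
    rw [hE, preimage_iUnion]
    exact measure_iUnion_null hq
  obtain ⟨R0, c, hc, hlow0⟩ := rho_lower (gp := gp) Nd hgp hvis hsmul hv hqc hEm hEinv hEne
  obtain ⟨r0, hr0, hray⟩ := gp_ray Nd hgp
  set r := max R0 r0 with hr
  obtain ⟨C3, hC3, hcov⟩ := covV Nd hgp hvis hsmul hv.le hqc hEm hc (hlow0 r (le_max_left _ _))
  have hDz : ρ Eᶜ = 0 := by
    have key : ∀ η : ℝ≥0∞, η ≠ 0 → ρ Eᶜ ≤ C3 * η := by
      intro η hη
      obtain ⟨U, hU, hUo, -, hUl⟩ := hEm.compl.exists_isOpen_sdiff_lt (μ := ρ) (measure_ne_top _ _) hη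
      have h1 : U \ Eᶜ = U ∩ E := by ext; simp
      rw [h1] at hUl
      refine (hcov Eᶜ U ?_).trans (mul_le_mul_right hUl.le _)
      intro b hb
      obtain ⟨s, hs, hball⟩ := Metric.isOpen_iff.1 hUo _ (hU hb)
      obtain ⟨R, hR, hRs⟩ := exists_small (C) (s / 2) hC.le (by positivity)
      obtain ⟨x, hx1, hx2⟩ := hray b (R / ε + r + 5 * δ)
      have hrr : r0 ≤ r := le_max_right _ _
      refine ⟨x, mem_Shm hvis (by linarith), ?_⟩
      intro b' hb'
      apply hball
      rw [mem_ball]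
      have b1 := Shm_sub Nd hgp hvis hb'
      have b2 := gp_V2 Nd hgp hvis (r := d 1 x - r - 3 * δ) b1 (show _ ≤ gp b x by linarith)
      have b4 := hRs (ε * (d 1 x - r - 3 * δ - 2 * δ)) (by
        have : R / ε ≤ d 1 x - r - 3 * δ - 2 * δ := by linarith
        rw [div_le_iff₀ hε] at this
        linarith)
      rw [neg_mul] at b2
      linarith
    by_contra hne2
    have h1 : ρ Eᶜ / (2 * (C3 + 1)) ≠ 0 :=
      ENNReal.div_ne_zero.2 ⟨hne2, ENNReal.mul_ne_top (by simp) (by simp [hC3])⟩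
    have h2 := key _ h1
    have h3 : C3 * (ρ Eᶜ / (2 * (C3 + 1))) ≤ ρ Eᶜ / 2 := by
      calc C3 * (ρ Eᶜ / (2 * (C3 + 1))) ≤ (C3 + 1) * (ρ Eᶜ / (2 * (C3 + 1))) := mul_le_mul_left le_self_add _
        _ = (ρ Eᶜ / 2) * ((C3 + 1) / (C3 + 1)) := by
          rw [ENNReal.div_eq_inv_mul, ENNReal.mul_inv (by simp) (by simp), ENNReal.div_eq_inv_mul,
            ENNReal.div_eq_inv_mul]
          ring
        _ ≤ (ρ Eᶜ / 2) * 1 := mul_le_mul_right ENNReal.div_self_le_one _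
        _ = _ := mul_one _
    have h4 := ENNReal.half_lt_self hne2 (measure_ne_top ρ _)
    exact absurd (h2.trans h3) (not_le.2 h4)
  have h1 := hac hDz
  rw [Measure.map_apply hZ hEm.compl, preimage_compl] at h1
  have h2 : P univ = 0 := by
    rw [← union_compl_self (Zinf ⁻¹' E)]
    exact measure_union_null hPE h1
  simp at h2

end Core

end

section
open Filter MeasureTheory Topology Metric Set
open scoped ENNReal

theorem growth_nonneg {d : G → G → ℝ} {v : ℝ} (hv : HasGrowth d v) : 0 ≤ v := by
  rw [← hv, Filter.limsup_eq]
  refine Real.sInf_nonneg fun a ha => ?_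
  obtain ⟨R, h1, h2⟩ := ((show ∀ᶠ R : ℝ in atTop,
    Real.log (Nat.card {g : G // d 1 g ≤ R}) / R ≤ a from ha).and (eventually_ge_atTop 0)).exists
  exact le_trans (div_nonneg (Real.log_natCast_nonneg _) h2) h1

theorem growth_proper {d : G → G → ℝ} {v : ℝ} (hv : HasGrowth d v) (h0 : v ≠ 0) (R : ℝ) :
    {x | d 1 x ≤ R}.Finite := by
  by_contra hR
  apply h0
  rw [← hv]
  have : (fun R : ℝ => Real.log (Nat.card {g : G // d 1 g ≤ R}) / R) =ᶠ[atTop] fun _ => (0:ℝ) := by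
    filter_upwards [eventually_ge_atTop R] with R' hR'
    have h1 : {x | d 1 x ≤ R'}.Infinite := Set.Infinite.mono (fun x hx => le_trans hx hR') hR
    have h2 : Infinite {g : G // d 1 g ≤ R'} := h1.to_subtype
    rw [Nat.card_eq_zero_of_infinite]
    simp
  rw [Filter.limsup_congr this]
  exact limsup_const 0

end

/-- **Proposition 5.1.**  If `h = ℓ v` (entropy = rate of escape × logarithmic volume
growth), then the harmonic measure `ν` and any quasiconformal measure `ρ` on `(∂X,d_ε)`
are equivalent. -/
theorem maximal_dimension_implies_equivalent
    {G : Type*} [Group G] [Countable G] [MeasurableSpace G] [MeasurableSingletonClass G]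
    (hG : NonElemHyperbolic G)
    (d : G → G → ℝ) (hd : MemD d)
    (μ : G → ℝ) (hprob : IsProbDensity μ) (hsymm : IsSymmetric μ) (hgen : GeneratesSupp μ)
    (hexp : HasExpMoment d μ)
    (hDG : MemD (greenDist μ))
    {B : Type*} [MetricSpace B] [MeasurableSpace B] [BorelSpace B]
    (bd : BoundaryData G d B) (hsmul : ∀ γ : G, Measurable (bd.smul γ))
    (ε C : ℝ) (hvis : IsVisualMetric d bd ε C)
    (P : Measure (ℕ → G)) (ν : Measure B) (hharm : IsHarmonicMeasure d bd μ P ν)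
    (ρ : Measure B) [IsFiniteMeasure ρ] (hρ : ρ ≠ 0)
    (v : ℝ) (hv : HasGrowth d v) (hqc : IsQuasiconformalMeasure bd ρ v)
    (h l : ℝ) (hent : HasEntropy μ h)
    (hdrift : ∀ᵐ ω ∂P, Tendsto (fun n : ℕ => d 1 (walkPos n ω) / n) atTop (𝓝 l))
    (heq : h = l * v) :
    ν ≪ ρ ∧ ρ ≪ ν := by
  classical
  obtain ⟨hinf, ⟨S, hS⟩, -⟩ := hG
  obtain ⟨hP, Zinf, hZ, hconv, rfl⟩ := hharm
  have H : WG μ P (greenDist μ) := mkWG hP hprob hsymm hgen hDG.1 hDG.2.1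
  have hPp := hP.1
  obtain ⟨δ', A', Ng⟩ := milnor hS hDG H.proper
  obtain ⟨hh, hav⟩ := H.entropy_eq Ng hent
  have hv0 : v ≠ 0 := by
    rintro rfl
    rw [mul_zero] at heq
    exact hh.ne' heq
  have hvp : 0 < v := lt_of_le_of_ne (growth_nonneg hv) hv0.symm
  obtain ⟨δ, A, Nd⟩ := milnor hS hd (growth_proper hv hv0)
  have h1 : MeasureTheory.Integrable (fun ω => d 1 (walkPos 1 ω)) P := by
    refine MeasureTheory.Integrable.mono'
      ((((H.int_one Ng).const_mul A').add (MeasureTheory.integrable_const A')).const_mul A)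
      (meas_fW (d 1) 1).aestronglyMeasurable (Filter.Eventually.of_forall fun ω => ?_)
    have a1 := Nd.up 1 (walkPos 1 ω)
    have a2 := Ng.low 1 (walkPos 1 ω)
    have a3 := Nd.hA
    rw [Real.norm_of_nonneg (Nd.m.nonneg _ _)]
    exact a1.trans (mul_le_mul_of_nonneg_left a2 (by linarith))
  obtain ⟨K, hK, hcmp⟩ := Nd.compare Ng
  obtain ⟨L, K', hK', hL, hLb⟩ := H.av_lin Ng Nd.m Nd.li h1 hK hcmp
  have hLl : L ≤ l := drift_le hP Nd.m Nd.li h1 hL hdrift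
  have hK0 : ∀ n, v * av P d n ≤ av P (greenDist μ) n + v * K' := by
    intro n
    have b1 := (hLb n).2
    have b2 := hav n
    have b3 : v * av P d n ≤ v * (n * L + K') := mul_le_mul_of_nonneg_left b1 hvp.le
    have b4 : v * (n * L) ≤ v * (n * l) :=
      mul_le_mul_of_nonneg_left (mul_le_mul_of_nonneg_left hLl (Nat.cast_nonneg n)) hvp.le
    rw [heq] at b2
    nlinarith
  obtain ⟨gp, hgp⟩ := exists_gp Nd bd
  have hac := nu_ac H Nd Ng hgp hvis hsmul hρ hvp hqc (int_W hP Nd.m Nd.li h1) hK0 hZ hconv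
  exact ⟨hac, rho_ac H Nd hgp hvis hsmul hvp hqc hZ hconv hac⟩

end GHM
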